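/- Let G be a 2-connected claw-free simple graph of order n with n ≥ 33. If every endvertex of each induced net of G has degree at least (n-2)/3 in G, then G is hamiltonian. -/

import Mathlib

open SimpleGraph

/-- The net: vertices 0,1,2 form a triangle, and 3,4,5 are pendant vertices
attached to 0,1,2 respectively.  Its endvertices are 3,4,5. -/
def netGraph : SimpleGraph (Fin 6) :=
  SimpleGraph.fromEdgeSet {s(0, 1), s(1, 2), s(0, 2), s(0, 3), s(1, 4), s(2, 5)}

/-- `f` is an induced copy of `G'` in `G`: an injective map which preserves and
reflects adjacency. -/
def IsInducedCopy {W V : Type*} (G' : SimpleGraph W) (G : SimpleGraph V) (f : W → V) : Prop :=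
  Function.Injective f ∧ ∀ a b : W, G'.Adj a b ↔ G.Adj (f a) (f b)

/-- A graph is claw-free if it has no induced subgraph isomorphic to `K_{1,3}`. -/
def ClawFree {V : Type*} (G : SimpleGraph V) : Prop :=
  ¬ ∃ f : (Fin 1 ⊕ Fin 3) → V, IsInducedCopy (completeBipartiteGraph (Fin 1) (Fin 3)) G f

/-- A graph is 2-connected if it has at least 3 vertices and deleting any single
vertex leaves a connected graph. -/
def TwoConnected {V : Type*} [Fintype V] (G : SimpleGraph V) : Prop :=
  3 ≤ Fintype.card V ∧ ∀ v : V, (G.induce {w | w ≠ v}).Connected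

/-!
Suppose that `G` is not hamiltonian. A variant of Ryjáček's closure adds edges to `G`, keeping it
claw-free and nonhamiltonian, until every neighbourhood is a disjoint union of cliques. The closed
graph is then the line graph of a triangle-free graph with edge set `E`, and by the
Harary–Nash-Williams correspondence no closed trail in `E` meets every edge of `E`.

By 2-connectedness there is nevertheless a *near trail*: a 2-edge-connected subset `H` of `E` with
exactly two odd vertices `A` and `B` that meets every edge of a set which no closed trail dominates.
Choose it minimal. If both ends could be shifted along short walks to a common vertex, the result
would be a dominating closed trail, so such walks from `A` and from `B` meet only when their first
edges form a 2-edge cut of `H`. Three of these walks at each end form two spiders. If the vertices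
are weighted by their multiplicity in the spiders, the ends counting twice, then every edge has
weight at most two, except for a total excess of at most 18. Hence the degree sums of the two
spiders add up to at most `2|E| + 18`.

On the other hand each spider is the preimage of an induced net of the line graph. The added edges
can spoil the net in `G`, but claw-freeness yields an induced net of `G` whose endvertices are still
controlled by the legs of the spider, so the degree condition bounds the degree sum of each spider
below by `|E| + 10`.
-/

namespace Broersma

open Finset

/-! ### Edge sets, cuts and parity -/

section EdgeSets

variable {K : Type*}

/-- The degree of the vertex `k` in the graph with edge set `H`. -/
def edgeDegree [DecidableEq K] (H : Finset (Sym2 K)) (k : K) : ℕ :=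
  #{e ∈ H | k ∈ e}

/-- The edge `e` crosses the cut `(X, Xᶜ)`. -/
def Crosses (X : Set K) (e : Sym2 K) : Prop :=
  ∃ a ∈ e, ∃ b ∈ e, a ∈ X ∧ b ∉ X

/-- The vertices of odd degree in the edge set `H` are exactly `A` and `B`; when `A = B` all degrees
are even. Edge sets with this property form a groupoid under symmetric difference. -/
def HasOddEnds [DecidableEq K] (H : Finset (Sym2 K)) (A B : K) : Prop :=
  ∀ k, (edgeDegree H k : ZMod 2) = (if k = A then 1 else 0) + (if k = B then 1 else 0)

/-- The edge set `S` connects the vertex set `U`, expressed through cuts: every cut separating two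
vertices of `U` is crossed by an edge of `S`. -/
def CutConnected (U : Set K) (S : Set (Sym2 K)) : Prop :=
  ∀ X : Set K, (U ∩ X).Nonempty → (U \ X).Nonempty → ∃ e ∈ S, Crosses X e

/-- The edges `f` and `g` form a cut of size two of the edge set `H`. -/
def IsCutPair (H : Finset (Sym2 K)) (f g : Sym2 K) : Prop :=
  f ≠ g ∧ f ∈ H ∧ g ∈ H ∧ ∃ X : Set K, ∀ e ∈ H, Crosses X e ↔ (e = f ∨ e = g)

/-- `S` is the edge set and `U` the vertex set of a closed trail, that is, of a connected graph all
of whose degrees are even. -/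
structure IsClosedTrail [DecidableEq K] (U : Set K) (S : Finset (Sym2 K)) : Prop where
  nonempty : U.Nonempty
  ends_mem : ∀ e ∈ S, ∀ k ∈ e, k ∈ U
  even : ∀ k, (edgeDegree S k : ZMod 2) = 0
  connected : CutConnected U S

/-- Some closed trail with edges in `E` meets every edge of `W`. -/
def HasDominatingClosedTrail [DecidableEq K] (E W : Finset (Sym2 K)) : Prop :=
  ∃ U S, IsClosedTrail U S ∧ S ⊆ E ∧ ∀ e ∈ W, ∃ k ∈ e, k ∈ U

variable {X Y : Set K} {e f g h : Sym2 K} {a b c A B C : K} {D H : Finset (Sym2 K)}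

lemma crosses_mk : Crosses X s(a, b) ↔ (a ∈ X ∧ b ∉ X) ∨ (b ∈ X ∧ a ∉ X) := by
  simp only [Crosses, Sym2.mem_iff, exists_eq_or_imp, exists_eq_left]
  tauto

lemma not_crosses_mk : ¬ Crosses X s(a, b) ↔ (a ∈ X ↔ b ∈ X) := by
  rw [crosses_mk]
  tauto

lemma not_crosses_empty : ¬ Crosses (∅ : Set K) e := by
  simp [Crosses]

lemma crosses_compl : Crosses Xᶜ e ↔ Crosses X e := by
  induction e with | _ a b => simp only [crosses_mk, Set.mem_compl_iff]; tauto

lemma Crosses.of_inter : Crosses (X ∩ Y) e → Crosses X e ∨ Crosses Y e := by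
  induction e with | _ a b => simp only [crosses_mk, Set.mem_inter_iff]; tauto

lemma Crosses.of_union : Crosses (X ∪ Y) e → Crosses X e ∨ Crosses Y e := by
  induction e with | _ a b => simp only [crosses_mk, Set.mem_union]; tauto

lemma crosses_symmDiff : Crosses (symmDiff X Y) e ↔ (Crosses X e ↔ ¬ Crosses Y e) := by
  induction e with | _ a b => simp only [crosses_mk, Set.mem_symmDiff]; tauto

lemma crosses_congr (h : ∀ k ∈ e, k ∈ X ↔ k ∈ Y) : Crosses X e ↔ Crosses Y e := by
  induction e with | _ a b =>
  rw [crosses_mk, crosses_mk, h a (Sym2.mem_mk_left a b), h b (Sym2.mem_mk_right a b)]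

lemma not_crosses_inter_of_end_notMem (hA : A ∉ X) (hAe : A ∈ e) (he : ¬ Crosses X e) :
    ¬ Crosses (X ∩ Y) e := by
  obtain ⟨b, rfl⟩ := Sym2.mem_iff_exists.1 hAe
  rw [not_crosses_mk] at he ⊢
  simp only [Set.mem_inter_iff]
  tauto

lemma IsCutPair.symm (h : IsCutPair H f g) : IsCutPair H g f := by
  obtain ⟨hne, hf, hg, X, hX⟩ := h
  exact ⟨hne.symm, hg, hf, X, fun e he => by rw [hX e he, or_comm]⟩

lemma IsCutPair.trans (hfg : IsCutPair H f g) (hgh : IsCutPair H g h) (hne : f ≠ h) :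
    IsCutPair H f h := by
  obtain ⟨hfg, hf, -, X, hX⟩ := hfg
  obtain ⟨hgh, -, hh, Y, hY⟩ := hgh
  refine ⟨hne, hf, hh, symmDiff X Y, fun e he => ?_⟩
  rw [crosses_symmDiff, hX e he, hY e he]
  by_cases e = f <;> by_cases e = g <;> by_cases e = h <;> simp_all

variable [DecidableEq K]

lemma edgeDegree_union (hHD : Disjoint H D) (k : K) :
    edgeDegree (H ∪ D) k = edgeDegree H k + edgeDegree D k := by
  rw [edgeDegree, filter_union, card_union_of_disjoint (disjoint_filter_filter hHD), edgeDegree,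
    edgeDegree]

lemma edgeDegree_symmDiff (H D : Finset (Sym2 K)) (k : K) :
    (edgeDegree (symmDiff H D) k : ZMod 2) = edgeDegree H k + edgeDegree D k := by
  have split (S T : Finset (Sym2 K)) :
      edgeDegree S k = edgeDegree (S \ T) k + edgeDegree (S ∩ T) k := by
    rw [← edgeDegree_union (disjoint_sdiff_inter S T), sdiff_union_inter]
  rw [symmDiff_def, sup_eq_union, edgeDegree_union disjoint_sdiff_sdiff, split H D, split D H,
    inter_comm D H]
  push_cast
  linear_combination -(edgeDegree (H ∩ D) k : ZMod 2) * CharTwo.two_eq_zero (R := ZMod 2)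

lemma HasOddEnds.symm (h : HasOddEnds H A B) : HasOddEnds H B A := fun k => by
  rw [h k, add_comm]

lemma HasOddEnds.even (h : HasOddEnds H A A) (k : K) : (edgeDegree H k : ZMod 2) = 0 := by
  rw [h k, CharTwo.add_self_eq_zero]

lemma HasOddEnds.symmDiff (hH : HasOddEnds H A B) (hD : HasOddEnds D B C) :
    HasOddEnds (symmDiff H D) A C := fun k => by
  rw [edgeDegree_symmDiff, hH k, hD k]
  linear_combination (if k = B then 1 else 0 : ZMod 2) * CharTwo.two_eq_zero (R := ZMod 2)

lemma HasOddEnds.union (hH : HasOddEnds H A B) (hD : HasOddEnds D B C)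
    (hHD : Disjoint H D) : HasOddEnds (H ∪ D) A C := by
  rw [← sup_eq_union, ← hHD.symmDiff_eq_sup]
  exact hH.symmDiff hD

lemma HasOddEnds.empty (a : K) : HasOddEnds ∅ a a := fun k => by
  rw [CharTwo.add_self_eq_zero]
  simp [edgeDegree]

lemma HasOddEnds.singleton (h : a ≠ b) : HasOddEnds {s(a, b)} a b := fun k => by
  by_cases ha : k = a <;> by_cases hb : k = b <;> simp_all [edgeDegree, filter_singleton]

lemma HasOddEnds.pair (hab : a ≠ b) (hbc : b ≠ c) (hca : c ≠ a) :
    HasOddEnds {s(a, b), s(b, c)} a c := by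
  rw [insert_eq]
  exact (singleton hab).union (singleton hbc) (by simp [hab, hca.symm])

open scoped Classical in
lemma HasOddEnds.card_crosses [Finite K] (h : HasOddEnds H A B) (hd : ∀ e ∈ H, ¬ e.IsDiag)
    (X : Set K) :
    (#{e ∈ H | Crosses X e} : ZMod 2) = (if A ∈ X then 1 else 0) + (if B ∈ X then 1 else 0) := by
  have := Fintype.ofFinite K
  have incidences (e : Sym2 K) (he : e ∈ H) :
      ∑ k with k ∈ X, (if k ∈ e then 1 else 0 : ZMod 2) = if Crosses X e then 1 else 0 := by
    induction e with | _ a b =>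
    have hab : a ≠ b := by simpa using hd _ he
    have split (k : K) : (if k ∈ s(a, b) then 1 else 0 : ZMod 2) =
        (if k = a then 1 else 0) + (if k = b then 1 else 0) := by
      simp only [Sym2.mem_iff]
      split_ifs <;> simp_all
    simp only [split, sum_add_distrib, sum_ite_eq', mem_filter, mem_univ, true_and, crosses_mk]
    by_cases a ∈ X <;> by_cases b ∈ X <;> simp_all [CharTwo.add_self_eq_zero]
  calc (#{e ∈ H | Crosses X e} : ZMod 2)
      = ∑ e ∈ H, ∑ k with k ∈ X, (if k ∈ e then 1 else 0 : ZMod 2) := by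
        rw [card_filter, Nat.cast_sum, sum_congr rfl incidences]
        push_cast
        rfl
    _ = ∑ k with k ∈ X, (edgeDegree H k : ZMod 2) := by
        rw [sum_comm]
        simp only [edgeDegree, card_filter]
        push_cast
        rfl
    _ = _ := by
        simp only [h _, sum_add_distrib, sum_ite_eq', mem_filter, mem_univ, true_and]

end EdgeSets

/-! ### Shifting the ends of a near trail -/

section EndShift

variable {K : Type*} [DecidableEq K]

/-- A 2-edge-connected edge set `H ⊆ E` on the vertex set `U` that meets every edge of `W ⊆ E` and
whose odd vertices are `A ≠ B`: it fails to be a dominating closed trail only at its two ends. -/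
structure NearTrail (E W H : Finset (Sym2 K)) (U : Set K) (A B : K) : Prop where
  dominated_subset : W ⊆ E
  subset : H ⊆ E
  loopless : ∀ e ∈ E, ¬ e.IsDiag
  ne : A ≠ B
  left_mem : A ∈ U
  right_mem : B ∈ U
  ends_mem : ∀ e ∈ H, ∀ k ∈ e, k ∈ U
  odd : HasOddEnds H A B
  twoEdgeConnected : ∀ g, CutConnected U ((H : Set (Sym2 K)) \ {g})
  dominates : ∀ e ∈ W, ∃ k ∈ e, k ∈ U

/-- A way of moving the odd vertex `A` of the near trail `H` to `t` by toggling the edges of `D`.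
All ends of these edges lie in `P`, and the at most one vertex in `Z` is dropped from the trail.
Removing `D` from `H` can destroy 2-edge-connectedness only through the edge `f` at `A`, which is
what `cut` says: inside the set `X` beyond `f`, every other removed edge has a detour. -/
structure EndShift (E W H : Finset (Sym2 K)) (U : Set K) (A B : K) (P : Set K) (t : K)
    (D : Finset (Sym2 K)) (Z : Set K) (f : Sym2 K) : Prop where
  subset : D ⊆ E
  odd : HasOddEnds D A t
  support : ∀ e ∈ D, ∀ k ∈ e, k ∈ P
  end_mem : t ∈ P
  dropped_subset : Z ⊆ P \ {t}
  dropped_subsingleton : Z.Subsingleton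
  incident : ∀ e ∈ H, ∀ k ∈ e, k ∈ Z → e ∈ D
  dominated : ∀ e ∈ W, ∀ k ∈ e, k ∈ Z → ∀ l ∈ e, l ∈ U
  first : ∀ e ∈ D, e ∈ H → f ∈ D ∧ f ∈ H
  through_first : ∀ e ∈ D, e ∈ H → A ∈ e ∨ ∃ z ∈ e, f = s(A, z)
  new_avoids : ∀ e ∈ D, e ∉ H → ∀ k ∈ e, k ∉ Z
  attached : ∀ Y : Set K, (∀ e ∈ D, e ∉ H → ¬ Crosses Y e) → ∀ k ∈ P, ∃ u ∈ U, u ∈ Y ↔ k ∈ Y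
  cut : ∃ X : Set K, A ∉ X ∧ B ∉ X ∧ (∀ e ∈ H, Crosses X e → e = f ∨ IsCutPair H f e) ∧
    ∀ Y : Set K, (∀ e ∈ D, e ∉ H → ¬ Crosses Y e) → (∀ k ∈ Z, k ∈ Y ↔ t ∈ Y) →
      ∀ e ∈ H, e ∈ D → Crosses Y e → e = f ∨ ∃ g ∈ H, g ∉ D ∧ Crosses Y g ∧ ∀ k ∈ g, k ∈ X

variable {E W H D D₁ D₂ : Finset (Sym2 K)} {U P P₁ P₂ Z Z₁ Z₂ X : Set K} {A B s t u v : K}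
  {e f f₁ f₂ g : Sym2 K}

namespace NearTrail

lemma symm (hN : NearTrail E W H U A B) : NearTrail E W H U B A where
  __ := hN
  ne := hN.ne.symm
  left_mem := hN.right_mem
  right_mem := hN.left_mem
  odd := hN.odd.symm

lemma ne_of_mem (hN : NearTrail E W H U A B) {a b : K} (h : s(a, b) ∈ E) : a ≠ b := by
  simpa using hN.loopless _ h

lemma exists_crosses_ne (hN : NearTrail E W H U A B) (hX : (U ∩ X).Nonempty)
    (hX' : (U \ X).Nonempty) (g : Sym2 K) : ∃ e ∈ H, e ≠ g ∧ Crosses X e := by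
  obtain ⟨e, ⟨heH, heg⟩, heX⟩ := hN.twoEdgeConnected g X hX hX'
  exact ⟨e, heH, heg, heX⟩

lemma crosses_iff_of_crosses_imp (hN : NearTrail E W H U A B) (hX : (U ∩ X).Nonempty)
    (hX' : (U \ X).Nonempty) (hfg : ∀ e ∈ H, Crosses X e → e = f ∨ e = g) :
    f ≠ g ∧ f ∈ H ∧ g ∈ H ∧ ∀ e ∈ H, Crosses X e ↔ e = f ∨ e = g := by
  obtain ⟨e₁, he₁, hne₁, hX₁⟩ := hN.exists_crosses_ne hX hX' g
  obtain ⟨e₂, he₂, hne₂, hX₂⟩ := hN.exists_crosses_ne hX hX' f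
  obtain rfl : e₁ = f := (hfg e₁ he₁ hX₁).resolve_right hne₁
  obtain rfl : e₂ = g := (hfg e₂ he₂ hX₂).resolve_left hne₂
  refine ⟨hne₁, he₁, he₂, fun e he => ⟨hfg e he, ?_⟩⟩
  rintro (rfl | rfl) <;> assumption

lemma isCutPair_of_crosses_imp (hN : NearTrail E W H U A B) (hX : (U ∩ X).Nonempty)
    (hX' : (U \ X).Nonempty) (hfg : ∀ e ∈ H, Crosses X e → e = f ∨ e = g) : IsCutPair H f g := by
  obtain ⟨hne, hf, hg, hiff⟩ := hN.crosses_iff_of_crosses_imp hX hX' hfg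
  exact ⟨hne, hf, hg, X, hiff⟩

end NearTrail

namespace EndShift

lemma refl (hN : NearTrail E W H U A B) : EndShift E W H U A B {A} A ∅ ∅ s(A, A) where
  subset := by simp
  odd := HasOddEnds.empty A
  support := by simp
  end_mem := rfl
  dropped_subset := by simp
  dropped_subsingleton := Set.subsingleton_empty
  incident := by simp
  dominated := by simp
  first := by simp
  through_first := by simp
  new_avoids := by simp
  attached := by
    rintro Y - k rfl
    exact ⟨k, hN.left_mem, Iff.rfl⟩
  cut := ⟨∅, by simp, by simp, fun e _ he => absurd he not_crosses_empty, by simp⟩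

lemma of_edge (hN : NearTrail E W H U A B) (hu : s(A, u) ∈ H) :
    EndShift E W H U A B {u, A} u {s(A, u)} ∅ s(A, u) where
  subset := by simpa using hN.subset hu
  odd := HasOddEnds.singleton (hN.ne_of_mem (hN.subset hu))
  support := by simp
  end_mem := by simp
  dropped_subset := by simp
  dropped_subsingleton := Set.subsingleton_empty
  incident := by simp
  dominated := by simp
  first := by simp [hu]
  through_first := by simp
  new_avoids := by simp
  attached := by
    rintro Y - k (rfl | rfl)
    exacts [⟨k, hN.ends_mem _ hu k (by simp), Iff.rfl⟩, ⟨k, hN.left_mem, Iff.rfl⟩]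
  cut := ⟨∅, by simp, by simp, fun e _ he => absurd he not_crosses_empty,
    fun Y _ _ e _ he _ => .inl (by simpa using he)⟩

lemma extend (T : EndShift E W H U A B P s D Z f) (hE : s(s, t) ∈ E) (hH : s(s, t) ∉ H)
    (ht : t ∉ P) : EndShift E W H U A B (insert t P) t (insert s(s, t) D) Z f where
  subset := insert_subset hE T.subset
  odd := by
    rw [insert_eq, union_comm]
    have hst : s ≠ t := fun h => ht (h ▸ T.end_mem)
    refine T.odd.union (HasOddEnds.singleton hst) ?_
    rw [disjoint_singleton_right]
    exact fun h => ht (T.support _ h t (by simp))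
  support := by
    simp only [mem_insert, forall_eq_or_imp, Sym2.mem_iff, forall_eq, Set.mem_insert_iff]
    exact ⟨⟨.inr T.end_mem, .inl trivial⟩, fun e he k hk => .inr (T.support e he k hk)⟩
  end_mem := Set.mem_insert t P
  dropped_subset k hk := ⟨.inr (T.dropped_subset hk).1, fun h => ht (h ▸ (T.dropped_subset hk).1)⟩
  dropped_subsingleton := T.dropped_subsingleton
  incident e he k hk hkZ := mem_insert_of_mem (T.incident e he k hk hkZ)
  dominated := T.dominated
  first e he heH := by
    have := T.first e ((mem_insert.1 he).resolve_left fun h => hH (h ▸ heH)) heH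
    exact ⟨mem_insert_of_mem this.1, this.2⟩
  through_first e he heH :=
    T.through_first e ((mem_insert.1 he).resolve_left fun h => hH (h ▸ heH)) heH
  new_avoids e he heH k hk hkZ := by
    obtain ⟨hkP, hks⟩ := T.dropped_subset hkZ
    obtain rfl | he := mem_insert.1 he
    · obtain rfl | rfl := Sym2.mem_iff.1 hk
      exacts [hks rfl, ht hkP]
    · exact T.new_avoids e he heH k hk hkZ
  attached Y hY k hk := by
    have old := T.attached Y fun e he => hY e (mem_insert_of_mem he)
    obtain rfl | hk := hk
    · rw [← not_crosses_mk.1 (hY _ (mem_insert_self _ _) hH)]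
      exact old s T.end_mem
    · exact old k hk
  cut := by
    obtain ⟨X, hA, hB, hX, detour⟩ := T.cut
    refine ⟨X, hA, hB, hX, fun Y hY hZ e he heD hc => ?_⟩
    have hst := not_crosses_mk.1 (hY _ (mem_insert_self _ _) hH)
    have hne : ∀ g ∈ H, g ≠ s(s, t) := fun g hg h => hH (h ▸ hg)
    have heD : e ∈ D := (mem_insert.1 heD).resolve_left (hne e he)
    refine (detour Y (fun e he => hY e (mem_insert_of_mem he))
      (fun k hk => (hZ k hk).trans hst.symm) e he heD hc).imp_right ?_
    rintro ⟨g, hg, hgD, h⟩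
    exact ⟨g, hg, by simp [hne g hg, hgD], h⟩

lemma notMem_dropped (T₂ : EndShift E W H U B A P₂ t D₂ Z₂ f₂)
    (hP : ∀ k ∈ P₁, k ∈ P₂ → k = t) : ∀ k ∈ P₁, k ∉ Z₂ := fun k hk hkZ =>
  (T₂.dropped_subset hkZ).2 (hP k hk (T₂.dropped_subset hkZ).1)

lemma disjoint (hN : NearTrail E W H U A B) (T₁ : EndShift E W H U A B P₁ t D₁ Z₁ f₁)
    (T₂ : EndShift E W H U B A P₂ t D₂ Z₂ f₂) (hP : ∀ k ∈ P₁, k ∈ P₂ → k = t) : Disjoint D₁ D₂ := by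
  refine disjoint_left.2 fun e h₁ h₂ => hN.loopless e (T₁.subset h₁) ?_
  have eq (k : K) (hk : k ∈ e) : k = t := hP k (T₁.support e h₁ k hk) (T₂.support e h₂ k hk)
  induction e with | _ a b =>
  rw [Sym2.mk_isDiag_iff, eq a (by simp), eq b (by simp)]

lemma eq_first_of_crosses {Y : Set K} (T₁ : EndShift E W H U A B P₁ t D₁ Z₁ f₁)
    (T₂ : EndShift E W H U B A P₂ t D₂ Z₂ f₂) (hD : Disjoint D₁ D₂) (hf : ¬ IsCutPair H f₁ f₂)
    (hY : ∀ e ∈ symmDiff H (D₁ ∪ D₂), ¬ Crosses Y e) (hZ : ∀ k ∈ Z₁, k ∈ Y ↔ t ∈ Y)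
    (heH : e ∈ H) (heD : e ∈ D₁) (he : Crosses Y e) : e = f₁ := by
  obtain ⟨X, -, hBX, hX, detour⟩ := T₁.cut
  have new_not_crosses (e) (he : e ∈ D₁) (heH : e ∉ H) : ¬ Crosses Y e :=
    hY e (by simp [mem_symmDiff, he, heH])
  refine (detour Y new_not_crosses hZ e heH heD he).resolve_right ?_
  rintro ⟨g, hgH, hgD₁, hgY, hgX⟩
  have hgD₂ : g ∈ D₂ := by
    by_contra hgD₂
    exact hY g (by simp [mem_symmDiff, hgH, hgD₁, hgD₂]) hgY
  obtain hBg | ⟨z, hz, rfl⟩ := T₂.through_first g hgD₂ hgH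
  · exact hBX (hgX B hBg)
  · obtain ⟨hf₂D, hf₂H⟩ := T₂.first g hgD₂ hgH
    refine (hX _ hf₂H (crosses_mk.2 (.inr ⟨hgX z hz, hBX⟩))).elim (fun h => ?_) hf
    exact disjoint_left.1 hD (T₁.first e heD heH).1 (h ▸ hf₂D)

/-- A cut missed by the combined edge set is pulled back along the map sending the dropped vertices
to `t`; the pulled back cut is crossed by no edge of `H` other than `f₁` and `f₂`. -/
lemma cutConnected_combine (hN : NearTrail E W H U A B) (T₁ : EndShift E W H U A B P₁ t D₁ Z₁ f₁)
    (T₂ : EndShift E W H U B A P₂ t D₂ Z₂ f₂) (hD : Disjoint D₁ D₂) (hf : ¬ IsCutPair H f₁ f₂)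
    (hH' : ∀ e ∈ symmDiff H (D₁ ∪ D₂), ∀ k ∈ e, k ∉ Z₁ ∪ Z₂) :
    CutConnected ((U ∪ P₁ ∪ P₂) \ (Z₁ ∪ Z₂)) (symmDiff H (D₁ ∪ D₂) : Finset (Sym2 K)) := by
  rintro X ⟨a, ⟨haU, haZ⟩, haX⟩ ⟨b, ⟨hbU, hbZ⟩, hbX⟩
  by_contra! hX
  have htZ : t ∉ Z₁ ∪ Z₂ := by
    rintro (h | h)
    exacts [(T₁.dropped_subset h).2 rfl, (T₂.dropped_subset h).2 rfl]
  let Y : Set K := {k | (k ∈ Z₁ ∪ Z₂ ∧ t ∈ X) ∨ (k ∉ Z₁ ∪ Z₂ ∧ k ∈ X)}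
  have mem_Y {k : K} (hk : k ∉ Z₁ ∪ Z₂) : k ∈ Y ↔ k ∈ X := by
    change _ ∨ _ ↔ _
    tauto
  have mem_Y_dropped (k : K) (hk : k ∈ Z₁ ∪ Z₂) : k ∈ Y ↔ t ∈ Y := by
    rw [mem_Y htZ]
    change _ ∨ _ ↔ _
    tauto
  have hY (e) (he : e ∈ symmDiff H (D₁ ∪ D₂)) : ¬ Crosses Y e := by
    rw [crosses_congr fun k hk => mem_Y (hH' e he k hk)]
    exact hX e he
  have attached : ∀ k ∈ U ∪ P₁ ∪ P₂, k ∉ Z₁ ∪ Z₂ → ∃ u ∈ U, u ∈ Y ↔ k ∈ X := by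
    rintro k ((hk | hk) | hk) hkZ <;> rw [← mem_Y hkZ]
    · exact ⟨k, hk, Iff.rfl⟩
    · exact T₁.attached Y (fun e he heH => hY e (by simp [mem_symmDiff, he, heH])) k hk
    · exact T₂.attached Y (fun e he heH => hY e (by simp [mem_symmDiff, he, heH])) k hk
  obtain ⟨a', ha', haY⟩ := attached a haU haZ
  obtain ⟨b', hb', hbY⟩ := attached b hbU hbZ
  refine hf (hN.isCutPair_of_crosses_imp (X := Y) ⟨a', ha', haY.2 haX⟩ ⟨b', hb', mt hbY.1 hbX⟩
    fun e he heY => ?_)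
  by_cases h₁ : e ∈ D₁
  · exact .inl (T₁.eq_first_of_crosses T₂ hD hf hY
      (fun k hk => mem_Y_dropped k (.inl hk)) he h₁ heY)
  by_cases h₂ : e ∈ D₂
  · rw [union_comm] at hY
    exact .inr (T₂.eq_first_of_crosses T₁ hD.symm (mt IsCutPair.symm hf) hY
      (fun k hk => mem_Y_dropped k (.inr hk)) he h₂ heY)
  · exact absurd heY (hY e (by simp [mem_symmDiff, he, h₁, h₂]))

lemma dominates_combine (hN : NearTrail E W H U A B) (T₁ : EndShift E W H U A B P₁ t D₁ Z₁ f₁)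
    (T₂ : EndShift E W H U B A P₂ t D₂ Z₂ f₂) (hW : ∀ a ∈ Z₁, ∀ b ∈ Z₂, s(a, b) ∉ W) :
    ∀ e ∈ W, ∃ k ∈ e, k ∈ U \ (Z₁ ∪ Z₂) := by
  intro e he
  obtain ⟨k, hke, hkU⟩ := hN.dominates e he
  by_cases hkZ : k ∈ Z₁ ∪ Z₂
  swap
  · exact ⟨k, hke, hkU, hkZ⟩
  obtain ⟨l, rfl⟩ := Sym2.mem_iff_exists.1 hke
  have hkl : k ≠ l := hN.ne_of_mem (hN.dominated_subset he)
  have hlU : l ∈ U := hkZ.elim (fun h => T₁.dominated _ he k hke h l (by simp))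
    fun h => T₂.dominated _ he k hke h l (by simp)
  refine ⟨l, by simp, hlU, ?_⟩
  rintro (hl | hl) <;> obtain hk | hk := hkZ
  · exact hkl (T₁.dropped_subsingleton hk hl)
  · exact hW l hl k hk (Sym2.eq_swap ▸ he)
  · exact hW k hk l hl he
  · exact hkl (T₂.dropped_subsingleton hk hl)

theorem hasDominatingClosedTrail (hN : NearTrail E W H U A B)
    (T₁ : EndShift E W H U A B P₁ t D₁ Z₁ f₁) (T₂ : EndShift E W H U B A P₂ t D₂ Z₂ f₂)
    (hP : ∀ k ∈ P₁, k ∈ P₂ → k = t) (hf : ¬ IsCutPair H f₁ f₂)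
    (hW : ∀ a ∈ Z₁, ∀ b ∈ Z₂, s(a, b) ∉ W) : HasDominatingClosedTrail E W := by
  have hD := disjoint hN T₁ T₂ hP
  have avoids₂ := T₂.notMem_dropped hP
  have avoids₁ := T₁.notMem_dropped fun k h₂ h₁ => hP k h₁ h₂
  have hH' : ∀ e ∈ symmDiff H (D₁ ∪ D₂), ∀ k ∈ e, k ∈ (U ∪ P₁ ∪ P₂) \ (Z₁ ∪ Z₂) := by
    intro e he k hk
    simp only [mem_symmDiff, mem_union, not_or] at he
    simp only [Set.mem_sdiff, Set.mem_union, not_or]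
    obtain ⟨heH, h₁, h₂⟩ | ⟨h₁ | h₂, heH⟩ := he
    · exact ⟨.inl (.inl (hN.ends_mem e heH k hk)), fun h => h₁ (T₁.incident e heH k hk h),
        fun h => h₂ (T₂.incident e heH k hk h)⟩
    · have hkP := T₁.support e h₁ k hk
      exact ⟨.inl (.inr hkP), T₁.new_avoids e h₁ heH k hk, avoids₂ k hkP⟩
    · have hkP := T₂.support e h₂ k hk
      exact ⟨.inr hkP, avoids₁ k hkP, T₂.new_avoids e h₂ heH k hk⟩
  refine ⟨(U ∪ P₁ ∪ P₂) \ (Z₁ ∪ Z₂), symmDiff H (D₁ ∪ D₂), ⟨?_, hH', ?_, ?_⟩, ?_, fun e he => ?_⟩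
  · exact ⟨t, .inr T₂.end_mem, fun h => h.elim (avoids₁ t T₂.end_mem) (avoids₂ t T₁.end_mem)⟩
  · exact (hN.odd.symm.symmDiff (T₁.odd.union T₂.odd.symm hD)).even
  · exact cutConnected_combine hN T₁ T₂ hD hf fun e he k hk => (hH' e he k hk).2
  · intro e he
    simp only [mem_symmDiff, mem_union] at he
    obtain ⟨heH, -⟩ | ⟨h₁ | h₂, -⟩ := he
    exacts [hN.subset heH, T₁.subset h₁, T₂.subset h₂]
  · obtain ⟨k, hke, hkU, hkZ⟩ := dominates_combine hN T₁ T₂ hW e he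
    exact ⟨k, hke, .inl (.inl hkU), hkZ⟩

end EndShift

end EndShift

/-! ### Cut pairs of minimal near trails -/

section CutPairs

variable {K : Type*} [DecidableEq K]

/-- A near trail of minimum size for an edge set `W` that is minimal among those which no closed
trail dominates. -/
structure IsMinimalNearTrail (E W H : Finset (Sym2 K)) (U : Set K) (A B : K) : Prop
    extends NearTrail E W H U A B where
  not_closed : ¬ HasDominatingClosedTrail E W
  triangleFree : ∀ a b c, s(a, b) ∈ E → s(b, c) ∈ E → s(a, c) ∉ E
  minimal : ∀ V ⊂ W, HasDominatingClosedTrail E V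
  card_le : ∀ H' U' A' B', NearTrail E W H' U' A' B' → #H ≤ #H'

variable {E W H : Finset (Sym2 K)} {U X Y : Set K} {A B u : K} {e f g h : Sym2 K}

lemma IsMinimalNearTrail.symm (hM : IsMinimalNearTrail E W H U A B) :
    IsMinimalNearTrail E W H U B A where
  __ := hM.toNearTrail.symm
  __ := hM

lemma NearTrail.not_isCutPair_loop (hN : NearTrail E W H U A B) :
    ¬ IsCutPair H s(A, A) f := fun h => hN.loopless _ (hN.subset h.2.1) rfl

lemma IsMinimalNearTrail.ends_not_adj (hM : IsMinimalNearTrail E W H U A B) : s(A, B) ∉ E := by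
  intro hE
  have hN := hM.toNearTrail
  by_cases hH : s(A, B) ∈ H
  · exact hM.not_closed <| EndShift.hasDominatingClosedTrail hN (.refl hN)
      (.of_edge hN.symm (Sym2.eq_swap ▸ hH)) (by simp) hN.not_isCutPair_loop (by simp)
  · exact hM.not_closed <| EndShift.hasDominatingClosedTrail hN
      ((EndShift.refl hN).extend hE hH (by simpa using hN.ne.symm)) (.refl hN.symm)
      (by simp) hN.not_isCutPair_loop (by simp)

/-- Parity puts both ends of a near trail on the same side of a cut of size two. -/
lemma NearTrail.exists_avoiding_of_isCutPair [Finite K] (hN : NearTrail E W H U A B)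
    (hfg : IsCutPair H f g) :
    ∃ X : Set K, A ∉ X ∧ B ∉ X ∧ ∀ e ∈ H, Crosses X e ↔ (e = f ∨ e = g) := by
  classical
  obtain ⟨hne, hf, hg, X, hX⟩ := hfg
  have crossing : {e ∈ H | Crosses X e} = {f, g} := by
    ext e
    simp only [mem_filter, mem_insert, mem_singleton]
    refine ⟨fun h => (hX e h.1).1 h.2, ?_⟩
    rintro (rfl | rfl)
    exacts [⟨hf, (hX _ hf).2 (.inl rfl)⟩, ⟨hg, (hX _ hg).2 (.inr rfl)⟩]
  have hAB : A ∈ X ↔ B ∈ X := by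
    have := hN.odd.card_crosses (fun e he => hN.loopless e (hN.subset he)) X
    rw [crossing, card_pair hne] at this
    by_cases A ∈ X <;> by_cases B ∈ X <;> simp_all [CharTwo.two_eq_zero]
  by_cases hA : A ∈ X
  · exact ⟨Xᶜ, by simpa using hA, by simpa using hAB.1 hA,
      fun e he => crosses_compl.trans (hX e he)⟩
  · exact ⟨X, hA, mt hAB.2 hA, hX⟩

lemma NearTrail.erase (hN : NearTrail E W H U A B) (hu : s(A, u) ∈ H) (huB : u ≠ B)
    (hcut : ∀ g, ¬ IsCutPair H s(A, u) g) : NearTrail E W (H.erase s(A, u)) U u B where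
  __ := hN
  subset := (erase_subset _ _).trans hN.subset
  ne := huB
  left_mem := hN.ends_mem _ hu u (by simp)
  ends_mem e he := hN.ends_mem e (mem_of_mem_erase he)
  odd := by
    have : H.erase s(A, u) = symmDiff {s(A, u)} H := by
      ext e
      simp only [mem_erase, mem_symmDiff, mem_singleton]
      by_cases he : e = s(A, u)
      · simp [he, hu]
      · simp [he]
    rw [this]
    exact (HasOddEnds.singleton (hN.ne_of_mem (hN.subset hu))).symm.symmDiff hN.odd
  twoEdgeConnected g X hX hX' := by
    by_contra! h
    refine hcut g (hN.isCutPair_of_crosses_imp hX hX' fun e he heX => ?_)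
    by_contra! hne
    exact h e ⟨by simp [he, hne.1], hne.2⟩ heX

lemma IsMinimalNearTrail.exists_isCutPair [Finite K] (hM : IsMinimalNearTrail E W H U A B)
    (hu : s(A, u) ∈ H) :
    ∃ (X : Set K) (g : Sym2 K), A ∉ X ∧ B ∉ X ∧ u ∈ X ∧ g ≠ s(A, u) ∧ g ∈ H ∧
      ∀ e ∈ H, Crosses X e ↔ (e = s(A, u) ∨ e = g) := by
  have huB : u ≠ B := by
    rintro rfl
    exact hM.ends_not_adj (hM.subset hu)
  obtain ⟨g, hg⟩ : ∃ g, IsCutPair H s(A, u) g := by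
    by_contra! h
    have := hM.card_le _ _ _ _ (hM.toNearTrail.erase hu huB h)
    exact (card_erase_lt_of_mem hu).not_ge this
  obtain ⟨X, hA, hB, hX⟩ := hM.exists_avoiding_of_isCutPair hg
  have huX : Crosses X s(A, u) := (hX _ hu).2 (.inl rfl)
  rw [crosses_mk] at huX
  exact ⟨X, g, hA, hB, by tauto, hg.1.symm, hg.2.2.1, hX⟩

lemma NearTrail.isCutPair_unique [Finite K] (hN : NearTrail E W H U A B) (hf : A ∈ f ∨ B ∈ f)
    (hg : A ∈ g ∨ B ∈ g) (hh : A ∈ h ∨ B ∈ h) (hfg : IsCutPair H f g) (hfh : IsCutPair H f h) :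
    g = h := by
  by_contra hne
  obtain ⟨X, hAX, hBX, hX⟩ := hN.exists_avoiding_of_isCutPair hfg
  obtain ⟨Y, hAY, hBY, hY⟩ := hN.exists_avoiding_of_isCutPair hfh
  have hgY : ¬ Crosses Y g := fun h => ((hY g hfg.2.2.1).1 h).elim hfg.1.symm hne
  have hhX : ¬ Crosses X h := fun h => ((hX _ hfh.2.2.1).1 h).elim hfh.1.symm (Ne.symm hne)
  obtain ⟨p, hpf, hpXY⟩ : ∃ p ∈ f, p ∈ X ∩ Y := by
    have hfX : Crosses X f := (hX f hfg.2.1).2 (.inl rfl)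
    have hfY : Crosses Y f := (hY f hfg.2.1).2 (.inl rfl)
    obtain hf | hf := hf <;> obtain ⟨p, rfl⟩ := Sym2.mem_iff_exists.1 hf <;>
      rw [crosses_mk] at hfX hfY <;> exact ⟨p, by simp, by tauto, by tauto⟩
  obtain ⟨e, he, hef, heXY⟩ := hN.exists_crosses_ne (X := X ∩ Y)
    ⟨p, hN.ends_mem f hfg.2.1 p hpf, hpXY⟩ ⟨A, hN.left_mem, fun h => hAX h.1⟩ f
  obtain heX | heY := heXY.of_inter
  · obtain rfl : e = g := ((hX e he).1 heX).resolve_left hef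
    rw [Set.inter_comm] at heXY
    exact hg.elim (fun h => not_crosses_inter_of_end_notMem hAY h hgY heXY)
      fun h => not_crosses_inter_of_end_notMem hBY h hgY heXY
  · obtain rfl : e = h := ((hY e he).1 heY).resolve_left hef
    exact hh.elim (fun h => not_crosses_inter_of_end_notMem hAX h hhX heXY)
      fun h => not_crosses_inter_of_end_notMem hBX h hhX heXY

end CutPairs

/-! ### Legs -/

section Legs

variable {K : Type*}

/-- The walk `A u v` lies on the near trail and its vertex `u` has degree two and can be dropped. -/
def IsThroughLeg (W H : Finset (Sym2 K)) (U : Set K) (A u v : K) : Prop :=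
  s(u, v) ∈ H ∧ (∀ e ∈ W, u ∈ e → ∀ k ∈ e, k ∈ U) ∧ ∀ e ∈ H, u ∈ e → e = s(A, u) ∨ e = s(u, v)

/-- The walk `A u v` leaves the vertex set `U` of the near trail along an edge to be dominated. -/
def IsHangingLeg (W : Finset (Sym2 K)) (U : Set K) (u v : K) : Prop :=
  s(u, v) ∈ W ∧ v ∉ U

/-- The walk `A u v` lies on the near trail, its first edge belongs to a cut pair, and its second
edge is not a bridge of the side of this cut pair beyond the first edge. -/
def IsInnerLeg (H : Finset (Sym2 K)) (A B u v : K) : Prop :=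
  s(u, v) ∈ H ∧ ∃ (X : Set K) (g : Sym2 K), A ∉ X ∧ B ∉ X ∧ u ∈ X ∧ v ∈ X ∧ g ≠ s(A, u) ∧ g ∈ H ∧
    (∀ e ∈ H, Crosses X e ↔ e = s(A, u) ∨ e = g) ∧
    ∀ Y : Set K, Crosses Y s(u, v) → ∃ e ∈ H, e ≠ s(u, v) ∧ Crosses Y e ∧ ∀ k ∈ e, k ∈ X

/-- A walk `A u v` along which the end `A` of a near trail can be shifted to `v`. -/
structure Leg (E W H : Finset (Sym2 K)) (U : Set K) (A u v B : K) : Prop where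
  first_mem : s(A, u) ∈ H
  second_mem : s(u, v) ∈ E
  ne : v ≠ A
  kind : IsThroughLeg W H U A u v ∨ IsHangingLeg W U u v ∨ IsInnerLeg H A B u v

variable {E W H : Finset (Sym2 K)} {U X Z V₁ V₂ : Set K} {A B a b p s t u v w y z : K} {g : Sym2 K}

lemma Leg.mem_of_mem (h : Leg E W H U A u v B) (hv : v ∈ U) : s(u, v) ∈ H := by
  obtain h | h | h := h.kind
  exacts [h.1, absurd hv h.2, h.1]

lemma Leg.mem_side_iff (h : Leg E W H U A u v B) (hp : p = u ∨ p = v) (hpU : p ∈ U)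
    (huv : s(u, v) ∈ H → ¬ Crosses X s(u, v)) : p ∈ X ↔ u ∈ X := by
  obtain rfl | rfl := hp
  · rfl
  · exact (not_crosses_mk.1 (huv (h.mem_of_mem hpU))).symm

variable [DecidableEq K]

lemma EndShift.of_path (hN : NearTrail E W H U A B) (hu : s(A, u) ∈ H) (huv : s(u, v) ∈ H)
    (hvA : v ≠ A) (hZ : Z ⊆ {u}) (incident : u ∈ Z → ∀ e ∈ H, u ∈ e → e = s(A, u) ∨ e = s(u, v))
    (dominated : u ∈ Z → ∀ e ∈ W, u ∈ e → ∀ k ∈ e, k ∈ U)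
    (cut : ∃ X : Set K, A ∉ X ∧ B ∉ X ∧
      (∀ e ∈ H, Crosses X e → e = s(A, u) ∨ IsCutPair H s(A, u) e) ∧
      ∀ Y : Set K, (u ∈ Z → (u ∈ Y ↔ v ∈ Y)) → Crosses Y s(u, v) →
        ∃ g ∈ H, g ≠ s(u, v) ∧ Crosses Y g ∧ ∀ k ∈ g, k ∈ X) :
    EndShift E W H U A B {v, u, A} v {s(A, u), s(u, v)} Z s(A, u) where
  subset := by simp [insert_subset_iff, hN.subset hu, hN.subset huv]
  odd := HasOddEnds.pair (hN.ne_of_mem (hN.subset hu)) (hN.ne_of_mem (hN.subset huv)) hvA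
  support := by simp
  end_mem := by simp
  dropped_subset k hk := by
    obtain rfl := hZ hk
    simpa using hN.ne_of_mem (hN.subset huv)
  dropped_subsingleton := Set.subsingleton_singleton.anti hZ
  incident e he k hk hkZ := by
    obtain rfl := hZ hkZ
    simpa using incident hkZ e he hk
  dominated e he k hk hkZ := by
    obtain rfl := hZ hkZ
    exact dominated hkZ e he hk
  first := by simp [hu]
  through_first := by simp
  new_avoids := by simp [hu, huv]
  attached := by
    rintro Y - k (rfl | rfl | rfl)
    exacts [⟨k, hN.ends_mem _ huv k (by simp), Iff.rfl⟩, ⟨k, hN.ends_mem _ hu k (by simp), Iff.rfl⟩,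
      ⟨k, hN.left_mem, Iff.rfl⟩]
  cut := by
    obtain ⟨X, hA, hB, hX, detour⟩ := cut
    refine ⟨X, hA, hB, hX, fun Y _ hY e he heD hc => ?_⟩
    obtain rfl | rfl : e = s(A, u) ∨ e = s(u, v) := by simpa using heD
    · exact .inl rfl
    obtain ⟨g, hg, hgne, hgY, hgX⟩ := detour Y (fun h => hY u h) hc
    have hgA : g ≠ s(A, u) := by
      rintro rfl
      exact hA (hgX A (by simp))
    exact .inr ⟨g, hg, by simp [hgne, hgA], hgY, hgX⟩

namespace Leg

lemma exists_endShift (h : Leg E W H U A u v B) (hN : NearTrail E W H U A B) :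
    ∃ D, ∃ Z ⊆ {u}, EndShift E W H U A B {v, u, A} v D Z s(A, u) := by
  obtain ⟨hu, hE, hvA, kind⟩ := h
  obtain ⟨huv, hW, hdeg⟩ | ⟨-, hvU⟩ | ⟨huv, X, g, hAX, hBX, -, -, hg, hgH, hX, hY⟩ := kind
  · refine ⟨_, {u}, subset_rfl, .of_path hN hu huv hvA subset_rfl (fun _ => hdeg) (fun _ => hW)
      ⟨∅, by simp, by simp, fun e _ he => absurd he not_crosses_empty, fun Y hY hc => ?_⟩⟩
    exact absurd hc (not_crosses_mk.2 (hY rfl))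
  · have huU := hN.ends_mem _ hu u (by simp)
    exact ⟨_, ∅, Set.empty_subset _, (EndShift.of_edge hN hu).extend hE
      (fun h => hvU (hN.ends_mem _ h v (by simp)))
      (by rintro (rfl | rfl); exacts [hvU huU, hvA rfl])⟩
  · refine ⟨_, ∅, Set.empty_subset _,
      .of_path hN hu huv hvA (Set.empty_subset _) (by simp) (by simp)
        ⟨X, hAX, hBX, fun e he hc => ?_, fun Y _ => hY Y⟩⟩
    refine ((hX e he).1 hc).imp_right ?_
    rintro rfl
    exact ⟨hg.symm, hu, hgH, X, hX⟩

lemma first_ne_left (h : Leg E W H U A u v B) (hN : NearTrail E W H U A B) : u ≠ A :=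
  (hN.ne_of_mem (hN.subset h.first_mem)).symm

lemma first_ne_second (h : Leg E W H U A u v B) (hN : NearTrail E W H U A B) : u ≠ v :=
  hN.ne_of_mem h.second_mem

lemma first_ne_right (h : Leg E W H U A u v B) (hM : IsMinimalNearTrail E W H U A B) : u ≠ B := by
  rintro rfl
  exact hM.ends_not_adj (hM.subset h.first_mem)

lemma second_ne_right (h : Leg E W H U A u v B) (hM : IsMinimalNearTrail E W H U A B) :
    v ≠ B := by
  rintro rfl
  obtain ⟨D, Z, -, T⟩ := h.exists_endShift hM.toNearTrail
  refine hM.not_closed (EndShift.hasDominatingClosedTrail hM.toNearTrail T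
    (.refl hM.symm.toNearTrail) (by simp) (fun h => ?_) (by simp))
  exact hM.symm.toNearTrail.not_isCutPair_loop h.symm

end Leg

lemma IsMinimalNearTrail.first_ne_right (hM : IsMinimalNearTrail E W H U A B) (hu : s(A, u) ∈ H) :
    u ≠ B := by
  rintro rfl
  exact hM.ends_not_adj (hM.subset hu)

/-- The edge `uv` lies inside the side `X` of the cut `{Au, g}` but is a bridge there: then `uv` and
`g` also form a cut. -/
lemma NearTrail.exists_subset_of_bridge (hN : NearTrail E W H U A B) (hA : A ∉ X)
    (hX : ∀ e ∈ H, Crosses X e ↔ e = s(A, u) ∨ e = g) (huv : s(u, v) ∈ H) (hv : v ∈ X)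
    (hbridge : ∃ Y : Set K, Crosses Y s(u, v) ∧
      ∀ e ∈ H, e ≠ s(u, v) → Crosses Y e → ∃ k ∈ e, k ∉ X) :
    ∃ V ⊆ X, u ∉ V ∧ v ∈ V ∧ ∀ e ∈ H, Crosses V e ↔ e = s(u, v) ∨ e = g := by
  obtain ⟨Y, huY, hvY, hY⟩ : ∃ Y : Set K, u ∉ Y ∧ v ∈ Y ∧
      ∀ e ∈ H, e ≠ s(u, v) → Crosses Y e → ∃ k ∈ e, k ∉ X := by
    obtain ⟨Y, hcross, hY⟩ := hbridge
    obtain ⟨hu, hv⟩ | ⟨hv, hu⟩ := crosses_mk.1 hcross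
    · exact ⟨Yᶜ, by simpa using hu, by simpa using hv,
        fun e he hne hc => hY e he hne (crosses_compl.1 hc)⟩
    · exact ⟨Y, hu, hv, hY⟩
  refine ⟨Y ∩ X, Set.inter_subset_right, fun h => huY h.1, ⟨hvY, hv⟩, ?_⟩
  refine (hN.crosses_iff_of_crosses_imp (X := Y ∩ X) ⟨v, hN.ends_mem _ huv v (by simp), hvY, hv⟩
    ⟨A, hN.left_mem, fun h => hA h.2⟩ fun e he hc => ?_).2.2.2
  by_cases hcX : Crosses X e
  · refine .inr (((hX e he).1 hcX).resolve_left ?_)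
    rintro rfl
    obtain h | h := crosses_mk.1 hc
    exacts [hA h.1.2, huY h.1.1]
  · by_contra! hne
    obtain ⟨k, hk, hkX⟩ := hY e he hne.1 (hc.of_inter.resolve_right hcX)
    obtain ⟨p, hp, -, -, hpX, -⟩ := hc
    exact hcX ⟨p, hp, k, hk, hpX.2, hkX⟩

/-- Two bridges `uv`, `uw` as in `exists_subset_of_bridge` would make `g` a bridge of `H`. -/
lemma NearTrail.not_two_bridges (hN : NearTrail E W H U A B) (hA : A ∉ X) (hg : g ∈ H)
    (hgX : Crosses X g) (hne : v ≠ w) (huv : s(u, v) ∈ H) (huw : s(u, w) ∈ H)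
    (hvg : s(u, v) ≠ g) (hwg : s(u, w) ≠ g)
    (h₁ : V₁ ⊆ X) (hu₁ : u ∉ V₁) (hV₁ : ∀ e ∈ H, Crosses V₁ e ↔ e = s(u, v) ∨ e = g)
    (h₂ : V₂ ⊆ X) (hu₂ : u ∉ V₂) (hV₂ : ∀ e ∈ H, Crosses V₂ e ↔ e = s(u, w) ∨ e = g) : False := by
  have hv₂ : v ∉ V₂ := fun h => by
    have := (hV₂ _ huv).1 (crosses_mk.2 (.inr ⟨h, hu₂⟩))
    simp_all
  have hw₁ : w ∉ V₁ := fun h => by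
    have := (hV₁ _ huw).1 (crosses_mk.2 (.inr ⟨h, hu₁⟩))
    grind
  obtain ⟨p, hp, q, hq, hpX, hqX⟩ := hgX
  have inner_end {V : Set K} (hV : V ⊆ X) (hgV : Crosses V g) : p ∈ V := by
    obtain ⟨a, ha, -, -, haV, -⟩ := hgV
    have hpq : p ≠ q := fun h => hqX (h ▸ hpX)
    obtain rfl := (Sym2.mem_and_mem_iff hpq).1 ⟨hp, hq⟩
    obtain rfl | rfl := Sym2.mem_iff.1 ha
    exacts [haV, absurd (hV haV) hqX]
  have hpV : p ∈ V₁ ∩ V₂ :=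
    ⟨inner_end h₁ ((hV₁ g hg).2 (.inr rfl)), inner_end h₂ ((hV₂ g hg).2 (.inr rfl))⟩
  obtain ⟨e, he, heg, hc⟩ := hN.exists_crosses_ne ⟨p, hN.ends_mem g hg p hp, hpV⟩
    ⟨A, hN.left_mem, fun h => hA (h₁ h.1)⟩ g
  obtain h | h := hc.of_inter
  · obtain rfl := ((hV₁ e he).1 h).resolve_right heg
    exact not_crosses_mk.2 (by simp [hu₁, hv₂]) hc
  · obtain rfl := ((hV₂ e he).1 h).resolve_right heg
    exact not_crosses_mk.2 (by simp [hu₁, hw₁]) hc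

lemma NearTrail.even_edgeDegree (hN : NearTrail E W H U A B) (hA : u ≠ A) (hB : u ≠ B) :
    Even (edgeDegree H u) := by
  have := hN.odd u
  rw [if_neg hA, if_neg hB, add_zero] at this
  exact (ZMod.natCast_eq_zero_iff_even).1 this

lemma IsMinimalNearTrail.exists_inner_leg [Finite K] (hM : IsMinimalNearTrail E W H U A B)
    (hu : s(A, u) ∈ H) (hdeg : 4 ≤ edgeDegree H u) : ∃ v, Leg E W H U A u v B := by
  obtain ⟨X, g, hAX, hBX, huX, hgne, hgH, hX⟩ := hM.exists_isCutPair hu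
  have two_others : 1 < #(({e ∈ H | u ∈ e}.erase s(A, u)).erase g) := by
    have := card_erase_add_one (s := {e ∈ H | u ∈ e}) (a := s(A, u)) (by simp [hu])
    have := pred_card_le_card_erase (s := {e ∈ H | u ∈ e}.erase s(A, u)) (a := g)
    simp only [edgeDegree] at hdeg
    omega
  obtain ⟨e₁, he₁, e₂, he₂, hne⟩ := one_lt_card.1 two_others
  simp only [mem_erase, mem_filter] at he₁ he₂
  obtain ⟨hvg, hvA, hv, hue₁⟩ := he₁
  obtain ⟨hwg, hwA, hw, hue₂⟩ := he₂
  obtain ⟨v, rfl⟩ := Sym2.mem_iff_exists.1 hue₁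
  obtain ⟨w, rfl⟩ := Sym2.mem_iff_exists.1 hue₂
  by_contra! hno
  have bridge (v : K) (hvg : s(u, v) ≠ g) (hvA : s(u, v) ≠ s(A, u)) (hv : s(u, v) ∈ H) :
      ∃ V ⊆ X, u ∉ V ∧ v ∈ V ∧ ∀ e ∈ H, Crosses V e ↔ e = s(u, v) ∨ e = g := by
    have hvX : v ∈ X := by
      have : ¬ Crosses X s(u, v) := by simp [hX _ hv, hvg, hvA]
      exact (not_crosses_mk.1 this).1 huX
    refine hM.exists_subset_of_bridge hAX hX hv hvX ?_
    by_contra! detour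
    refine hno v ⟨hu, hM.subset hv, ?_, .inr (.inr
      ⟨hv, X, g, hAX, hBX, huX, hvX, hgne, hgH, hX, detour⟩)⟩
    rintro rfl
    exact hvA Sym2.eq_swap
  obtain ⟨V₁, h₁, hu₁, -, hV₁⟩ := bridge v hvg hvA hv
  obtain ⟨V₂, h₂, hu₂, -, hV₂⟩ := bridge w hwg hwA hw
  exact hM.not_two_bridges hAX hgH ((hX g hgH).2 (.inr rfl)) (by rintro rfl; exact hne rfl) hv hw
    hvg hwg h₁ hu₁ hV₁ h₂ hu₂ hV₂

lemma IsMinimalNearTrail.exists_leg [Finite K] (hM : IsMinimalNearTrail E W H U A B)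
    (hu : s(A, u) ∈ H) : ∃ v, Leg E W H U A u v B := by
  have huA : u ≠ A := (hM.ne_of_mem (hM.subset hu)).symm
  by_cases hW : ∀ e ∈ W, u ∈ e → ∀ k ∈ e, k ∈ U
  swap
  · push Not at hW
    obtain ⟨e, heW, hue, c, hc, hcU⟩ := hW
    have huc : u ≠ c := by
      rintro rfl
      exact hcU (hM.ends_mem _ hu _ (by simp))
    obtain rfl := (Sym2.mem_and_mem_iff huc).1 ⟨hue, hc⟩
    exact ⟨c, hu, hM.dominated_subset heW, fun h => hcU (h ▸ hM.left_mem), .inr (.inl ⟨heW, hcU⟩)⟩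
  have hmem : s(A, u) ∈ {e ∈ H | u ∈ e} := by simp [hu]
  obtain hdeg | hdeg : edgeDegree H u = 2 ∨ 4 ≤ edgeDegree H u := by
    have pos : 0 < edgeDegree H u := card_pos.2 ⟨_, hmem⟩
    obtain ⟨r, hr⟩ := hM.even_edgeDegree huA (hM.first_ne_right hu)
    omega
  swap
  · exact hM.exists_inner_leg hu hdeg
  obtain ⟨e, he⟩ : ∃ e, {e ∈ H | u ∈ e}.erase s(A, u) = {e} := by
    rw [← card_eq_one, card_erase_of_mem hmem]
    exact congrArg (· - 1) hdeg
  have mem_iff (e') : e' ≠ s(A, u) ∧ e' ∈ H ∧ u ∈ e' ↔ e' = e := by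
    simpa using Finset.ext_iff.1 he e'
  obtain ⟨hne, heH, hue⟩ := (mem_iff e).2 rfl
  obtain ⟨v, rfl⟩ := Sym2.mem_iff_exists.1 hue
  refine ⟨v, hu, hM.subset heH, ?_, .inl ⟨heH, hW, fun e' he' hue' => ?_⟩⟩
  · rintro rfl
    exact hne Sym2.eq_swap
  · by_contra! h
    exact h.2 ((mem_iff e').1 ⟨h.1, he', hue'⟩)

namespace IsMinimalNearTrail

lemma isCutPair_of_foot_mem (hM : IsMinimalNearTrail E W H U A B) (hu : s(A, u) ∈ H)
    (hz : Leg E W H U B z y A) (h : u = z ∨ u = y) : IsCutPair H s(A, u) s(B, z) := by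
  by_contra hcut
  have hN := hM.toNearTrail
  have hAB := hM.ne
  have hzy := hz.first_ne_second hN.symm
  have hzA := hz.first_ne_right hM.symm
  have hyA := hz.second_ne_right hM.symm
  obtain rfl | rfl := h
  · exact hM.not_closed (EndShift.hasDominatingClosedTrail hN (.of_edge hN hu)
      (.of_edge hN.symm hz.first_mem) (by simp; grind) hcut (by simp))
  · obtain ⟨D, Z, -, T⟩ := hz.exists_endShift hN.symm
    exact hM.not_closed (EndShift.hasDominatingClosedTrail hN (.of_edge hN hu) T
      (by simp; grind) hcut (by simp))

lemma isCutPair_of_legs_meet (hM : IsMinimalNearTrail E W H U A B) (hu : Leg E W H U A u v B)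
    (hz : Leg E W H U B z y A) (hpu : p = u ∨ p = v) (hpz : p = z ∨ p = y) :
    IsCutPair H s(A, u) s(B, z) := by
  by_cases huz : u = z ∨ u = y
  · exact hM.isCutPair_of_foot_mem hu.first_mem hz huz
  by_cases hzu : z = u ∨ z = v
  · exact (hM.symm.isCutPair_of_foot_mem hz.first_mem hu hzu).symm
  obtain rfl : v = y := by grind
  by_contra hcut
  have hN := hM.toNearTrail
  obtain ⟨D₁, Z₁, hZ₁, T₁⟩ := hu.exists_endShift hN
  obtain ⟨D₂, Z₂, hZ₂, T₂⟩ := hz.exists_endShift hN.symm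
  refine hM.not_closed (EndShift.hasDominatingClosedTrail hN T₁ T₂ ?_ hcut fun a ha b hb hW => ?_)
  · have hAB := hM.ne
    have huB := hu.first_ne_right hM
    have hzA := hz.first_ne_right hM.symm
    simp
    grind
  · obtain rfl := hZ₁ ha
    obtain rfl := hZ₂ hb
    exact hM.triangleFree a b v (hM.dominated_subset hW) hz.second_mem hu.second_mem

lemma not_adj_of_foot (hM : IsMinimalNearTrail E W H U A B) (hu : s(A, u) ∈ H)
    (hz : Leg E W H U B z y A) (hcut : ¬ IsCutPair H s(A, u) s(B, z)) (ht : t = z ∨ t = y)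
    (hH : s(u, t) ∉ H) : s(u, t) ∉ E := by
  intro hE
  have hN := hM.toNearTrail
  have hAB := hM.ne
  have hmeet := mt (hM.isCutPair_of_foot_mem hu hz) hcut
  have hzA := hz.first_ne_right hM.symm
  have hyA := hz.second_ne_right hM.symm
  have huB := hM.first_ne_right hu
  have hzy := hz.first_ne_second hN.symm
  have T₁ := (EndShift.of_edge hN hu).extend hE hH (by simp; grind)
  obtain rfl | rfl := ht
  · exact hM.not_closed (EndShift.hasDominatingClosedTrail hN T₁
      (.of_edge hN.symm hz.first_mem) (by simp; grind) hcut (by simp))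
  · obtain ⟨D, Z, -, T⟩ := hz.exists_endShift hN.symm
    exact hM.not_closed (EndShift.hasDominatingClosedTrail hN T₁ T (by simp; grind) hcut (by simp))

lemma not_adj_of_legs (hM : IsMinimalNearTrail E W H U A B) (hu : Leg E W H U A u v B)
    (hz : Leg E W H U B z y A) (hcut : ¬ IsCutPair H s(A, u) s(B, z)) (hs : s = u ∨ s = v)
    (ht : t = z ∨ t = y) (hH : s(s, t) ∉ H) : s(s, t) ∉ E := by
  intro hE
  obtain rfl | rfl := hs
  · exact hM.not_adj_of_foot hu.first_mem hz hcut ht hH hE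
  obtain rfl | rfl := ht
  · exact hM.symm.not_adj_of_foot hz.first_mem hu (mt IsCutPair.symm hcut) (.inr rfl)
      (by rwa [Sym2.eq_swap]) (by rwa [Sym2.eq_swap])
  have hN := hM.toNearTrail
  have hmeet (p : K) (hpu : p = u ∨ p = s) (hpz : p = z ∨ p = t) : False :=
    hcut (hM.isCutPair_of_legs_meet hu hz hpu hpz)
  have hAB := hM.ne
  have huB := hu.first_ne_right hM
  have hsB := hu.second_ne_right hM
  have hzA := hz.first_ne_right hM.symm
  have htA := hz.second_ne_right hM.symm
  obtain ⟨D₁, Z₁, hZ₁, T₁⟩ := hu.exists_endShift hN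
  obtain ⟨D₂, Z₂, hZ₂, T₂⟩ := hz.exists_endShift hN.symm
  refine hM.not_closed (EndShift.hasDominatingClosedTrail hN (T₁.extend hE hH (by simp; grind)) T₂
    (by simp; grind) hcut fun a ha b hb hW => ?_)
  obtain rfl := hZ₁ ha
  obtain rfl := hZ₂ hb
  by_cases hab : s(a, b) ∈ H
  · have := T₁.support _ (T₁.incident _ hab a (by simp) ha) b (by simp)
    simp at this
    grind
  · exact hM.not_adj_of_foot hu.first_mem hz hcut (.inl rfl) hab (hM.dominated_subset hW)

lemma isCutPair_of_adj_leg (hM : IsMinimalNearTrail E W H U A B) (hz : Leg E W H U B z y A)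
    (ht : t = z ∨ t = y) (hE : s(A, t) ∈ E) : s(A, t) ∈ H ∧ IsCutPair H s(A, t) s(B, z) := by
  suffices h : s(A, t) ∈ H from ⟨h, hM.isCutPair_of_foot_mem h hz ht⟩
  by_contra hH
  have hN := hM.toNearTrail
  have hAB := hM.ne
  have hzA := hz.first_ne_right hM.symm
  have hyA := hz.second_ne_right hM.symm
  have T₁ := (EndShift.refl hN).extend hE hH (by simp; grind)
  obtain rfl | rfl := ht
  · exact hM.not_closed (EndShift.hasDominatingClosedTrail hN T₁ (.of_edge hN.symm hz.first_mem)
      (by simp; grind) hN.not_isCutPair_loop (by simp))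
  · obtain ⟨D, Z, -, T⟩ := hz.exists_endShift hN.symm
    exact hM.not_closed (EndShift.hasDominatingClosedTrail hN T₁ T
      (by simp; grind) hN.not_isCutPair_loop (by simp))

end IsMinimalNearTrail

lemma IsMinimalNearTrail.not_adj_of_legs_meet [Finite K] (hM : IsMinimalNearTrail E W H U A B)
    (hu : Leg E W H U A u v B) (hz : Leg E W H U B z y A) (ha : Leg E W H U A a b B) (hau : a ≠ u)
    (hcut : ¬ IsCutPair H s(A, a) s(B, z)) (hsu : s = u ∨ s = v) (hsz : s = z ∨ s = y)
    (ht : t = a ∨ t = b) : s(s, t) ∉ E := by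
  intro hE
  have hN := hM.toNearTrail
  obtain ⟨X, hAX, -, hX⟩ :=
    hM.exists_avoiding_of_isCutPair (hM.isCutPair_of_legs_meet hu hz hsu hsz)
  have huA := hu.first_ne_left hN
  have huB := hu.first_ne_right hM
  have hvB := hu.second_ne_right hM
  have haA := ha.first_ne_left hN
  have haB := ha.first_ne_right hM
  have hbB := ha.second_ne_right hM
  have hvA := hu.ne
  have hbA := ha.ne
  have inner {p q : K} (hpA : p ≠ A) (hpB : p ≠ B) (hqA : q ≠ A) (hqB : q ≠ B)
      (hpq : s(p, q) ∈ H) : ¬ Crosses X s(p, q) := by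
    rw [hX _ hpq]
    simp
    grind
  have hH : s(s, t) ∉ H := by
    intro hH
    have huX : u ∈ X := by
      have := (hX _ hu.first_mem).2 (.inl rfl)
      rw [crosses_mk] at this
      tauto
    have hsX : s ∈ X := (hu.mem_side_iff hsu (hM.ends_mem _ hH s (by simp))
      (inner huA huB hvA hvB)).2 huX
    have htX : t ∈ X := (not_crosses_mk.1
      (inner (by grind) (by grind) (by grind) (by grind) hH)).1 hsX
    have haX : a ∈ X := (ha.mem_side_iff ht (hM.ends_mem _ hH t (by simp))
      (inner haA haB hbA hbB)).1 htX
    have := (hX _ ha.first_mem).1 (crosses_mk.2 (.inr ⟨haX, hAX⟩))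
    have hAB := hM.ne
    simp at this
    grind
  exact hM.not_adj_of_legs ha hz hcut ht hsz (by rwa [Sym2.eq_swap]) (by rwa [Sym2.eq_swap])

end Legs

/-! ### Legs at the same end of a minimal near trail -/

section LegsAtOneEnd

variable {K : Type*} {E W H S : Finset (Sym2 K)} {U Y : Set K} {A B a b c d u v y : K} {e : Sym2 K}

lemma exists_eq_of_crosses_insert (hY : ∀ e ∈ H, Crosses Y e → A ∈ e) (he : e ∈ H)
    (hc : Crosses (insert A Y) e) : ∃ w ∉ Y, e = s(A, w) := by
  obtain ⟨p, hp, q, hq, hpY, hqY⟩ := hc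
  simp only [Set.mem_insert_iff, not_or] at hpY hqY
  have hpq : p ≠ q := by grind
  obtain rfl := (Sym2.mem_and_mem_iff hpq).1 ⟨hp, hq⟩
  obtain rfl | hpY := hpY
  · exact ⟨q, hqY.2, rfl⟩
  · obtain rfl | rfl := Sym2.mem_iff.1 (hY _ he (crosses_mk.2 (.inl ⟨hpY, hqY.2⟩)))
    exacts [⟨q, hqY.2, rfl⟩, absurd rfl hqY.1]

variable [DecidableEq K]

lemma NearTrail.isCutPair_of_isThroughLeg (hN : NearTrail E W H U A B) (hu : s(A, u) ∈ H)
    (h : IsThroughLeg W H U A u v) : IsCutPair H s(A, u) s(u, v) := by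
  refine hN.isCutPair_of_crosses_imp (X := {u}) ⟨u, hN.ends_mem _ hu u (by simp), rfl⟩
    ⟨A, hN.left_mem, hN.ne_of_mem (hN.subset hu)⟩ ?_
  rintro e he ⟨k, hk, -, -, rfl, -⟩
  exact h.2.2 e he hk

lemma NearTrail.cutConnected_drop (hN : NearTrail E W H U A B) (h : IsThroughLeg W H U A u v)
    (hcut : ∀ g, IsCutPair H s(A, u) g → g = s(u, v)) (g : Sym2 K) :
    CutConnected (U \ {u})
      ((((H.erase s(A, u)).erase s(u, v) : Finset _) : Set (Sym2 K)) \ {g}) := by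
  intro X
  rintro ⟨a, ⟨haU, hau⟩, haX⟩ ⟨b, ⟨hbU, hbu⟩, hbX⟩
  by_contra! hX
  let Y : Set K := {k | if k = u then v ∈ X else k ∈ X}
  have mem_Y {k : K} (hk : k ≠ u) : k ∈ Y ↔ k ∈ X := by simp [Y, hk]
  have hY : ¬ Crosses Y s(u, v) := by
    rw [not_crosses_mk, mem_Y (hN.ne_of_mem (hN.subset h.1)).symm]
    simp [Y]
  have hcutY := hN.crosses_iff_of_crosses_imp (X := Y) (f := s(A, u)) (g := g)
    ⟨a, haU, (mem_Y hau).2 haX⟩ ⟨b, hbU, mt (mem_Y hbu).1 hbX⟩ fun e he hc => by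
      by_contra! hne
      have hev : e ≠ s(u, v) := fun h => hY (h ▸ hc)
      refine hX e ⟨by simp [he, hne.1, hev], hne.2⟩ ((crosses_congr fun k hk => mem_Y ?_).1 hc)
      rintro rfl
      exact (h.2.2 e he hk).elim hne.1 hev
  obtain rfl := hcut g ⟨hcutY.1, hcutY.2.1, hcutY.2.2.1, Y, hcutY.2.2.2⟩
  exact hY ((hcutY.2.2.2 _ h.1).2 (.inr rfl))

lemma NearTrail.drop_isThroughLeg (hN : NearTrail E W H U A B) (hu : s(A, u) ∈ H)
    (h : IsThroughLeg W H U A u v) (huB : u ≠ B) (hvB : v ≠ B)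
    (hcut : ∀ g, IsCutPair H s(A, u) g → g = s(u, v)) :
    NearTrail E W ((H.erase s(A, u)).erase s(u, v)) (U \ {u}) v B where
  dominated_subset := hN.dominated_subset
  subset := (erase_subset _ _).trans ((erase_subset _ _).trans hN.subset)
  loopless := hN.loopless
  ne := hvB
  left_mem := ⟨hN.ends_mem _ h.1 v (by simp), (hN.ne_of_mem (hN.subset h.1)).symm⟩
  right_mem := ⟨hN.right_mem, huB.symm⟩
  ends_mem e he k hk := by
    simp only [mem_erase] at he
    refine ⟨hN.ends_mem e he.2.2 k hk, ?_⟩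
    rintro rfl
    exact (h.2.2 e he.2.2 hk).elim he.2.1 he.1
  odd := by
    have hne := (hN.isCutPair_of_isThroughLeg hu h).1
    have : (H.erase s(A, u)).erase s(u, v) = symmDiff {s(u, v)} (symmDiff {s(A, u)} H) := by
      ext e
      have := h.1
      simp only [mem_erase, mem_symmDiff, mem_singleton]
      grind
    rw [this]
    exact (HasOddEnds.singleton (hN.ne_of_mem (hN.subset h.1))).symm.symmDiff
      ((HasOddEnds.singleton (hN.ne_of_mem (hN.subset hu))).symm.symmDiff hN.odd)
  twoEdgeConnected := hN.cutConnected_drop h hcut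
  dominates e he := by
    obtain ⟨k, hk, hkU⟩ := hN.dominates e he
    by_cases hku : k = u
    · subst hku
      obtain ⟨c, rfl⟩ := Sym2.mem_iff_exists.1 hk
      exact ⟨c, by simp, h.2.1 _ he hk c (by simp),
        (hN.ne_of_mem (hN.dominated_subset he)).symm⟩
    · exact ⟨k, hk, hkU, hku⟩

lemma IsClosedTrail.attach_square (hS : IsClosedTrail U S) (ha : a ∉ U) (hb : b ∉ U) (hc : c ∈ U)
    (hab : a ≠ b) (hda : d ≠ a) (hdb : d ≠ b) (hcd : c ≠ d) :
    IsClosedTrail (U ∪ {a, b, d}) (symmDiff S {s(d, a), s(a, b), s(b, c), s(c, d)}) := by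
  have hac : a ≠ c := fun h => ha (h ▸ hc)
  have hbc : b ≠ c := fun h => hb (h ▸ hc)
  have new {k : K} {e : Sym2 K} (hk : k ∉ U) (hke : k ∈ e) : e ∉ S :=
    fun h => hk (hS.ends_mem e h k hke)
  have even : HasOddEnds {s(d, a), s(a, b), s(b, c), s(c, d)} d d := by
    have := (HasOddEnds.pair hda hab hdb.symm).union (HasOddEnds.pair hbc hcd hdb)
      (by simp; grind)
    rwa [insert_union, ← insert_eq] at this
  refine ⟨hS.nonempty.inl, fun e he k hk => ?_, fun k => ?_, ?_⟩
  · obtain ⟨h, -⟩ | ⟨h, -⟩ := mem_symmDiff.1 he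
    · exact .inl (hS.ends_mem e h k hk)
    · simp only [mem_insert, mem_singleton] at h
      obtain rfl | rfl | rfl | rfl := h <;> obtain rfl | rfl := Sym2.mem_iff.1 hk <;> simp [hc]
  · rw [edgeDegree_symmDiff, hS.even, even.even, add_zero]
  · rintro X ⟨p, hp, hpX⟩ ⟨q, hq, hqX⟩
    by_contra! hX
    simp only [coe_symmDiff, Set.mem_symmDiff, mem_coe, mem_insert, mem_singleton] at hX
    have hdX := not_crosses_mk.1 (hX s(d, a) (.inr ⟨by simp, new ha (by simp)⟩))
    have haX := not_crosses_mk.1 (hX s(a, b) (.inr ⟨by simp, new ha (by simp)⟩))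
    have hbX := not_crosses_mk.1 (hX s(b, c) (.inr ⟨by simp, new hb (by simp)⟩))
    have attached : ∀ k ∈ U ∪ {a, b, d}, ∃ u ∈ U, u ∈ X ↔ k ∈ X := by
      rintro k (hk | rfl | rfl | rfl)
      exacts [⟨k, hk, Iff.rfl⟩, ⟨c, hc, by tauto⟩, ⟨c, hc, by tauto⟩, ⟨c, hc, by tauto⟩]
    obtain ⟨p', hp', hpp⟩ := attached p hp
    obtain ⟨q', hq', hqq⟩ := attached q hq
    obtain ⟨e, he, hcr⟩ := hS.connected X ⟨p', hp', hpp.2 hpX⟩ ⟨q', hq', mt hqq.1 hqX⟩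
    refine hX e (.inl ⟨he, ?_⟩) hcr
    rintro (rfl | rfl | rfl | rfl)
    · exact new ha (by simp) he
    · exact new ha (by simp) he
    · exact new hb (by simp) he
    · exact not_crosses_mk.2 (by tauto) hcr

namespace IsMinimalNearTrail

lemma isCutPair_of_isThroughLeg (hM : IsMinimalNearTrail E W H U A B) (hu : Leg E W H U A u y B)
    (hv : Leg E W H U A v y B) (hne : u ≠ v) (tu : IsThroughLeg W H U A u y)
    (tv : IsThroughLeg W H U A v y) : IsCutPair H s(A, u) s(A, v) := by
  by_contra hcut
  have hN := hM.toNearTrail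
  have hyA := hu.ne
  have huA := hu.first_ne_left hN
  have hAu := hN.isCutPair_of_isThroughLeg hu.first_mem tu
  have hle := hM.card_le _ _ _ _ <| hN.drop_isThroughLeg hv.first_mem tv (hv.first_ne_right hM)
    (hv.second_ne_right hM) fun g hg => ?_
  · exact hle.not_gt (card_erase_le.trans_lt (card_erase_lt_of_mem hv.first_mem))
  by_contra hgv
  have hgA : g ≠ s(A, u) := by
    rintro rfl
    exact hcut hg.symm
  have hgu : g ≠ s(u, y) := by
    rintro rfl
    exact hcut (hg.trans hAu.symm (by simp; grind)).symm
  obtain ⟨-, -, -, X, hX⟩ := hg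
  have h₁ := mt (hX _ hu.first_mem).1 (by simp; grind)
  have h₂ := mt (hX _ tu.1).1 (by simp; grind)
  have h₃ := mt (hX _ tv.1).1 (by simp; grind)
  have h₄ := (hX _ hv.first_mem).2 (.inl rfl)
  rw [not_crosses_mk] at h₁ h₂ h₃
  exact not_crosses_mk.2 (by tauto) h₄

lemma not_isHangingLeg_of_isHangingLeg (hM : IsMinimalNearTrail E W H U A B)
    (hu : Leg E W H U A u y B) (hv : Leg E W H U A v y B) (hne : u ≠ v)
    (tu : IsHangingLeg W U u y) : ¬ IsHangingLeg W U v y := by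
  intro tv
  have hN := hM.toNearTrail
  obtain ⟨U', S, hS, hSE, dominates⟩ := hM.minimal _ (erase_ssubset tu.1)
  have undominated : ∀ k ∈ s(u, y), k ∉ U' := by
    by_contra! h
    refine hM.not_closed ⟨U', S, hS, hSE, fun e he => ?_⟩
    by_cases heu : e = s(u, y)
    · exact heu ▸ h
    · exact dominates e (mem_erase.2 ⟨heu, he⟩)
  have huU : u ∉ U' := undominated u (by simp)
  have hyU : y ∉ U' := undominated y (by simp)
  have hvU : v ∈ U' := by
    have huy := hu.first_ne_second hN
    obtain ⟨k, hk, hkU⟩ := dominates s(v, y) (mem_erase.2 ⟨by simp; grind, tv.1⟩)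
    obtain rfl | rfl := Sym2.mem_iff.1 hk
    exacts [hkU, absurd hkU hyU]
  refine hM.not_closed ⟨_, _, hS.attach_square huU hyU hvU (hu.first_ne_second hN)
    (hu.first_ne_left hN).symm hu.ne.symm (hv.first_ne_left hN), ?_, fun e he => ?_⟩
  · refine symmDiff_subset_union.trans (union_subset hSE ?_)
    simp only [insert_subset_iff, singleton_subset_iff]
    exact ⟨hN.subset hu.first_mem, hu.second_mem, Sym2.eq_swap ▸ hv.second_mem,
      Sym2.eq_swap ▸ hN.subset hv.first_mem⟩
  · by_cases heu : e = s(u, y)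
    · exact ⟨u, by simp [heu], by simp⟩
    · obtain ⟨k, hk, hkU⟩ := dominates e (mem_erase.2 ⟨heu, he⟩)
      exact ⟨k, hk, .inl hkU⟩

lemma isCutPair_of_isInnerLeg_of_isThroughLeg (hM : IsMinimalNearTrail E W H U A B)
    (hu : Leg E W H U A u y B) (hv : Leg E W H U A v y B) (hne : u ≠ v)
    (tu : IsInnerLeg H A B u y) (tv : IsThroughLeg W H U A v y) :
    IsCutPair H s(A, u) s(A, v) := by
  have hN := hM.toNearTrail
  have hAv := hN.isCutPair_of_isThroughLeg hv.first_mem tv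
  have hyA := hu.ne
  have hvA := hv.first_ne_left hN
  have hAne : s(A, u) ≠ s(A, v) := mt Sym2.congr_right.1 hne
  obtain ⟨-, X, g, hAX, -, -, hyX, hgne, hgH, hX, -⟩ := tu
  have pair {e : Sym2 K} (he : e ∈ H) (hne : e ≠ s(A, u)) (hc : Crosses X e) :
      IsCutPair H s(A, u) e := by
    obtain rfl := ((hX e he).1 hc).resolve_left hne
    exact ⟨hgne.symm, hu.first_mem, he, X, hX⟩
  by_cases hvX : v ∈ X
  · exact pair hv.first_mem hAne.symm (crosses_mk.2 (.inr ⟨hvX, hAX⟩))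
  · exact (pair tv.1 (by simp; grind) (crosses_mk.2 (.inr ⟨hyX, hvX⟩))).trans hAv.symm hAne

lemma isCutPair_of_isInnerLeg (hM : IsMinimalNearTrail E W H U A B)
    (hu : Leg E W H U A u y B) (hv : Leg E W H U A v y B) (hne : u ≠ v)
    (tu : IsInnerLeg H A B u y) (tv : IsInnerLeg H A B v y) : IsCutPair H s(A, u) s(A, v) := by
  have hN := hM.toNearTrail
  have hyA := hu.ne
  have hAne : s(A, u) ≠ s(A, v) := mt Sym2.congr_right.1 hne
  obtain ⟨huy, X, g, hAX, -, -, hyX, hgne, hgH, hX, -⟩ := tu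
  obtain ⟨hvy, Y, g', hAY, -, -, hyY, hgne', hgH', hY, -⟩ := tv
  have hAu : IsCutPair H s(A, u) g := ⟨hgne.symm, hu.first_mem, hgH, X, hX⟩
  have hAv : IsCutPair H s(A, v) g' := ⟨hgne'.symm, hv.first_mem, hgH', Y, hY⟩
  by_cases hvX : v ∈ X
  · obtain h | rfl := (hX _ hv.first_mem).1 (crosses_mk.2 (.inr ⟨hvX, hAX⟩))
    exacts [absurd h.symm hAne, hAu]
  by_cases huY : u ∈ Y
  · obtain h | rfl := (hY _ hu.first_mem).1 (crosses_mk.2 (.inr ⟨huY, hAY⟩))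
    exacts [absurd h hAne, hAv.symm]
  obtain rfl : s(v, y) = g :=
    ((hX _ hvy).1 (crosses_mk.2 (.inr ⟨hyX, hvX⟩))).resolve_left (by simp; grind)
  obtain rfl : s(u, y) = g' :=
    ((hY _ huy).1 (crosses_mk.2 (.inr ⟨hyY, huY⟩))).resolve_left (by simp; grind)
  refine (hAu.trans (hN.isCutPair_of_crosses_imp (X := X ∩ Y) ⟨y, hN.ends_mem _ huy y (by simp),
    hyX, hyY⟩ ⟨A, hN.left_mem, fun h => hAX h.1⟩ fun e he hc => ?_) (by simp; grind)).trans
    hAv.symm hAne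
  obtain h | h := hc.of_inter
  · obtain rfl | rfl := (hX e he).1 h
    · exact absurd hc (not_crosses_mk.2 (by simp [hAX, huY]))
    · exact .inl rfl
  · obtain rfl | rfl := (hY e he).1 h
    · exact absurd hc (not_crosses_mk.2 (by simp [hAX, hvX]))
    · exact .inr rfl

lemma isCutPair_of_legs (hM : IsMinimalNearTrail E W H U A B) (hu : Leg E W H U A u y B)
    (hv : Leg E W H U A v y B) (hne : u ≠ v) : IsCutPair H s(A, u) s(A, v) := by
  have mixed {u v : K} (tu : IsHangingLeg W U u y) (hv : s(v, y) ∈ H) : False :=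
    tu.2 (hM.ends_mem _ hv y (by simp))
  obtain tu | tu | tu := hu.kind <;> obtain tv | tv | tv := hv.kind
  · exact hM.isCutPair_of_isThroughLeg hu hv hne tu tv
  · exact (mixed tv tu.1).elim
  · exact (hM.isCutPair_of_isInnerLeg_of_isThroughLeg hv hu hne.symm tv tu).symm
  · exact (mixed tu tv.1).elim
  · exact (hM.not_isHangingLeg_of_isHangingLeg hu hv hne tu tv).elim
  · exact (mixed tu tv.1).elim
  · exact hM.isCutPair_of_isInnerLeg_of_isThroughLeg hu hv hne tu tv
  · exact (mixed tv tu.1).elim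
  · exact hM.isCutPair_of_isInnerLeg hu hv hne tu tv

end IsMinimalNearTrail

namespace NearTrail

open scoped Classical in
lemma three_le_card_crosses_insert [Finite K] (hN : NearTrail E W H U A B) (hB : B ∉ Y) :
    3 ≤ #{e ∈ H | Crosses (insert A Y) e} := by
  have hBX : B ∉ insert A Y := by simp [hN.ne.symm, hB]
  have odd : Odd #{e ∈ H | Crosses (insert A Y) e} := by
    have := hN.odd.card_crosses (fun e he => hN.loopless e (hN.subset he)) (insert A Y)
    rw [if_pos (by simp), if_neg hBX, add_zero] at this
    exact (ZMod.natCast_eq_one_iff_odd).1 this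
  have ne_one : #{e ∈ H | Crosses (insert A Y) e} ≠ 1 := fun h => by
    obtain ⟨f, hf⟩ := card_eq_one.1 h
    obtain ⟨e, he, hef, hc⟩ := hN.exists_crosses_ne (X := insert A Y)
      ⟨A, hN.left_mem, by simp⟩ ⟨B, hN.right_mem, hBX⟩ f
    exact hef (mem_singleton.1 (hf ▸ mem_filter.2 ⟨he, hc⟩))
  obtain ⟨r, hr⟩ := odd
  omega

/-- Absorb all cut pairs of edges at `A` into a maximal set `Y` that is attached to the rest only at
`A`; by parity at least three edges leave `A` for the complement of `Y`. -/
lemma exists_three_not_isCutPair [Finite K] (hN : NearTrail E W H U A B) :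
    ∃ u : Fin 3 → K, u.Injective ∧ (∀ i, s(A, u i) ∈ H) ∧
      ∀ i j, ¬ IsCutPair H s(A, u i) s(A, u j) := by
  classical
  let P : Set (Set K) := {Y | A ∉ Y ∧ B ∉ Y ∧ ∀ e ∈ H, Crosses Y e → A ∈ e}
  obtain ⟨Y, ⟨hAY, hBY, hY⟩, hmax⟩ : ∃ Y, Maximal (· ∈ P) Y :=
    P.toFinite.exists_maximal ⟨∅, by simp [P, not_crosses_empty]⟩
  obtain ⟨T, hT, hcard⟩ := exists_subset_card_eq (hN.three_le_card_crosses_insert hBY)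
  have φ := T.equivFinOfCardEq hcard
  have leaves (i : Fin 3) : ∃ w ∉ Y, (φ.symm i : Sym2 K) = s(A, w) := by
    obtain ⟨he, hc⟩ := mem_filter.1 (hT (φ.symm i).2)
    exact exists_eq_of_crosses_insert hY he hc
  choose u huY hu using leaves
  have hmem (i : Fin 3) : s(A, u i) ∈ H := hu i ▸ (mem_filter.1 (hT (φ.symm i).2)).1
  refine ⟨u, fun i j hij => φ.symm.injective (Subtype.ext ?_), hmem, fun i j hcut => ?_⟩
  · rw [hu, hu, hij]
  obtain ⟨Z, hAZ, hBZ, hZ⟩ := hN.exists_avoiding_of_isCutPair hcut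
  have hYZ : Y ∪ Z ∈ P := by
    refine ⟨by simp [hAY, hAZ], by simp [hBY, hBZ], fun e he hc => ?_⟩
    obtain h | h := hc.of_union
    · exact hY e he h
    · obtain rfl | rfl := (hZ e he).1 h <;> simp
  obtain ⟨h, -⟩ | ⟨h, -⟩ := crosses_mk.1 ((hZ _ (hmem i)).2 (.inl rfl))
  · exact hAZ h
  · exact huY i (hmax hYZ Set.subset_union_left (.inr h))

end NearTrail

end LegsAtOneEnd

/-! ### Counting edges at two systems of three legs -/

section LegSystems

lemma exists_injective_pair {α β : Type*} {P : α → β → Prop} {n : ℕ}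
    (extend : ∀ k < n, ∀ (u : Fin k → α) (z : Fin k → β), (∀ i, P (u i) (z i)) →
      ∃ a b, (∀ i, u i ≠ a) ∧ (∀ i, z i ≠ b) ∧ P a b) :
    ∃ (u : Fin n → α) (z : Fin n → β), u.Injective ∧ z.Injective ∧ ∀ i, P (u i) (z i) := by
  suffices h : ∀ k ≤ n, ∃ (u : Fin k → α) (z : Fin k → β), u.Injective ∧ z.Injective ∧
      ∀ i, P (u i) (z i) from h n le_rfl
  intro k
  induction k with
  | zero => exact fun _ =>
      ⟨Fin.elim0, Fin.elim0, fun i => i.elim0, fun i => i.elim0, fun i => i.elim0⟩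
  | succ k ih =>
    intro hk
    obtain ⟨u, z, hu, hz, hP⟩ := ih (by omega)
    obtain ⟨a, b, ha, hb, hab⟩ := extend k (by omega) u z hP
    exact ⟨Fin.cons a u, Fin.cons b z, Fin.cons_injective_iff.2 ⟨by simpa using ha, hu⟩,
      Fin.cons_injective_iff.2 ⟨by simpa using hb, hz⟩, Fin.cases hab hP⟩

lemma exists_fin_three_ne_of_lt {α : Type*} {k : ℕ} (hk : k < 3) {x : Fin 3 → α}
    (hx : x.Injective) (u : Fin k → α) : ∃ i, ∀ j, u j ≠ x i := by
  by_contra! h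
  choose f hf using h
  have hinj : f.Injective := fun i j hij => hx (by rw [← hf i, ← hf j, hij])
  simpa [hk.not_ge] using Fintype.card_le_of_injective f hinj

lemma sum_le_sum_sum_of_cover {ι α : Type*} [Fintype ι] {s : Finset α} {f : α → ℕ}
    {t : ι → Finset α} (cover : ∀ x ∈ s, f x ≠ 0 → ∃ i, x ∈ t i) :
    ∑ x ∈ s, f x ≤ ∑ i, ∑ x ∈ t i, f x := by
  classical
  calc ∑ x ∈ s, f x ≤ ∑ x ∈ s, ∑ i, if x ∈ t i then f x else 0 := sum_le_sum fun x hx => by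
        by_cases hf : f x = 0
        · simp [hf]
        obtain ⟨i, hi⟩ := cover x hx hf
        exact (if_pos hi).ge.trans
          (single_le_sum (f := fun i => if x ∈ t i then f x else 0) (by simp) (mem_univ i))
    _ = ∑ i, ∑ x ∈ s with x ∈ t i, f x := by simp only [sum_filter, sum_comm (s := s)]
    _ ≤ ∑ i, ∑ x ∈ t i, f x := sum_le_sum fun i _ =>
        sum_le_sum_of_subset fun x hx => (mem_filter.1 hx).2

variable {K : Type*} [DecidableEq K]

/-- The degree condition on the spiders of a graph `E`: three disjoint legs `A, u i, v i` at a
common end `A`. When `E` is the root of a line graph, such a spider is the preimage of an induced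
net with endvertices `s(u i, v i)`; the sum of the three degree conditions on the net gives `#E + 4`
without the last summand, and `A` has degree at least three. -/
def SpiderInequality (E : Finset (Sym2 K)) : Prop :=
  ∀ (A : K) (u v : Fin 3 → K), u.Injective → v.Injective → (∀ i, u i ≠ A) → (∀ i, v i ≠ A) →
    (∀ i j, u i ≠ v j) → (∀ i, s(A, u i) ∈ E) → (∀ i, s(u i, v i) ∈ E) →
    #E + 10 ≤ ∑ i, (edgeDegree E (u i) + edgeDegree E (v i)) + 2 * edgeDegree E A

/-- Three legs at each end of a minimal near trail. Legs at the same end start with edges that form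
no cut pair, and an edge forming a cut pair with the first edge of a leg at the other end belongs to
the leg with the same index. -/
structure LegSystem (E W H : Finset (Sym2 K)) (U : Set K) (A : K) (u v : Fin 3 → K) (B : K)
    (z y : Fin 3 → K) : Prop where
  minimal : IsMinimalNearTrail E W H U A B
  left : ∀ i, Leg E W H U A (u i) (v i) B
  right : ∀ i, Leg E W H U B (z i) (y i) A
  left_injective : u.Injective
  right_injective : z.Injective
  left_not_isCutPair : ∀ i j, ¬ IsCutPair H s(A, u i) s(A, u j)
  right_not_isCutPair : ∀ i j, ¬ IsCutPair H s(B, z i) s(B, z j)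
  left_matched : ∀ a j, IsCutPair H s(A, a) s(B, z j) → a = u j
  right_matched : ∀ b i, IsCutPair H s(B, b) s(A, u i) → b = z i

/-- The multiplicity of the vertex `k` in a spider, its centre `A` counting twice. -/
def legWeight (A : K) (u v : Fin 3 → K) (k : K) : ℕ :=
  2 * (if k = A then 1 else 0) + ∑ i, ((if k = u i then 1 else 0) + if k = v i then 1 else 0)

variable {E W H : Finset (Sym2 K)} {U : Set K} {A B a a' b k p q : K} {u v z y : Fin 3 → K}
  {i j : Fin 3} {e : Sym2 K}

lemma sum_ite_mem_edge (E : Finset (Sym2 K)) (k : K) :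
    ∑ e ∈ E, ∑ x ∈ e.toFinset, (if x = k then 1 else 0) = edgeDegree E k := by
  simp_rw [sum_ite_eq', Sym2.mem_toFinset, edgeDegree, card_filter]

lemma sum_legWeight (E : Finset (Sym2 K)) (A : K) (u v : Fin 3 → K) :
    ∑ e ∈ E, ∑ k ∈ e.toFinset, legWeight A u v k =
      ∑ i, (edgeDegree E (u i) + edgeDegree E (v i)) + 2 * edgeDegree E A := by
  have swap (f : Fin 3 → K → ℕ) : ∑ e ∈ E, ∑ k ∈ e.toFinset, ∑ i, f i k =
      ∑ i, ∑ e ∈ E, ∑ k ∈ e.toFinset, f i k := by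
    rw [sum_comm]
    exact sum_congr rfl fun e _ => sum_comm
  simp only [legWeight, sum_add_distrib, ← mul_sum, swap, sum_ite_mem_edge]
  ring

lemma IsMinimalNearTrail.not_isCutPair_of_isCutPair [Finite K] (hM : IsMinimalNearTrail E W H U A B)
    (h : IsCutPair H s(A, a) s(B, b)) : ¬ IsCutPair H s(A, a) s(A, a') := fun h' => by
  have heq := hM.isCutPair_unique (by simp) (by simp) (by simp) h h'
  obtain ⟨rfl, -⟩ | ⟨rfl, rfl⟩ := Sym2.eq_iff.1 heq
  · exact hM.ne rfl
  · exact hM.ends_not_adj (hM.subset h'.2.2.1)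

lemma IsMinimalNearTrail.exists_legSystem [Finite K] (hM : IsMinimalNearTrail E W H U A B) :
    ∃ u v z y, LegSystem E W H U A u v B z y := by
  have hN := hM.toNearTrail
  obtain ⟨u₀, hu₀, hu₀H, hu₀c⟩ := hN.exists_three_not_isCutPair
  obtain ⟨z₀, hz₀, hz₀H, hz₀c⟩ := hN.symm.exists_three_not_isCutPair
  let c a b := IsCutPair H s(A, a) s(B, b)
  have right_unique {a b b'} (h : c a b) (h' : c a b') : b' = b :=
    Sym2.congr_right.1 (hN.isCutPair_unique (by simp) (by simp) (by simp) h' h)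
  have left_unique {a a' b} (h : c a b) (h' : c a' b) : a' = a :=
    Sym2.congr_right.1 (hN.isCutPair_unique (by simp) (by simp) (by simp) h'.symm h.symm)
  let P a b := (s(A, a) ∈ H ∧ s(B, b) ∈ H) ∧ (∀ b', c a b' → b' = b) ∧ (∀ a', c a' b → a' = a) ∧
    ((∃ b', c a b') ∨ ∃ i, u₀ i = a) ∧ ((∃ a', c a' b) ∨ ∃ i, z₀ i = b)
  have hcP {a b} (h : c a b) : P a b :=
    ⟨⟨h.2.1, h.2.2.1⟩, fun _ => right_unique h, fun _ => left_unique h, .inl ⟨b, h⟩, .inl ⟨a, h⟩⟩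
  obtain ⟨u, z, hu, hz, hP⟩ := exists_injective_pair (P := P) (n := 3) fun k hk u z hP => by
    obtain ⟨i, hi⟩ := exists_fin_three_ne_of_lt hk hu₀ u
    obtain ⟨j, hj⟩ := exists_fin_three_ne_of_lt hk hz₀ z
    by_cases hs : ∃ b, c (u₀ i) b
    · obtain ⟨b, hb⟩ := hs
      exact ⟨u₀ i, b, hi, fun l hl => hi l ((hP l).2.2.1 _ (hl ▸ hb)).symm, hcP hb⟩
    by_cases ht : ∃ a, c a (z₀ j)
    · obtain ⟨a, ha⟩ := ht
      exact ⟨a, z₀ j, fun l hl => hj l ((hP l).2.1 _ (hl ▸ ha)).symm, hj, hcP ha⟩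
    · push Not at hs ht
      exact ⟨u₀ i, z₀ j, hi, hj, ⟨hu₀H i, hz₀H j⟩, fun b h => (hs b h).elim,
        fun a h => (ht a h).elim, .inr ⟨i, rfl⟩, .inr ⟨j, rfl⟩⟩
  choose v hv using fun i => hM.exists_leg (hP i).1.1
  choose y hy using fun i => hM.symm.exists_leg (hP i).1.2
  refine ⟨u, v, z, y, hM, hv, hy, hu, hz, fun i j h => ?_, fun i j h => ?_,
    fun a j => (hP j).2.2.1 a, fun b i h => (hP i).2.1 b h.symm⟩
  · obtain ⟨b, hb⟩ | ⟨i', hi⟩ := (hP i).2.2.2.1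
    · exact hM.not_isCutPair_of_isCutPair hb h
    obtain ⟨b, hb⟩ | ⟨j', hj⟩ := (hP j).2.2.2.1
    · exact hM.not_isCutPair_of_isCutPair hb h.symm
    · exact hu₀c i' j' (hi ▸ hj ▸ h)
  · obtain ⟨a, ha⟩ | ⟨i', hi⟩ := (hP i).2.2.2.2
    · exact hM.symm.not_isCutPair_of_isCutPair ha.symm h
    obtain ⟨a, ha⟩ | ⟨j', hj⟩ := (hP j).2.2.2.2
    · exact hM.symm.not_isCutPair_of_isCutPair ha.symm h.symm
    · exact hz₀c i' j' (hi ▸ hj ▸ h)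

namespace LegSystem

lemma symm (S : LegSystem E W H U A u v B z y) : LegSystem E W H U B z y A u v :=
  ⟨S.minimal.symm, S.right, S.left, S.right_injective, S.left_injective, S.right_not_isCutPair,
    S.left_not_isCutPair, S.right_matched, S.left_matched⟩

lemma first_ne_second (S : LegSystem E W H U A u v B z y) (i j : Fin 3) : u i ≠ v j := fun h => by
  have hsub := S.minimal.subset
  refine S.minimal.triangleFree A (u j) (u i) (hsub (S.left j).first_mem) ?_
    (hsub (S.left i).first_mem)
  exact h ▸ (S.left j).second_mem

lemma second_injective (S : LegSystem E W H U A u v B z y) : v.Injective := fun i j hij => by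
  by_contra hne
  exact S.left_not_isCutPair i j (S.minimal.isCutPair_of_legs (S.left i) (hij ▸ S.left j)
    (S.left_injective.ne hne))

lemma eq_of_meet (S : LegSystem E W H U A u v B z y) (hi : p = u i ∨ p = v i)
    (hj : p = z j ∨ p = y j) : i = j :=
  S.left_injective <| S.left_matched _ j <| S.minimal.isCutPair_of_legs_meet (S.left i) (S.right j)
    hi hj

lemma legWeight_left (S : LegSystem E W H U A u v B z y) : legWeight A u v A = 2 := by
  simp [legWeight, fun i => ((S.left i).first_ne_left S.minimal.toNearTrail).symm,
    fun i => (S.left i).ne.symm]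

lemma legWeight_right (S : LegSystem E W H U A u v B z y) : legWeight A u v B = 0 := by
  simp [legWeight, S.minimal.ne.symm, fun i => ((S.left i).first_ne_right S.minimal).symm,
    fun i => ((S.left i).second_ne_right S.minimal).symm]

lemma legWeight_le (S : LegSystem E W H U A u v B z y) (hk : k ≠ A) : legWeight A u v k ≤ 1 := by
  by_cases hu : ∃ i, k = u i
  · obtain ⟨i, rfl⟩ := hu
    simp [legWeight, hk, S.left_injective.eq_iff, S.first_ne_second]
  by_cases hv : ∃ i, k = v i
  · obtain ⟨i, rfl⟩ := hv
    simp [legWeight, hk, S.second_injective.eq_iff, (S.first_ne_second _ _).symm]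
  · push Not at hu hv
    simp [legWeight, hk, hu, hv]

end LegSystem

lemma exists_of_legWeight_ne_zero (hk : k ≠ A) (h : legWeight A u v k ≠ 0) :
    ∃ i, k = u i ∨ k = v i := by
  by_contra! hne
  exact h (by simp [legWeight, hk, hne])

/-- The multiplicity of the vertex `k` in the two spiders of a system of legs. -/
def pairWeight (A : K) (u v : Fin 3 → K) (B : K) (z y : Fin 3 → K) (k : K) : ℕ :=
  legWeight A u v k + legWeight B z y k

lemma pairWeight_comm : pairWeight A u v B z y = pairWeight B z y A u v :=
  funext fun _ => add_comm _ _

/-- The edges of the two legs with the same index at the two ends. -/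
def legEdges (A : K) (u v : Fin 3 → K) (B : K) (z y : Fin 3 → K) (i : Fin 3) : Finset (Sym2 K) :=
  {s(A, u i), s(B, z i)} ∪ {s(u i, v i), s(z i, y i)}

namespace LegSystem

lemma pairWeight_left (S : LegSystem E W H U A u v B z y) : pairWeight A u v B z y A = 2 := by
  rw [pairWeight, S.legWeight_left, S.symm.legWeight_right]

lemma pairWeight_le (S : LegSystem E W H U A u v B z y) : pairWeight A u v B z y k ≤ 2 := by
  by_cases hA : k = A
  · rw [hA, S.pairWeight_left]
  by_cases hB : k = B
  · rw [hB, pairWeight_comm, S.symm.pairWeight_left]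
  · exact add_le_add (S.legWeight_le hA) (S.symm.legWeight_le hB)

lemma exists_eq_of_left_adj (S : LegSystem E W H U A u v B z y) (hE : s(A, b) ∈ E)
    (hb : pairWeight A u v B z y b ≠ 0) : ∃ i, s(A, b) = s(A, u i) := by
  have hM := S.minimal
  have hbA : b ≠ A := (hM.ne_of_mem hE).symm
  have hbB : b ≠ B := fun h => hM.ends_not_adj (h ▸ hE)
  by_cases hl : legWeight A u v b = 0
  · obtain ⟨i, hi⟩ := exists_of_legWeight_ne_zero hbB (by rwa [pairWeight, hl, zero_add] at hb)
    exact ⟨i, Sym2.congr_right.2 (S.left_matched _ _ (hM.isCutPair_of_adj_leg (S.right i) hi hE).2)⟩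
  · obtain ⟨i, rfl | rfl⟩ := exists_of_legWeight_ne_zero hbA hl
    · exact ⟨i, rfl⟩
    · exact (hM.triangleFree _ _ _ (hM.subset (S.left i).first_mem) (S.left i).second_mem hE).elim

/-- Here `a` lies on the legs with index `i` at both ends and `b` on a leg at the left end. -/
lemma eq_leg_of_adj [Finite K] (S : LegSystem E W H U A u v B z y) (hE : s(a, b) ∈ E)
    (hau : a = u i ∨ a = v i) (haz : a = z i ∨ a = y i) (hb : b = u j ∨ b = v j) :
    s(a, b) = s(u i, v i) := by
  have hab := S.minimal.ne_of_mem hE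
  by_cases hij : j = i
  · grind
  · refine (S.minimal.not_adj_of_legs_meet (S.left i) (S.right i) (S.left j)
      (S.left_injective.ne hij) (fun h => hij ?_) hau haz hb hE).elim
    exact S.left_injective (S.left_matched _ _ h)

lemma mem_legEdges_of_inner [Finite K] (S : LegSystem E W H U A u v B z y) (hE : s(a, b) ∈ E)
    (haA : a ≠ A) (haB : a ≠ B) (hbA : b ≠ A) (hbB : b ≠ B)
    (ha : 1 < pairWeight A u v B z y a) (hb : pairWeight A u v B z y b ≠ 0) :
    ∃ i, s(a, b) ∈ legEdges A u v B z y i := by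
  have hl := S.legWeight_le haA
  have hr := S.symm.legWeight_le haB
  simp only [pairWeight] at ha hb
  obtain ⟨i, hi⟩ := exists_of_legWeight_ne_zero haA (by omega : legWeight A u v a ≠ 0)
  obtain ⟨i', hi'⟩ := exists_of_legWeight_ne_zero haB (by omega : legWeight B z y a ≠ 0)
  obtain rfl := S.eq_of_meet hi hi'
  by_cases hbl : legWeight A u v b = 0
  · obtain ⟨j, hj⟩ := exists_of_legWeight_ne_zero hbB (by rwa [hbl, zero_add] at hb)
    exact ⟨i, by simp [legEdges, S.symm.eq_leg_of_adj hE hi' hi hj]⟩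
  · obtain ⟨j, hj⟩ := exists_of_legWeight_ne_zero hbA hbl
    exact ⟨i, by simp [legEdges, S.eq_leg_of_adj hE hi hi' hj]⟩

lemma mem_legEdges_of_end (S : LegSystem E W H U A u v B z y) (hE : s(a, b) ∈ E)
    (ha : a = A ∨ a = B) (hb : pairWeight A u v B z y b ≠ 0) :
    ∃ i, s(a, b) ∈ legEdges A u v B z y i := by
  obtain rfl | rfl := ha
  · exact (S.exists_eq_of_left_adj hE hb).imp fun i hi => by simp [legEdges, hi]
  · rw [pairWeight_comm] at hb
    exact (S.symm.exists_eq_of_left_adj hE hb).imp fun i hi => by simp [legEdges, hi]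

lemma mem_legEdges [Finite K] (S : LegSystem E W H U A u v B z y) (hE : s(a, b) ∈ E)
    (h : 2 < pairWeight A u v B z y a + pairWeight A u v B z y b) :
    ∃ i, s(a, b) ∈ legEdges A u v B z y i := by
  wlog hab : pairWeight A u v B z y b ≤ pairWeight A u v B z y a generalizing a b
  · rw [Sym2.eq_swap] at hE ⊢
    exact this hE (by omega) (by omega)
  have ha := S.pairWeight_le (k := a)
  by_cases haE : a = A ∨ a = B
  · exact S.mem_legEdges_of_end hE haE (by omega)
  by_cases hbE : b = A ∨ b = B
  · rw [Sym2.eq_swap] at hE ⊢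
    exact S.mem_legEdges_of_end hE hbE (by omega)
  · push Not at haE hbE
    exact S.mem_legEdges_of_inner hE haE.1 haE.2 hbE.1 hbE.2 (by omega) (by omega)

lemma mk_eq_of_pairWeight (S : LegSystem E W H U A u v B z y)
    (h : 3 < pairWeight A u v B z y (u i) + pairWeight A u v B z y (v i)) :
    s(u i, v i) = s(z i, y i) := by
  have hM := S.minimal
  have huB := (S.left i).first_ne_right hM
  have hvB := (S.left i).second_ne_right hM
  have huA := S.legWeight_le ((S.left i).first_ne_left hM.toNearTrail)
  have hvA := S.legWeight_le (S.left i).ne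
  have hu := S.symm.legWeight_le huB
  have hv := S.symm.legWeight_le hvB
  simp only [pairWeight] at h
  obtain ⟨j, hj⟩ := exists_of_legWeight_ne_zero huB (by omega : legWeight B z y (u i) ≠ 0)
  obtain ⟨l, hl⟩ := exists_of_legWeight_ne_zero hvB (by omega : legWeight B z y (v i) ≠ 0)
  obtain rfl := S.eq_of_meet (.inl rfl) hj
  obtain rfl := S.eq_of_meet (.inr rfl) hl
  have := S.first_ne_second i i
  grind

lemma sum_excess_legEdges_le (S : LegSystem E W H U A u v B z y) (i : Fin 3) :
    ∑ e ∈ legEdges A u v B z y i, (∑ k ∈ e.toFinset, pairWeight A u v B z y k - 2) ≤ 6 := by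
  have hM := S.minimal
  set w := pairWeight A u v B z y
  let f (e : Sym2 K) := ∑ k ∈ e.toFinset, w k - 2
  have hf {a b} (h : s(a, b) ∈ E) : f s(a, b) = w a + w b - 2 := by
    simp only [f, Sym2.toFinset_mk_eq, sum_pair (hM.ne_of_mem h)]
  have hf_le {a b} (h : s(a, b) ∈ E) : f s(a, b) ≤ 2 := by
    have ha : w a ≤ 2 := S.pairWeight_le
    have hb : w b ≤ 2 := S.pairWeight_le
    rw [hf h]
    omega
  have first : ∑ e ∈ {s(A, u i), s(B, z i)}, f e ≤ 4 := by
    refine (sum_le_card_nsmul _ f 2 ?_).trans (Nat.mul_le_mul_right 2 card_le_two)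
    simp [hf_le (hM.subset (S.left i).first_mem), hf_le (hM.subset (S.right i).first_mem)]
  have second : ∑ e ∈ {s(u i, v i), s(z i, y i)}, f e ≤ 2 := by
    by_cases heq : s(u i, v i) = s(z i, y i)
    · simp [← heq, hf_le (S.left i).second_mem]
    · have hl : w (u i) + w (v i) ≤ 3 := not_lt.1 (mt S.mk_eq_of_pairWeight heq)
      have hr : w (z i) + w (y i) ≤ 3 := by
        simpa only [w, pairWeight_comm (A := A)] using
          not_lt.1 (mt S.symm.mk_eq_of_pairWeight (Ne.symm heq))
      rw [sum_pair heq, hf (S.left i).second_mem, hf (S.right i).second_mem]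
      omega
  rw [legEdges]
  calc _ ≤ _ := (Nat.le_add_right _ _).trans (sum_union_inter (f := f)).le
    _ ≤ 6 := add_le_add first second

end LegSystem

theorem IsMinimalNearTrail.not_spiderInequality [Finite K] (hM : IsMinimalNearTrail E W H U A B) :
    ¬ SpiderInequality E := by
  intro hE
  obtain ⟨u, v, z, y, S⟩ := hM.exists_legSystem
  have spider {A B : K} {u v z y : Fin 3 → K} (S : LegSystem E W H U A u v B z y) :
      #E + 10 ≤ ∑ e ∈ E, ∑ k ∈ e.toFinset, legWeight A u v k := by
    have hN := S.minimal.toNearTrail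
    exact sum_legWeight E A u v ▸ hE A u v S.left_injective S.second_injective
      (fun i => (S.left i).first_ne_left hN) (fun i => (S.left i).ne) S.first_ne_second
      (fun i => hN.subset (S.left i).first_mem) fun i => (S.left i).second_mem
  let w := pairWeight A u v B z y
  have lower : 2 * #E + 20 ≤ ∑ e ∈ E, ∑ k ∈ e.toFinset, w k := by
    have := add_le_add (spider S) (spider S.symm)
    simp only [w, pairWeight, sum_add_distrib]
    omega
  have excess : ∑ e ∈ E, (∑ k ∈ e.toFinset, w k - 2) ≤ 18 := by
    refine (sum_le_sum_sum_of_cover (t := legEdges A u v B z y) fun e he h => ?_).trans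
      ((sum_le_sum fun i _ => S.sum_excess_legEdges_le i).trans (by simp))
    induction e with | _ a b
    refine S.mem_legEdges he ?_
    rw [Sym2.toFinset_mk_eq, sum_pair (hM.ne_of_mem he)] at h
    simp only [w] at h
    omega
  have upper : ∑ e ∈ E, ∑ k ∈ e.toFinset, w k ≤ ∑ e ∈ E, (2 + (∑ k ∈ e.toFinset, w k - 2)) :=
    sum_le_sum fun e _ => by omega
  rw [sum_add_distrib, sum_const, smul_eq_mul] at upper
  omega

end LegSystems

/-! ### Rerouting hamiltonian paths -/

section ListPaths

variable {V : Type*}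

/-- `l` lists the vertices of a walk from `a` to `b`. -/
structure IsListWalk (G : SimpleGraph V) (l : List V) (a b : V) : Prop where
  chain : l.IsChain G.Adj
  head : l.head? = some a
  last : l.getLast? = some b

/-- `l` lists the vertices of a hamiltonian path from `a` to `b`. -/
structure IsHamiltonianList (G : SimpleGraph V) (l : List V) (a b : V) : Prop
    extends IsListWalk G l a b where
  nodup : l.Nodup
  mem : ∀ v, v ∈ l

/-- `G` has a hamiltonian cycle, given as a hamiltonian path with adjacent ends. A single edge
counts as such a cycle. -/
def HasHamiltonianList (G : SimpleGraph V) : Prop :=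
  ∃ l a b, IsHamiltonianList G l a b ∧ G.Adj b a

/-- `z` lies in the closed neighbourhood of `{a, b}`. -/
def IsNear (G : SimpleGraph V) (a b z : V) : Prop :=
  z = a ∨ z = b ∨ G.Adj z a ∨ G.Adj z b

variable {G G' : SimpleGraph V} {l l' P Q M R : List V} {a b c d q r x y s t : V} {S : V → Prop}

namespace IsListWalk

lemma reverse (h : IsListWalk G l a b) : IsListWalk G l.reverse b a where
  chain := List.isChain_reverse.2 (h.chain.imp fun _ _ h => h.symm)
  head := by simpa using h.last
  last := by simpa using h.head

lemma ne_nil (h : IsListWalk G l a b) : l ≠ [] := by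
  rintro rfl
  simpa using h.head

lemma left_mem (h : IsListWalk G l a b) : a ∈ l := List.mem_of_head? h.head

lemma right_mem (h : IsListWalk G l a b) : b ∈ l := List.mem_of_getLast? h.last

lemma append (h : IsListWalk G P a b) (h' : IsListWalk G Q c d) (hbc : G.Adj b c) :
    IsListWalk G (P ++ Q) a d where
  chain := List.isChain_append.2 ⟨h.chain, h'.chain, by simp [h.last, h'.head, hbc]⟩
  head := by simp [h.head]
  last := by simp [h'.last]

lemma singleton (x : V) : IsListWalk G [x] x x := ⟨by simp, by simp, by simp⟩

lemma split (h : IsListWalk G (P ++ Q) a b) (hP : P ≠ []) (hQ : Q ≠ []) :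
    ∃ p q, IsListWalk G P a p ∧ IsListWalk G Q q b ∧ G.Adj p q := by
  obtain ⟨hcP, hcQ, hc⟩ := List.isChain_append.1 h.chain
  refine ⟨P.getLast hP, Q.head hQ, ⟨hcP, ?_, List.getLast?_eq_some_getLast hP⟩,
    ⟨hcQ, List.head?_eq_some_head hQ, ?_⟩, hc _ (List.getLast?_eq_some_getLast hP) _
      (List.head?_eq_some_head hQ)⟩
  · rw [← List.head?_append_of_ne_nil _ hP, h.head]
  · rw [← List.getLast?_append_of_ne_nil P hQ, h.last]

lemma right_eq (h : IsListWalk G (P ++ [x]) a b) : b = x := by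
  simpa using h.last.symm

lemma left_eq (h : IsListWalk G (x :: P) a b) : a = x := by
  simpa using h.head.symm

end IsListWalk

namespace IsHamiltonianList

lemma reverse (h : IsHamiltonianList G l a b) : IsHamiltonianList G l.reverse b a where
  __ := h.toIsListWalk.reverse
  nodup := List.nodup_reverse.2 h.nodup
  mem v := List.mem_reverse.2 (h.mem v)

lemma hasHamiltonianList_of_count [DecidableEq V] (h : IsHamiltonianList G l a b)
    (h' : IsListWalk G l' c d) (hdc : G.Adj d c) (hl : ∀ v, l'.count v = l.count v) :
    HasHamiltonianList G := by
  have hp := List.perm_iff_count.2 hl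
  exact ⟨l', c, d, ⟨h', hp.nodup_iff.2 h.nodup, fun v => hp.mem_iff.2 (h.mem v)⟩, hdc⟩

lemma split (h : IsHamiltonianList G (P ++ Q) a b) (hn : ¬ HasHamiltonianList G) (hP : P ≠ [])
    (hQ : Q ≠ []) : ∃ p q, IsListWalk G P a p ∧ IsListWalk G Q q b ∧ G.Adj p q ∧
      ¬ (G.Adj q a ∧ G.Adj p b) := by
  classical
  obtain ⟨p, q, hp, hq, hpq⟩ := h.toIsListWalk.split hP hQ
  refine ⟨p, q, hp, hq, hpq, fun ⟨hqa, hpb⟩ => hn ?_⟩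
  exact h.hasHamiltonianList_of_count (hp.reverse.append hq hqa.symm) hpb.symm (by simp)

end IsHamiltonianList

/-- A hamiltonian path from `a` to `b` that visits `x` before `y`, where `q` and `r` are the first
and last vertices between them. Were one of the three excluded adjacencies present, the path could
be rerouted into a hamiltonian cycle, given that `x` and `y` are adjacent to both `a` and `b`. -/
structure IsDoubleSplit (G : SimpleGraph V) (P M Q : List V) (a b x y q r : V) : Prop where
  left : IsListWalk G (P ++ [x]) a x
  middle : IsListWalk G M q r
  right : IsListWalk G (y :: Q) y b
  adj_left : G.Adj x q
  adj_right : G.Adj r y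
  first_ne : q ≠ a ∧ q ≠ b
  last_ne : r ≠ a ∧ r ≠ b
  first_not_adj : ¬ G.Adj q a
  last_not_adj : ¬ G.Adj r b
  not_adj_adj : ¬ (G.Adj q b ∧ G.Adj r a)

lemma IsHamiltonianList.doubleSplit (h : IsHamiltonianList G (P ++ x :: (M ++ y :: Q)) a b)
    (hn : ¬ HasHamiltonianList G) (hxb : G.Adj x b) (hya : G.Adj y a) (hxy : G.Adj x y) :
    ∃ q r, IsDoubleSplit G P M Q a b x y q r := by
  classical
  have h₁ : IsHamiltonianList G ((P ++ [x]) ++ (M ++ y :: Q)) a b := by simpa using h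
  have h₂ : IsHamiltonianList G ((P ++ x :: M) ++ (y :: Q)) a b := by simpa using h
  obtain ⟨x', q, hl, hr, hxq, hnq⟩ := h₁.split hn (by simp) (by simp)
  obtain rfl := hl.right_eq
  have hM : M ≠ [] := by
    rintro rfl
    obtain rfl := hr.left_eq
    exact hnq ⟨hya, hxb⟩
  obtain ⟨r, y', hl', hr', hry, hnr⟩ := h₂.split hn (by simp) (by simp)
  obtain rfl := hr'.left_eq
  have hm : IsListWalk G M q r :=
    ⟨(List.isChain_append.1 hr.chain).1, by rw [← hr.head, List.head?_append_of_ne_nil _ hM],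
      by rw [← hl'.last, List.append_cons, List.getLast?_append_of_ne_nil _ hM]⟩
  have disjoint := (List.nodup_append.1 h₁.nodup).2.2
  have disjoint' := (List.nodup_append.1 h₂.nodup).2.2
  have hqM := hm.left_mem
  have hrM := hm.right_mem
  refine ⟨q, r, hl, hm, hr', hxq, hry, ⟨?_, ?_⟩, ⟨?_, ?_⟩, fun h => hnq ⟨h, hxb⟩,
    fun h => hnr ⟨hya, h⟩, fun ⟨hqb, hra⟩ => hn ?_⟩
  · exact (disjoint _ hl.left_mem _ (by simp [hqM])).symm
  · exact disjoint' _ (by simp [hqM]) _ hr'.right_mem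
  · exact (disjoint _ hl.left_mem _ (by simp [hrM])).symm
  · exact disjoint' _ (by simp [hrM]) _ hr'.right_mem
  · refine h₁.hasHamiltonianList_of_count
      (hl.reverse.append (hm.reverse.append hr'.reverse hqb) hra.symm) hxy.symm fun v => ?_
    simp only [List.count_append, List.count_reverse]

lemma eq_append_of_mem_of_mem (hx : x ∈ l) (hy : y ∈ l) (hxy : x ≠ y) :
    (∃ P M Q, l = P ++ x :: (M ++ y :: Q)) ∨ ∃ P M Q, l = P ++ y :: (M ++ x :: Q) := by
  obtain ⟨P, R, rfl⟩ := List.append_of_mem hx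
  obtain h | h := List.mem_append.1 hy
  · obtain ⟨S, T, rfl⟩ := List.append_of_mem h
    exact .inr ⟨S, T, R, by simp⟩
  · obtain ⟨S, T, rfl⟩ := List.append_of_mem ((List.mem_cons.1 h).resolve_left hxy.symm)
    exact .inl ⟨P, S, T, rfl⟩

lemma IsHamiltonianList.hasHamiltonianList_of_adj (h : IsHamiltonianList G l a b)
    (hxa : G.Adj x a) (hxb : G.Adj x b) (hya : G.Adj y a) (hyb : G.Adj y b) (hxy : G.Adj x y)
    (hx : ∀ z, G.Adj x z → IsNear G a b z) (hy : ∀ z, G.Adj y z → IsNear G a b z) :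
    HasHamiltonianList G := by
  by_contra hn
  have ordered {P M Q x y} (h : IsHamiltonianList G (P ++ x :: (M ++ y :: Q)) a b)
      (hxb : G.Adj x b) (hya : G.Adj y a) (hxy : G.Adj x y)
      (hx : ∀ z, G.Adj x z → IsNear G a b z) (hy : ∀ z, G.Adj y z → IsNear G a b z) : False := by
    obtain ⟨q, r, D⟩ := h.doubleSplit hn hxb hya hxy
    have hq := hx q D.adj_left
    have hr := hy r D.adj_right.symm
    have := D.first_ne
    have := D.last_ne
    have := D.first_not_adj
    have := D.last_not_adj
    exact D.not_adj_adj ⟨by grind [IsNear], by grind [IsNear]⟩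
  obtain ⟨P, M, Q, rfl⟩ | ⟨P, M, Q, rfl⟩ := eq_append_of_mem_of_mem (h.mem x) (h.mem y) hxy.ne
  · exact ordered h hxb hya hxy hx hy
  · exact ordered h hyb hxa hxy.symm hy hx

/-- Three mutually adjacent common neighbours `x`, `s`, `t` of `a` and `b`, all of whose neighbours
are near `{a, b}` except that `s` and `t` may have further neighbours in a clique `S`. -/
structure IsSharedTriangle (G : SimpleGraph V) (a b x s t : V) (S : V → Prop) : Prop where
  adj_left : G.Adj x a ∧ G.Adj s a ∧ G.Adj t a
  adj_right : G.Adj x b ∧ G.Adj s b ∧ G.Adj t b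
  adj : G.Adj x s ∧ G.Adj x t ∧ G.Adj s t
  near : ∀ z, G.Adj x z → IsNear G a b z
  near_or_left : ∀ z, G.Adj s z → IsNear G a b z ∨ S z
  near_or_right : ∀ z, G.Adj t z → IsNear G a b z ∨ S z
  clique : ∀ z w, S z → S w → z ≠ w → G.Adj z w

lemma IsNear.symm (h : IsNear G a b x) : IsNear G b a x := by
  unfold IsNear at *
  tauto

namespace IsSharedTriangle

lemma swap (T : IsSharedTriangle G a b x s t S) : IsSharedTriangle G a b x t s S :=
  ⟨⟨T.1.1, T.1.2.2, T.1.2.1⟩, ⟨T.2.1, T.2.2.2, T.2.2.1⟩, ⟨T.adj.2.1, T.adj.1, T.adj.2.2.symm⟩,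
    T.near, T.near_or_right, T.near_or_left, T.clique⟩

lemma reverse (T : IsSharedTriangle G a b x s t S) : IsSharedTriangle G b a x s t S :=
  ⟨T.adj_right, T.adj_left, T.adj, fun z h => (T.near z h).symm,
    fun z h => (T.near_or_left z h).imp_left (·.symm),
    fun z h => (T.near_or_right z h).imp_left (·.symm), T.clique⟩

lemma not_centre_between (T : IsSharedTriangle G a b x s t S) (hn : ¬ HasHamiltonianList G)
    {M₁ M₂ : List V} :
    ¬ IsHamiltonianList G (P ++ s :: (M₁ ++ x :: (M₂ ++ t :: Q))) a b := by
  classical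
  intro h
  obtain ⟨q₁, r₁, D₁⟩ := h.doubleSplit hn T.adj_right.2.1 T.adj_left.1 T.adj.1.symm
  have h' : IsHamiltonianList G ((P ++ s :: M₁) ++ x :: (M₂ ++ t :: Q)) a b := by simpa using h
  obtain ⟨q₂, r₂, D₂⟩ := h'.doubleSplit hn T.adj_right.1 T.adj_left.2.2 T.adj.2.1
  obtain ⟨hl₁, hm₁, -, hsq, hrx, hq₁, hr₁, hqa, hrb, hqr⟩ := D₁
  obtain ⟨-, hm₂, hr, hxq, hrt, hq₂, hr₂, hqa', hrb', hqr'⟩ := D₂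
  have hr₁a : G.Adj r₁ a := by grind [IsNear, T.near _ hrx.symm]
  have hq₂b : G.Adj q₂ b := by grind [IsNear, T.near _ hxq]
  have hSq : S q₁ := by grind [IsNear, T.near_or_left _ hsq]
  have hSr : S r₂ := by grind [IsNear, T.near_or_right _ hrt.symm]
  have hne : q₁ ≠ r₂ := by
    have := h'.nodup
    have := hm₁.left_mem
    have := hm₂.right_mem
    simp only [List.nodup_append, List.nodup_cons, List.mem_append, List.mem_cons] at *
    grind
  refine hn (h.hasHamiltonianList_of_count (hl₁.reverse.append (hm₁.reverse.append
    (hm₂.reverse.append (hr.reverse.append (.singleton x) T.adj.2.1.symm) hq₂b)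
      (T.clique _ _ hSq hSr hne)) hr₁a.symm) T.adj.1 fun v => ?_)
  simp only [List.count_append, List.count_reverse, List.count_cons, List.count_nil]
  omega

lemma not_centre_first (T : IsSharedTriangle G a b x s t S) (hn : ¬ HasHamiltonianList G)
    {M₁ M₂ : List V} :
    ¬ IsHamiltonianList G (P ++ x :: (M₁ ++ s :: (M₂ ++ t :: Q))) a b := by
  classical
  intro h
  obtain ⟨q₁, r₁, D₁⟩ := h.doubleSplit hn T.adj_right.1 T.adj_left.2.1 T.adj.1
  have h' : IsHamiltonianList G ((P ++ x :: M₁) ++ s :: (M₂ ++ t :: Q)) a b := by simpa using h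
  obtain ⟨q₂, r₂, D₂⟩ := h'.doubleSplit hn T.adj_right.2.1 T.adj_left.2.2 T.adj.2.2
  obtain ⟨hl₁, hm₁, -, hxq, hrs, hq₁, hr₁, hqa, hrb, hqr⟩ := D₁
  obtain ⟨-, hm₂, hr, hsq, hrt, -, hr₂, -, hrb', -⟩ := D₂
  have hq₁b : G.Adj q₁ b := by grind [IsNear, T.near _ hxq]
  have hSr₁ : S r₁ := by grind [IsNear, T.near_or_left _ hrs.symm]
  have hr₂a : ¬ G.Adj r₂ a := fun hr₂a => by
    have hm : IsListWalk G (M₁ ++ ([s] ++ M₂)) q₁ r₂ :=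
      hm₁.append ((IsListWalk.singleton s).append hm₂ hsq) hrs
    refine hn (h.hasHamiltonianList_of_count
      (hl₁.reverse.append (hm.reverse.append hr.reverse hq₁b) hr₂a.symm) T.adj.2.1.symm fun v => ?_)
    simp only [List.count_append, List.count_reverse, List.count_cons, List.count_nil]
    omega
  have hSr₂ : S r₂ := by grind [IsNear, T.near_or_right _ hrt.symm]
  have hne : r₁ ≠ r₂ := by
    have := h'.nodup
    have := hm₁.right_mem
    have := hm₂.right_mem
    simp only [List.nodup_append, List.nodup_cons, List.mem_append, List.mem_cons] at *
    grind
  refine hn (h.hasHamiltonianList_of_count (hm₁.append (hm₂.reverse.append ((IsListWalk.singleton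
    s).append (hl₁.reverse.append hr T.adj_left.2.2.symm) T.adj.1.symm) hsq.symm)
      (T.clique _ _ hSr₁ hSr₂ hne)) hq₁b.symm fun v => ?_)
  simp only [List.count_append, List.count_reverse, List.count_cons, List.count_nil]
  omega

lemma hasHamiltonianList (T : IsSharedTriangle G a b x s t S) (h : IsHamiltonianList G l a b) :
    HasHamiltonianList G := by
  by_contra hn
  have not_centre_before {a b : V} {P R : List V} (T : IsSharedTriangle G a b x s t S)
      (h : IsHamiltonianList G (P ++ x :: R) a b) (hs : s ∈ R) (ht : t ∈ R) : False := by
    obtain ⟨P', M, Q, rfl⟩ | ⟨P', M, Q, rfl⟩ := eq_append_of_mem_of_mem hs ht T.adj.2.2.ne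
    · exact T.not_centre_first hn h
    · exact T.swap.not_centre_first hn h
  obtain ⟨P, R, rfl⟩ := List.append_of_mem (h.mem x)
  have side {v} (hv : G.Adj x v) : v ∈ P ∨ v ∈ R :=
    (List.mem_append.1 (h.mem v)).imp_right fun hR => (List.mem_cons.1 hR).resolve_left hv.ne.symm
  obtain hs | hs := side T.adj.1 <;> obtain ht | ht := side T.adj.2.1
  · have h' : IsHamiltonianList G (R.reverse ++ x :: P.reverse) b a := by simpa using h.reverse
    exact not_centre_before T.reverse h' (List.mem_reverse.2 hs) (List.mem_reverse.2 ht)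
  · obtain ⟨P₁, P₂, rfl⟩ := List.append_of_mem hs
    obtain ⟨R₁, R₂, rfl⟩ := List.append_of_mem ht
    exact T.not_centre_between hn (by simpa using h)
  · obtain ⟨P₁, P₂, rfl⟩ := List.append_of_mem ht
    obtain ⟨R₁, R₂, rfl⟩ := List.append_of_mem hs
    exact T.swap.not_centre_between hn (by simpa using h)
  · exact not_centre_before T h hs ht

end IsSharedTriangle

lemma IsHamiltonianList.of_sup_edge (h : IsHamiltonianList (G ⊔ edge a b) l a b)
    (hl : l.length ≠ 2) : IsHamiltonianList G l a b where
  __ := h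
  chain := by
    refine List.isChain_iff_getElem.2 fun i hi => ?_
    have hadj := List.isChain_iff_getElem.1 h.chain i hi
    have first : l[0] = a :=
      (List.getElem?_eq_some_iff.1 (List.head?_eq_getElem? ▸ h.head)).2
    have last : l[l.length - 1] = b :=
      (List.getElem?_eq_some_iff.1 (List.getLast?_eq_getElem? ▸ h.last)).2
    rw [sup_adj, edge_adj, ← last, ← first] at hadj
    simp only [h.nodup.getElem_inj_iff] at hadj
    exact hadj.resolve_right (by omega)

lemma exists_isHamiltonianList_of_sup_edge [Fintype V] (hV : 3 ≤ Fintype.card V)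
    (hG : ¬ HasHamiltonianList G) (h : HasHamiltonianList (G ⊔ edge a b)) :
    ∃ l, IsHamiltonianList G l a b := by
  have ends {l : List V} {x y : V} (h : IsHamiltonianList (G ⊔ edge a b) l x y)
      (hxy : (edge a b).Adj x y) : ∃ l, IsHamiltonianList G l a b := by
    have hl : l.length ≠ 2 := by
      have := h.nodup.length_le_card
      have : Fintype.card V ≤ l.length := by
        classical
        rw [← Finset.card_univ]
        exact (Finset.card_le_card fun v _ => List.mem_toFinset.2 (h.mem v)).trans
          l.toFinset_card_le
      omega
    obtain ⟨⟨rfl, rfl⟩ | ⟨rfl, rfl⟩, -⟩ := (edge_adj ..).1 hxy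
    · exact ⟨l, h.of_sup_edge hl⟩
    · rw [edge_comm] at h
      exact ⟨_, (h.of_sup_edge hl).reverse⟩
  obtain ⟨l, x, y, h, hyx⟩ := h
  obtain hyx' | hyx' := (sup_adj ..).1 hyx
  · have hc : ¬ l.IsChain G.Adj := fun hc =>
      hG ⟨l, x, y, ⟨⟨hc, h.head, h.last⟩, h.nodup, h.mem⟩, hyx'⟩
    simp only [List.isChain_iff_forall_rel_of_append_cons_cons, not_forall] at hc
    obtain ⟨p, q, P, Q, rfl, hpq⟩ := hc
    have hw : IsListWalk (G ⊔ edge a b) ((P ++ [p]) ++ (q :: Q)) x y := by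
      simpa using h.toIsListWalk
    obtain ⟨p', q', hP, hQ, hpq'⟩ := hw.split (by simp) (by simp)
    obtain rfl := hP.right_eq
    obtain rfl := hQ.left_eq
    have hperm : (P ++ p' :: q' :: Q).Perm (q' :: Q ++ (P ++ [p'])) := by
      rw [List.append_cons]
      exact List.perm_append_comm
    exact ends ⟨hQ.append hP hyx, hperm.nodup h.nodup, fun v => hperm.mem_iff.1 (h.mem v)⟩
      ((sup_adj ..).1 hpq'.symm |>.resolve_left fun h => hpq h.symm)
  · exact ends h hyx'.symm

end ListPaths

/-! ### Ryjáček's closure -/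

section Closure

variable {V : Type*} {G G' H : SimpleGraph V} {a b s t u v x y z : V}

lemma clawFree_iff : ClawFree G ↔ ∀ x a b c, G.Adj x a → G.Adj x b → G.Adj x c →
    a ≠ b → a ≠ c → b ≠ c → G.Adj a b ∨ G.Adj a c ∨ G.Adj b c := by
  constructor
  · intro h x a b c hxa hxb hxc hab hac hbc
    by_contra! hn
    refine h ⟨Sum.elim (fun _ => x) ![a, b, c], ?_, ?_⟩
    · have hleaf : Function.Injective ![a, b, c] := by
        intro i j hij
        fin_cases i <;> fin_cases j <;> simp_all
      refine Function.injective_of_subsingleton _ |>.sumElim hleaf fun _ j => ?_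
      fin_cases j
      exacts [hxa.ne, hxb.ne, hxc.ne]
    · rintro (i | i) (j | j) <;> fin_cases i <;> fin_cases j <;>
        simp [hxa, hxb, hxc, hxa.symm, hxb.symm, hxc.symm, hn, G.adj_comm b a, G.adj_comm c a,
          G.adj_comm c b]
  · rintro h ⟨f, hf, hadj⟩
    have centre (i : Fin 3) : G.Adj (f (.inl 0)) (f (.inr i)) := (hadj _ _).1 (by simp)
    have leaves (i j : Fin 3) : ¬ G.Adj (f (.inr i)) (f (.inr j)) := mt (hadj _ _).2 (by simp)
    have ne {i j : Fin 3} (hij : i ≠ j) : f (.inr i) ≠ f (.inr j) :=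
      hf.ne (Sum.inr_injective.ne hij)
    obtain h | h | h := h _ _ _ _ (centre 0) (centre 1) (centre 2) (ne (by decide))
      (ne (by decide)) (ne (by decide))
    all_goals exact leaves _ _ h

/-- The graph obtained from `G` by joining any two distinct neighbours of `x`. -/
def localCompletion (G : SimpleGraph V) (x : V) : SimpleGraph V :=
  G ⊔ fromRel fun u v => G.Adj x u ∧ G.Adj x v

lemma localCompletion_adj :
    (localCompletion G x).Adj u v ↔ G.Adj u v ∨ u ≠ v ∧ G.Adj x u ∧ G.Adj x v := by
  simp only [localCompletion, sup_adj, fromRel_adj]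
  tauto

lemma le_localCompletion : G ≤ localCompletion G x := le_sup_left

lemma IsNear.mono (h : IsNear G a b z) (hle : G ≤ H) : IsNear H a b z :=
  h.imp_right <| Or.imp_right <| Or.imp (hle ·) (hle ·)

lemma isNear_of_clawFree (hc : ClawFree G) (ha : G.Adj x a) (hb : G.Adj x b) (hab : a ≠ b)
    (hn : ¬ G.Adj a b) (hz : G.Adj x z) : IsNear G a b z := by
  by_contra! h
  simp only [IsNear, not_or] at h
  have := clawFree_iff.1 hc x z a b hz ha hb h.1 h.2.1 hab
  tauto

/-- A graph between `G` and its local completion at `x` that is edge-maximal without a hamiltonian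
cycle; `maximal` records what maximality is used for. -/
structure IsMaximalPartialCompletion (G : SimpleGraph V) (x : V) (H : SimpleGraph V) : Prop where
  le : G ≤ H
  le_localCompletion : H ≤ localCompletion G x
  not_hasHamiltonianList : ¬ HasHamiltonianList H
  maximal : ∀ a b, G.Adj x a → G.Adj x b → a ≠ b → ¬ H.Adj a b → ∃ l, IsHamiltonianList H l a b

lemma exists_isMaximalPartialCompletion [Fintype V] (hV : 3 ≤ Fintype.card V)
    (hG : ¬ HasHamiltonianList G) (x : V) : ∃ H, IsMaximalPartialCompletion G x H := by
  obtain ⟨H, ⟨hle, hlc, hH⟩, hmax⟩ := Set.Finite.exists_maximal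
    (s := {H : SimpleGraph V | G ≤ H ∧ H ≤ localCompletion G x ∧ ¬ HasHamiltonianList H})
    (Set.toFinite _) ⟨G, le_rfl, le_localCompletion, hG⟩
  refine ⟨H, hle, hlc, hH, fun a b ha hb hab hn => ?_⟩
  refine exists_isHamiltonianList_of_sup_edge hV hH (not_not.1 fun hnot => hn ?_)
  refine hmax (y := H ⊔ edge a b) ⟨hle.trans le_sup_left, sup_le hlc ?_, hnot⟩ le_sup_left
    (by simp [edge_adj, hab])
  exact (edge_le_iff _).2 (.inr (localCompletion_adj.2 (.inr ⟨hab, ha, hb⟩)))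

namespace IsMaximalPartialCompletion

lemma adj_centre (h : IsMaximalPartialCompletion G x H) (hz : H.Adj x z) : G.Adj x z :=
  (localCompletion_adj.1 (h.le_localCompletion hz)).resolve_right fun hx => hx.2.1.ne rfl

lemma adj_or (h : IsMaximalPartialCompletion G x H) (hyz : H.Adj y z) :
    G.Adj x z ∨ G.Adj y z :=
  (localCompletion_adj.1 (h.le_localCompletion hyz)).symm.imp_left fun hx => hx.2.2

lemma adj_of_common (h : IsMaximalPartialCompletion G x H) (hc : ClawFree G) (ha : G.Adj x a)
    (hb : G.Adj x b) (hab : a ≠ b) (hy : G.Adj x y) (hya : G.Adj y a) (hyb : G.Adj y b) :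
    H.Adj a b := by
  by_contra hn
  have hn' : ¬ G.Adj a b := fun hab => hn (h.le hab)
  obtain ⟨l, hl⟩ := h.maximal a b ha hb hab hn
  refine h.not_hasHamiltonianList (hl.hasHamiltonianList_of_adj (h.le ha) (h.le hb) (h.le hya)
    (h.le hyb) (h.le hy)
    (fun z hz => (isNear_of_clawFree hc ha hb hab hn' (h.adj_centre hz)).mono h.le) fun z hz => ?_)
  obtain hxz | hyz := h.adj_or hz
  · exact (isNear_of_clawFree hc ha hb hab hn' hxz).mono h.le
  · exact (isNear_of_clawFree hc hya hyb hab hn' hyz).mono h.le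

lemma isNear_or (h : IsMaximalPartialCompletion G x H) (hc : ClawFree G) (ha : G.Adj x a)
    (hb : G.Adj x b) (hab : a ≠ b) (hn : ¬ G.Adj a b) (ht : G.Adj x t) (hsa : G.Adj s a)
    (hst : G.Adj s t) (hta : t ≠ a) (hnta : ¬ G.Adj t a) (hz : H.Adj s z) :
    IsNear H a b z ∨ ¬ G.Adj x z ∧ z ≠ x ∧ G.Adj s z ∧ G.Adj t z := by
  by_cases hxz : G.Adj x z
  · exact .inl ((isNear_of_clawFree hc ha hb hab hn hxz).mono h.le)
  by_cases hzx : z = x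
  · exact .inl (.inr (.inr (.inl (h.le (hzx ▸ ha)))))
  have hsz := (h.adj_or hz).resolve_left hxz
  by_cases hza : z = a
  · exact .inl (.inl hza)
  obtain hza | hzt | hat := clawFree_iff.1 hc s z a t hsz hsa hst hza
    (fun hzt => hxz (hzt ▸ ht)) hta.symm
  · exact .inl (.inr (.inr (.inl (h.le hza))))
  · exact .inr ⟨hxz, hzx, hsz, hzt.symm⟩
  · exact absurd hat.symm hnta

lemma not_adj_of_bridge (h : IsMaximalPartialCompletion G x H) (hc : ClawFree G) (ha : G.Adj x a)
    (hb : G.Adj x b) (hab : a ≠ b) (hn : ¬ H.Adj a b) (hs : G.Adj x s) (ht : G.Adj x t)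
    (hsa : G.Adj s a) (htb : G.Adj t b) : ¬ G.Adj s t := by
  intro hst
  have hn' : ¬ G.Adj a b := fun hab => hn (h.le hab)
  have hnsb : ¬ G.Adj s b := fun hsb => hn (h.adj_of_common hc ha hb hab hs hsa hsb)
  have hnta : ¬ G.Adj t a := fun hta => hn (h.adj_of_common hc ha hb hab ht hta htb)
  have hsb : s ≠ b := by rintro rfl; exact hn' hsa.symm
  have hta : t ≠ a := by rintro rfl; exact hn' htb
  obtain ⟨l, hl⟩ := h.maximal a b ha hb hab hn
  have T : IsSharedTriangle H a b x s t
      fun z => ¬ G.Adj x z ∧ z ≠ x ∧ G.Adj s z ∧ G.Adj t z := by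
    refine ⟨⟨h.le ha, h.le hsa, h.adj_of_common hc ht ha hta hs hst hsa⟩,
      ⟨h.le hb, h.adj_of_common hc hs hb hsb ht hst.symm htb, h.le htb⟩,
      ⟨h.le hs, h.le ht, h.le hst⟩,
      fun z hz => (isNear_of_clawFree hc ha hb hab hn' (h.adj_centre hz)).mono h.le,
      fun z hz => h.isNear_or hc ha hb hab hn' ht hsa hst hta hnta hz, fun z hz => ?_, ?_⟩
    · refine (h.isNear_or hc hb ha hab.symm (fun h => hn' h.symm) hs htb hst.symm hsb hnsb hz).imp
        (·.symm) ?_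
      tauto
    · rintro z w ⟨hxz, hzx, hsz, -⟩ ⟨hxw, hwx, hsw, -⟩ hzw
      obtain hadj | hadj | hadj := clawFree_iff.1 hc s x z w hs.symm hsz hsw hzx.symm hwx.symm hzw
      exacts [absurd hadj hxz, absurd hadj hxw, h.le hadj]
  exact h.not_hasHamiltonianList (T.hasHamiltonianList hl)

end IsMaximalPartialCompletion

/-- Two vertices `a`, `b` whose closed neighbourhoods partition `S` are joined by a path
`a - s - t - b` as soon as some path `u - y - v` in `S` meets both neighbourhoods. -/
lemma exists_bridge {S : V → Prop} (hu : S u) (hy : S y) (hv : S v) (huy : G.Adj u y)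
    (hyv : G.Adj y v) (ha : IsNear G u v a) (hb : IsNear G u v b) (hSa : S a) (hSb : S b)
    (hS : ∀ z, S z → IsNear G a b z) (hab : a ≠ b) (hn : ¬ G.Adj a b)
    (hcom : ∀ z, S z → ¬ (G.Adj z a ∧ G.Adj z b)) :
    ∃ s t, S s ∧ S t ∧ G.Adj s a ∧ G.Adj t b ∧ G.Adj s t := by
  by_contra! hno
  have not_both (z) (hz : S z) (ha : z = a ∨ G.Adj z a) (hb : z = b ∨ G.Adj z b) : False := by
    grind [G.adj_comm a b]
  have no_edge (s t) (hs : S s) (ht : S t) (ha : s = a ∨ G.Adj s a) (hb : t = b ∨ G.Adj t b) :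
      ¬ G.Adj s t := by
    rintro hst
    obtain rfl | ha := ha <;> obtain rfl | hb := hb
    exacts [hn hst, hcom t ht ⟨hst.symm, hb⟩, hcom s hs ⟨ha, hst⟩, hno s t hs ht ha hb hst]
  have side (z) (hz : S z) : (z = a ∨ G.Adj z a) ∨ (z = b ∨ G.Adj z b) := by
    have := hS z hz
    unfold IsNear at this
    tauto
  obtain hya | hyb := side y hy
  · have hua := (side u hu).resolve_right fun h => no_edge y u hy hu hya h huy.symm
    have hva := (side v hv).resolve_right fun h => no_edge y v hy hv hya h hyv
    obtain rfl | rfl | h | h := hb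
    exacts [not_both _ hu hua (.inl rfl), not_both _ hv hva (.inl rfl),
      no_edge _ _ hu hSb hua (.inl rfl) h.symm, no_edge _ _ hv hSb hva (.inl rfl) h.symm]
  · have hub := (side u hu).resolve_left fun h => no_edge u y hu hy h hyb huy
    have hvb := (side v hv).resolve_left fun h => no_edge v y hv hy h hyb hyv.symm
    obtain rfl | rfl | h | h := ha
    exacts [not_both _ hu (.inl rfl) hub, not_both _ hv (.inl rfl) hvb,
      no_edge _ _ hSa hu (.inl rfl) hub h, no_edge _ _ hSa hv (.inl rfl) hvb h]

lemma not_hasHamiltonianList_localCompletion [Fintype V] (hV : 3 ≤ Fintype.card V)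
    (hc : ClawFree G) (hu : G.Adj x u) (hy : G.Adj x y) (hv : G.Adj x v) (huv : u ≠ v)
    (hn : ¬ G.Adj u v) (huy : G.Adj u y) (hyv : G.Adj y v) (hG : ¬ HasHamiltonianList G) :
    ¬ HasHamiltonianList (localCompletion G x) := by
  obtain ⟨H, hH⟩ := exists_isMaximalPartialCompletion hV hG x
  suffices hle : localCompletion G x ≤ H from
    le_antisymm hle hH.le_localCompletion ▸ hH.not_hasHamiltonianList
  intro a b hab
  obtain hab | ⟨hab, ha, hb⟩ := localCompletion_adj.1 hab
  · exact hH.le hab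
  by_contra hnab
  obtain ⟨s, t, hs, ht, hsa, htb, hst⟩ := exists_bridge (S := G.Adj x) hu hy hv huy hyv
    (isNear_of_clawFree hc hu hv huv hn ha) (isNear_of_clawFree hc hu hv huv hn hb) ha hb
    (fun z => isNear_of_clawFree hc ha hb hab fun h => hnab (hH.le h)) hab (fun h => hnab (hH.le h))
    fun z hz h => hnab (hH.adj_of_common hc ha hb hab hz h.1 h.2)
  exact hH.not_adj_of_bridge hc ha hb hab hnab hs ht hsa htb hst

lemma clawFree_localCompletion (hc : ClawFree G) (x : V) : ClawFree (localCompletion G x) := by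
  rw [clawFree_iff] at hc ⊢
  intro y a b c hya hyb hyc hab hac hbc
  -- A claw of the completion with a new edge `ya` yields the claw `y; x, b, c` of `G`.
  have old_edge {a b c} (hya : (localCompletion G x).Adj y a)
      (hyb : (localCompletion G x).Adj y b)
      (hyc : (localCompletion G x).Adj y c) (hab : a ≠ b) (hac : a ≠ c) (hbc : b ≠ c)
      (h : ¬ ((localCompletion G x).Adj a b ∨ (localCompletion G x).Adj a c ∨
        (localCompletion G x).Adj b c)) : G.Adj y a := by
    simp only [localCompletion_adj] at hya hyb hyc h
    refine hya.resolve_right fun hx => ?_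
    have hxb : x ≠ b := by rintro rfl; exact h (.inl (.inl hx.2.2.symm))
    have hxc : x ≠ c := by rintro rfl; exact h (.inr (.inl (.inl hx.2.2.symm)))
    have hclaw (hyb hyc) := hc y x b c hx.2.1.symm hyb hyc hxb hxc hbc
    tauto
  by_contra hn
  have hya' := old_edge hya hyb hyc hab hac hbc hn
  have hyb' := old_edge hyb hya hyc hab.symm hbc hac (by grind [SimpleGraph.adj_comm])
  have hyc' := old_edge hyc hya hyb hac.symm hbc.symm hab (by grind [SimpleGraph.adj_comm])
  exact hn ((hc y a b c hya' hyb' hyc' hab hac hbc).imp (le_localCompletion ·)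
    (Or.imp (le_localCompletion ·) (le_localCompletion ·)))

/-- The common closed neighbourhood of `u` and `v`. When `G` is locally closed and `u`, `v` are
adjacent, this is the maximal clique through the edge `uv`. -/
def commonNbhd (G : SimpleGraph V) (u v : V) : Set V :=
  {z | (z = u ∨ G.Adj u z) ∧ (z = v ∨ G.Adj v z)}

/-- Every cut separating the ends of an edge `uv` of `G'` is crossed by an edge of `G` inside the
common closed `G'`-neighbourhood of `u` and `v`. -/
def CutByCommonEdge (G G' : SimpleGraph V) : Prop :=
  ∀ u v, G'.Adj u v → ∀ X : Set V, u ∈ X → v ∉ X →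
    ∃ a ∈ X, ∃ b ∉ X, G.Adj a b ∧ a ∈ commonNbhd G' u v ∧ b ∈ commonNbhd G' u v

lemma CutByCommonEdge.refl : CutByCommonEdge G G := fun u v h _ hu hv =>
  ⟨u, hu, v, hv, h, ⟨.inl rfl, .inr h.symm⟩, ⟨.inr h, .inl rfl⟩⟩

lemma CutByCommonEdge.localCompletion (h : CutByCommonEdge G G') (x : V) :
    CutByCommonEdge G (localCompletion G' x) := by
  have up {a u : V} (h : a = u ∨ G'.Adj u a) :
      a = u ∨ (Broersma.localCompletion G' x).Adj u a := h.imp_right (le_localCompletion ·)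
  have near {a u : V} (h : a = x ∨ G'.Adj x a) (hu : G'.Adj x u) :
      a = u ∨ (Broersma.localCompletion G' x).Adj u a := by
    rw [localCompletion_adj]
    grind [G'.adj_comm x u]
  intro u v huv X hu hv
  obtain huv | ⟨-, hxu, hxv⟩ := localCompletion_adj.1 huv
  · obtain ⟨a, ha, b, hb, hab, ⟨hua, hva⟩, hub, hvb⟩ := h u v huv X hu hv
    exact ⟨a, ha, b, hb, hab, ⟨up hua, up hva⟩, ⟨up hub, up hvb⟩⟩
  · by_cases hx : x ∈ X
    · obtain ⟨a, ha, b, hb, hab, ⟨hxa, hva⟩, hxb, hvb⟩ := h x v hxv X hx hv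
      exact ⟨a, ha, b, hb, hab, ⟨near hxa hxu, up hva⟩, ⟨near hxb hxu, up hvb⟩⟩
    · obtain ⟨a, ha, b, hb, hab, ⟨hua, hxa⟩, hub, hxb⟩ := h u x hxu.symm X hu hx
      exact ⟨a, ha, b, hb, hab, ⟨up hua, near hxa hxv⟩, ⟨up hub, near hxb hxv⟩⟩

/-- Every vertex neighbourhood of `G` is a disjoint union of cliques. -/
def LocallyClosed (G : SimpleGraph V) : Prop :=
  ∀ x u y v, G.Adj x u → G.Adj x y → G.Adj x v → u ≠ v → G.Adj u y → G.Adj y v → G.Adj u v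

lemma exists_locallyClosed [Fintype V] (hV : 3 ≤ Fintype.card V) (hc : ClawFree G)
    (hG : ¬ HasHamiltonianList G) : ∃ G', G ≤ G' ∧ ClawFree G' ∧ ¬ HasHamiltonianList G' ∧
      CutByCommonEdge G G' ∧ LocallyClosed G' := by
  obtain ⟨H, ⟨hle, hcH, hH, hcut⟩, hmax⟩ := Set.Finite.exists_maximal
    (s := {H | G ≤ H ∧ ClawFree H ∧ ¬ HasHamiltonianList H ∧ CutByCommonEdge G H})
    (Set.toFinite _) ⟨G, le_rfl, hc, hG, .refl⟩
  refine ⟨H, hle, hcH, hH, hcut, fun x u y v hu hy hv huv huy hyv => ?_⟩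
  by_contra hn
  have hmem := hmax (y := localCompletion H x) ⟨hle.trans le_localCompletion,
    clawFree_localCompletion hcH x,
    not_hasHamiltonianList_localCompletion hV hcH hu hy hv huv hn huy hyv hH,
    hcut.localCompletion x⟩ le_localCompletion
  exact hn (hmem (localCompletion_adj.2 (.inr ⟨huv, hu, hv⟩)))

end Closure

/-! ### Locally closed claw-free graphs are line graphs -/

section LineGraphs

variable {V K : Type*} {G : SimpleGraph V} {φ : V → Sym2 K} {u v w z z' : V}

/-- `φ` represents `G` as the line graph of a triangle-free graph on `K` with edges `φ v`. Triangle-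
freeness is expressed by `mem_of_mem_commonNbhd`: a vertex of `G` adjacent to two edges that meet in
`k` is itself an edge at `k`. -/
structure IsLineGraphRep (G : SimpleGraph V) (φ : V → Sym2 K) : Prop where
  loopless : ∀ v, ¬ (φ v).IsDiag
  injective : Function.Injective φ
  adj_iff : ∀ u v, G.Adj u v ↔ u ≠ v ∧ ∃ k ∈ φ u, k ∈ φ v
  mem_of_mem_commonNbhd : ∀ u v w k, u ≠ v → k ∈ φ u → k ∈ φ v → w ∈ commonNbhd G u v → k ∈ φ w

lemma commonNbhd_comm (G : SimpleGraph V) (u w : V) : commonNbhd G u w = commonNbhd G w u :=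
  Set.ext fun _ => and_comm

lemma left_mem_commonNbhd (h : G.Adj u w) : u ∈ commonNbhd G u w := ⟨.inl rfl, .inr h.symm⟩

lemma right_mem_commonNbhd (h : G.Adj u w) : w ∈ commonNbhd G u w := ⟨.inr h, .inl rfl⟩

lemma LocallyClosed.adj_of_mem_commonNbhd (hc : LocallyClosed G) (huw : G.Adj u w)
    (hz : z ∈ commonNbhd G u w) (hz' : z' ∈ commonNbhd G u w) (hne : z ≠ z') : G.Adj z z' := by
  obtain ⟨rfl | huz, hwz⟩ := hz <;> obtain ⟨rfl | huz', hwz'⟩ := hz'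
  · exact absurd rfl hne
  · exact huz'
  · exact huz.symm
  obtain rfl | hwz := hwz
  · exact hwz'.resolve_left hne.symm
  obtain rfl | hwz' := hwz'
  · exact hwz.symm
  exact hc u z w z' huz huw huz' hne hwz.symm hwz'

lemma LocallyClosed.commonNbhd_eq (hc : LocallyClosed G) (huw : G.Adj u w)
    (hv : v ∈ commonNbhd G u w) (hne : v ≠ u) : commonNbhd G u v = commonNbhd G u w := by
  have huv : G.Adj u v := hv.1.resolve_left hne
  have hw : w ∈ commonNbhd G u v := ⟨.inr huw, hv.2.imp Eq.symm SimpleGraph.Adj.symm⟩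
  refine Set.ext fun z => ⟨fun hz => ⟨hz.1, ?_⟩, fun hz => ⟨hz.1, ?_⟩⟩
  · exact or_iff_not_imp_left.2 fun h => hc.adj_of_mem_commonNbhd huv hw hz (Ne.symm h)
  · exact or_iff_not_imp_left.2 fun h => hc.adj_of_mem_commonNbhd huw hv hz (Ne.symm h)

/-- `e` is a possible edge representing `v`: its labels are the maximal cliques through `v`, filled
up by the private label `Sum.inr v` when there is only one such clique. -/
structure IsCliqueLabel (G : SimpleGraph V) (v : V) (e : Sym2 (Set V ⊕ V)) : Prop where
  loopless : ¬ e.IsDiag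
  inl_mem_iff : ∀ C, Sum.inl C ∈ e ↔ ∃ w, G.Adj v w ∧ C = commonNbhd G v w
  eq_of_inr_mem : ∀ x, Sum.inr x ∈ e → x = v

lemma LocallyClosed.exists_isCliqueLabel (hc : LocallyClosed G) (hclaw : ClawFree G)
    (hv : ∃ w, G.Adj v w) : ∃ e, IsCliqueLabel G v e := by
  by_cases h : ∃ a b, G.Adj v a ∧ G.Adj v b ∧ a ≠ b ∧ ¬ G.Adj a b
  · obtain ⟨a, b, hva, hvb, hab, hn⟩ := h
    refine ⟨s(.inl (commonNbhd G v a), .inl (commonNbhd G v b)), ?_, fun C => ?_, by simp⟩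
    · simp only [Sym2.mk_isDiag_iff, Sum.inl.injEq]
      intro heq
      have hb : b ∈ commonNbhd G v a := heq ▸ right_mem_commonNbhd hvb
      exact hn (hb.2.resolve_left hab.symm)
    · simp only [Sym2.mem_iff, Sum.inl.injEq]
      refine ⟨?_, ?_⟩
      · rintro (rfl | rfl)
        exacts [⟨a, hva, rfl⟩, ⟨b, hvb, rfl⟩]
      · rintro ⟨w, hw, rfl⟩
        have hcases : w ∈ commonNbhd G v a ∨ w ∈ commonNbhd G v b := by
          have hclaw := clawFree_iff.1 hclaw v w a b hw hva hvb
          grind [commonNbhd, SimpleGraph.adj_comm]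
        exact hcases.imp (hc.commonNbhd_eq hva · hw.ne') (hc.commonNbhd_eq hvb · hw.ne')
  · push Not at h
    obtain ⟨a, hva⟩ := hv
    refine ⟨s(.inl (commonNbhd G v a), .inr v), by simp, fun C => ?_, by simp⟩
    simp only [Sym2.mem_iff, Sum.inl.injEq, reduceCtorEq, or_false]
    refine ⟨fun hC => ⟨a, hva, hC⟩, ?_⟩
    rintro ⟨w, hw, rfl⟩
    refine hc.commonNbhd_eq hva ⟨.inr hw, ?_⟩ hw.ne'
    exact or_iff_not_imp_left.2 fun hwa => h a w hva hw (Ne.symm hwa)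

lemma IsCliqueLabel.mem_of_inl_mem {e : Sym2 (Set V ⊕ V)} (h : IsCliqueLabel G v e) {C : Set V}
    (hC : .inl C ∈ e) : v ∈ C := by
  obtain ⟨w, hw, rfl⟩ := (h.inl_mem_iff C).1 hC
  exact left_mem_commonNbhd hw

lemma LocallyClosed.eq_inl_of_shared_label (hc : LocallyClosed G) {e f : Sym2 (Set V ⊕ V)}
    (he : IsCliqueLabel G u e) (hf : IsCliqueLabel G v f) (huv : u ≠ v) {k : Set V ⊕ V}
    (hke : k ∈ e) (hkf : k ∈ f) : G.Adj u v ∧ k = .inl (commonNbhd G u v) := by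
  obtain C | x := k
  · have hvC := hf.mem_of_inl_mem hkf
    have huC := he.mem_of_inl_mem hke
    obtain ⟨w, hw, rfl⟩ := (he.inl_mem_iff C).1 hke
    exact ⟨hc.adj_of_mem_commonNbhd hw huC hvC huv, by rw [hc.commonNbhd_eq hw hvC huv.symm]⟩
  · exact absurd ((he.eq_of_inr_mem x hke).symm.trans (hf.eq_of_inr_mem x hkf)) huv

theorem LocallyClosed.exists_isLineGraphRep (hc : LocallyClosed G) (hclaw : ClawFree G)
    (hG : ∀ v, ∃ w, G.Adj v w) : ∃ φ : V → Sym2 (Set V ⊕ V), IsLineGraphRep G φ := by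
  choose φ hφ using fun v => hc.exists_isCliqueLabel hclaw (hG v)
  have shared_label {u v k} (huv : u ≠ v) (hu : k ∈ φ u) (hv : k ∈ φ v) :=
    hc.eq_inl_of_shared_label (hφ u) (hφ v) huv hu hv
  have label_mem {u v} (huv : G.Adj u v) : Sum.inl (commonNbhd G u v) ∈ φ u :=
    ((hφ u).inl_mem_iff _).2 ⟨v, huv, rfl⟩
  refine ⟨φ, fun v => (hφ v).loopless, fun u v heq => ?_, fun u v => ⟨fun huv => ?_, ?_⟩,
    fun u v w k huv hu hv hw => ?_⟩
  · by_contra huv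
    have hconst : ∀ k ∈ φ u, k = .inl (commonNbhd G u v) := fun k hk =>
      (shared_label huv hk (heq ▸ hk)).2
    have hd := (hφ u).loopless
    revert hconst hd
    induction φ u with | _ a b => simp +contextual
  · exact ⟨huv.ne, _, label_mem huv, commonNbhd_comm G v u ▸ label_mem huv.symm⟩
  · rintro ⟨huv, k, hu, hv⟩
    exact (shared_label huv hu hv).1
  · obtain ⟨hadj, rfl⟩ := shared_label huv hu hv
    by_cases hwu : w = u
    · rwa [hwu]
    · rw [← hc.commonNbhd_eq hadj hw hwu, commonNbhd_comm]
      exact label_mem (hw.1.resolve_left hwu).symm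

end LineGraphs

/-! ### From dominating closed trails to hamiltonian cycles -/

section Tours

variable {V K : Type*} {G : SimpleGraph V} {φ : V → Sym2 K} {D D' : K → V → K → Prop}
  {j k k' k'' : K} {L L' : List (V × K)} {v : V} {S : Finset (Sym2 K)} {U : Set K}

/-- `L` lists the steps of a route from `k` to `k'`: an entry `(v, j)` moves from the current label
`i` to the label `j` through the vertex `v`, subject to `D i v j`. -/
inductive Route (D : K → V → K → Prop) : K → List (V × K) → K → Prop
  | nil (k : K) : Route D k [] k
  | cons {k j k' : K} {v : V} {L : List (V × K)} :
    D k v j → Route D j L k' → Route D k ((v, j) :: L) k'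

namespace Route

lemma append (h : Route D k L k') (h' : Route D k' L' k'') : Route D k (L ++ L') k'' := by
  induction h with
  | nil => exact h'
  | cons d _ ih => exact .cons d (ih h')

lemma split (h : Route D k L k') (hj : j ∈ k :: L.map Prod.snd) :
    ∃ L₁ L₂, L = L₁ ++ L₂ ∧ Route D k L₁ j ∧ Route D j L₂ k' := by
  induction h with
  | nil k =>
    obtain rfl : j = k := by simpa using hj
    exact ⟨[], [], rfl, .nil _, .nil _⟩
  | @cons k i k' v L d h ih =>
    obtain rfl | hj := List.mem_cons.1 hj
    · exact ⟨[], _, rfl, .nil _, .cons d h⟩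
    · obtain ⟨L₁, L₂, rfl, h₁, h₂⟩ := ih hj
      exact ⟨(v, i) :: L₁, L₂, rfl, .cons d h₁, h₂⟩

lemma mono (hD : ∀ k v j, D k v j → D' k v j) (h : Route D k L k') : Route D' k L k' := by
  induction h with
  | nil => exact .nil _
  | cons d _ ih => exact .cons (hD _ _ _ d) ih

lemma isListWalk (hR : IsLineGraphRep G φ) (h : Route (fun k v j => k ∈ φ v ∧ j ∈ φ v) k L k')
    (hL : L ≠ []) (hnd : (L.map Prod.fst).Nodup) :
    ∃ a b, IsListWalk G (L.map Prod.fst) a b ∧ k ∈ φ a ∧ k' ∈ φ b := by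
  induction h with
  | nil => exact absurd rfl hL
  | @cons k i k' v L d h ih =>
    by_cases hLnil : L = []
    · subst hLnil
      cases h
      exact ⟨v, v, .singleton v, d⟩
    · simp only [List.map_cons, List.nodup_cons] at hnd
      obtain ⟨a, b, hwalk, ha, hb⟩ := ih hLnil hnd.2
      refine ⟨v, b, (IsListWalk.singleton v).append hwalk ((hR.adj_iff v a).2 ⟨?_, i, d.2, ha⟩),
        d.1, hb⟩
      exact fun hva => hnd.1 (hva ▸ hwalk.left_mem)

end Route

/-- `L` lists the steps of a trail from `k` to `k'` in the graph with edge set `S`. -/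
structure IsTrail (φ : V → Sym2 K) (S : Finset (Sym2 K)) (k : K) (L : List (V × K)) (k' : K) :
    Prop where
  route : Route (fun k v j => φ v = s(k, j)) k L k'
  nodup : (L.map Prod.fst).Nodup
  mem : ∀ v ∈ L.map Prod.fst, φ v ∈ S

namespace IsTrail

lemma append_edge (h : IsTrail φ S k L k') (hS : φ v ∈ S) (hv : v ∉ L.map Prod.fst)
    (hφ : φ v = s(k', j)) : IsTrail φ S k (L ++ [(v, j)]) j where
  route := h.route.append (.cons hφ (.nil j))
  nodup := by
    rw [(List.perm_append_singleton (v, j) L).map Prod.fst |>.nodup_iff]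
    exact List.nodup_cons.2 ⟨hv, h.nodup⟩
  mem := by simpa [or_imp, forall_and, hS] using h.mem

lemma rotate (h : IsTrail φ S k L k) (hj : j ∈ k :: L.map Prod.snd) :
    ∃ L', L'.Perm L ∧ IsTrail φ S j L' j := by
  obtain ⟨L₁, L₂, rfl, h₁, h₂⟩ := h.route.split hj
  have hperm : (L₂ ++ L₁).Perm (L₁ ++ L₂) := List.perm_append_comm
  have hfst := hperm.map Prod.fst
  exact ⟨_, hperm, h₂.append h₁, hfst.nodup_iff.2 h.nodup,
    fun v hv => h.mem v (hfst.mem_iff.1 hv)⟩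

lemma end_visited (h : IsTrail φ S k L k') (hv : v ∈ L.map Prod.fst) (hj : j ∈ φ v) :
    j ∈ k :: L.map Prod.snd := by
  have hroute := h.route
  clear h
  induction hroute with
  | nil => simp at hv
  | @cons k i _ w L d _ ih =>
    simp only [List.map_cons, List.mem_cons] at hv ih ⊢
    obtain rfl | hv := hv
    · have := Sym2.mem_iff.1 (d ▸ hj)
      tauto
    · have := ih hv
      tauto

variable [DecidableEq K]

lemma hasOddEnds (hinj : Function.Injective φ) (hd : ∀ v, ¬ (φ v).IsDiag)
    (h : IsTrail φ S k L k') : HasOddEnds ((L.map Prod.fst).map φ).toFinset k k' := by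
  obtain ⟨hroute, hnd, -⟩ := h
  induction hroute with
  | nil => exact .empty _
  | @cons k i k' v L d _ ih =>
    simp only [List.map_cons, List.nodup_cons] at hnd
    have hki : k ≠ i := by
      have := hd v
      rw [d] at this
      simpa using this
    simp only [List.map_cons, List.toFinset_cons, insert_eq, d]
    refine (HasOddEnds.singleton hki).union (ih hnd.2) (disjoint_singleton_left.2 ?_)
    rw [← d, List.mem_toFinset, List.mem_map_of_injective hinj]
    exact hnd.1

lemma exists_extension_of_ne (hR : IsLineGraphRep G φ) (hS : ∀ e ∈ S, ∃ v, φ v = e)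
    (heven : ∀ k, (edgeDegree S k : ZMod 2) = 0) (h : IsTrail φ S k L k') (hne : k' ≠ k) :
    ∃ v j, φ v ∈ S ∧ v ∉ L.map Prod.fst ∧ φ v = s(k', j) := by
  by_contra! hno
  have hdeg : edgeDegree S k' = edgeDegree ((L.map Prod.fst).map φ).toFinset k' := by
    unfold edgeDegree
    congr 1
    ext e
    simp only [mem_filter, and_congr_left_iff, List.mem_toFinset]
    intro hk
    refine ⟨fun he => ?_, fun he => ?_⟩
    · obtain ⟨v, rfl⟩ := hS e he
      obtain ⟨j, hj⟩ := hk
      by_contra hv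
      exact hno v j he (mt List.mem_map_of_mem hv) hj
    · obtain ⟨v, hv, rfl⟩ := List.mem_map.1 he
      exact h.mem v hv
  have hodd := h.hasOddEnds hR.injective hR.loopless k'
  rw [← hdeg, heven k'] at hodd
  simp [hne] at hodd

end IsTrail

lemma exists_longest [Finite V] {P : List (V × K) → Prop} (hP : ∀ L, P L → (L.map Prod.fst).Nodup)
    (hL : ∃ L, P L) : ∃ L, P L ∧ ∀ L', P L' → L'.length ≤ L.length := by
  have hbdd : BddAbove {n | ∃ L, P L ∧ L.length = n} := by
    have := Fintype.ofFinite V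
    refine ⟨Fintype.card V, ?_⟩
    rintro _ ⟨L, hL, rfl⟩
    simpa using (hP L hL).length_le_card
  obtain ⟨L, hL'⟩ := hL
  obtain ⟨M, hM, hlen⟩ := Nat.sSup_mem (s := {n | ∃ L, P L ∧ L.length = n}) ⟨_, L, hL', rfl⟩ hbdd
  exact ⟨M, hM, fun L' h => by rw [hlen]; exact le_csSup hbdd ⟨L', h, rfl⟩⟩

lemma IsClosedTrail.exists_isTrail [Finite V] [DecidableEq K] (hR : IsLineGraphRep G φ)
    (hS : ∀ e ∈ S, ∃ v, φ v = e) (h : IsClosedTrail U S) :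
    ∃ k L, IsTrail φ S k L k ∧ ∀ j ∈ U, j ∈ k :: L.map Prod.snd := by
  obtain ⟨k₀, hk₀⟩ := h.nonempty
  obtain ⟨L, ⟨k, hk, k', hL⟩, hmax⟩ := exists_longest
    (P := fun L => ∃ k ∈ U, ∃ k', IsTrail φ S k L k') (fun L ⟨_, _, _, hL⟩ => hL.nodup)
    ⟨[], k₀, hk₀, k₀, .nil _, by simp, by simp⟩
  have not_extendable {k k' j L' v} (hperm : L'.Perm L) (hk : k ∈ U) (hL' : IsTrail φ S k L' k')
      (hv : φ v ∈ S) (hvL : v ∉ L'.map Prod.fst) : φ v ≠ s(k', j) := fun hφ => by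
    have := hmax _ ⟨k, hk, j, hL'.append_edge hv hvL hφ⟩
    rw [List.length_append, hperm.length_eq, List.length_singleton] at this
    omega
  obtain rfl : k' = k := by
    by_contra hne
    obtain ⟨v, j, hv, hvL, hφ⟩ := hL.exists_extension_of_ne hR hS h.even hne
    exact not_extendable (.refl L) hk hL hv hvL hφ
  refine ⟨k', L, hL, ?_⟩
  by_contra! ⟨b, hbU, hb⟩
  obtain ⟨e, he, a, hae, c, hce, ha, hc⟩ := h.connected {j | j ∈ k' :: L.map Prod.snd}
    ⟨k', hk, List.mem_cons_self⟩ ⟨b, hbU, hb⟩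
  obtain ⟨v, rfl⟩ := hS e he
  obtain ⟨L', hperm, hL'⟩ := hL.rotate ha
  refine not_extendable (j := c) hperm (h.ends_mem _ he a hae) hL' he (fun hv => ?_)
    ((Sym2.mem_and_mem_iff (ne_of_mem_of_not_mem ha hc)).1 ⟨hae, hce⟩)
  exact hc (hL.end_visited ((hperm.map Prod.fst).mem_iff.1 hv) hce)

lemma Route.exists_spanning [Finite V]
    (h : Route (fun k v j => k ∈ φ v ∧ j ∈ φ v) k L k)
    (hnd : (L.map Prod.fst).Nodup) (hU : ∀ j ∈ U, j ∈ k :: L.map Prod.snd)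
    (hdom : ∀ v, ∃ j ∈ φ v, j ∈ U) : ∃ k M, Route (fun k v j => k ∈ φ v ∧ j ∈ φ v) k M k ∧
      (M.map Prod.fst).Nodup ∧ ∀ v, v ∈ M.map Prod.fst := by
  obtain ⟨M, ⟨hM, hMnd, hMU⟩, hmax⟩ := exists_longest
    (P := fun L => Route (fun k v j => k ∈ φ v ∧ j ∈ φ v) k L k ∧ (L.map Prod.fst).Nodup ∧
      ∀ j ∈ U, j ∈ k :: L.map Prod.snd) (fun L hL => hL.2.1) ⟨L, h, hnd, hU⟩
  refine ⟨k, M, hM, hMnd, ?_⟩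
  by_contra! ⟨v, hv⟩
  obtain ⟨j, hj, hjU⟩ := hdom v
  obtain ⟨L₁, L₂, hsplit, h₁, h₂⟩ := hM.split (hMU j hjU)
  have hperm : (L₁ ++ (v, j) :: L₂).Perm ((v, j) :: M) := hsplit ▸ List.perm_middle
  have := hmax (L₁ ++ (v, j) :: L₂) ⟨h₁.append (.cons ⟨hj, hj⟩ h₂), ?_, fun i hi => ?_⟩
  · rw [hperm.length_eq, List.length_cons] at this
    omega
  · rw [(hperm.map Prod.fst).nodup_iff, List.map_cons, List.nodup_cons]
    exact ⟨hv, hMnd⟩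
  · rw [List.mem_cons, (hperm.map Prod.snd).mem_iff]
    exact (List.mem_cons.1 (hMU i hi)).imp_right (List.mem_cons_of_mem _)

theorem HasDominatingClosedTrail.hasHamiltonianList [Fintype V] [DecidableEq K]
    (hR : IsLineGraphRep G φ) (hV : 3 ≤ Fintype.card V)
    (h : HasDominatingClosedTrail (univ.image φ) (univ.image φ)) : HasHamiltonianList G := by
  obtain ⟨U, S, htrail, hS, hdom⟩ := h
  obtain ⟨k, L, hL, hU⟩ := htrail.exists_isTrail hR fun e he => by simpa using hS he
  obtain ⟨k, M, hM, hnd, hall⟩ := (hL.route.mono fun k v j h => by simp [h]).exists_spanning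
    hL.nodup hU fun v => hdom _ (mem_image_of_mem φ (mem_univ v))
  have hlen : 3 ≤ (M.map Prod.fst).length := by
    classical
    refine hV.trans ((Finset.card_le_card fun v _ => ?_).trans
      (List.toFinset_card_le (M.map Prod.fst)))
    exact List.mem_toFinset.2 (hall v)
  obtain ⟨a, b, hwalk, ha, hb⟩ := hM.isListWalk hR (by rintro rfl; simp at hlen) hnd
  refine ⟨_, a, b, ⟨hwalk, hnd, hall⟩, (hR.adj_iff b a).2 ⟨?_, k, hb, ha⟩⟩
  rintro rfl
  obtain ⟨-, hhead, hlast⟩ := hwalk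
  generalize M.map Prod.fst = l at *
  match l, hlen with
  | x :: y :: t, _ =>
    obtain rfl : x = b := by simpa using hhead
    rw [List.getLast?_cons_cons] at hlast
    exact (List.nodup_cons.1 hnd).1 (List.mem_of_getLast? hlast)

end Tours

/-! ### Ears and the existence of near trails -/

section Ears

variable {V K : Type*} {S T : Set (Sym2 K)} {U Z : Set K} {E H P : Finset (Sym2 K)}
  {a b k r k₁ k₂ : K}

lemma cutConnected_iff : CutConnected U S ↔
    ∀ X : Set K, (∀ e ∈ S, ¬ Crosses X e) → ∀ a ∈ U, ∀ b ∈ U, a ∈ X ↔ b ∈ X := by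
  refine ⟨fun h X hX a ha b hb => ?_, fun h X ⟨a, ha, haX⟩ ⟨b, hb, hbX⟩ => ?_⟩
  · by_contra hab
    obtain ⟨e, he, heX⟩ : ∃ e ∈ S, Crosses X e := by
      by_cases haX : a ∈ X
      · exact h X ⟨a, ha, haX⟩ ⟨b, hb, by tauto⟩
      · exact h X ⟨b, hb, by tauto⟩ ⟨a, ha, haX⟩
    exact hX e he heX
  · by_contra! hno
    exact hbX ((h X hno a ha b hb).1 haX)

lemma CutConnected.mono (h : CutConnected U S) (hST : S ⊆ T) : CutConnected U T := fun X ha hb =>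
  let ⟨e, he, heX⟩ := h X ha hb
  ⟨e, hST he, heX⟩

lemma CutConnected.union (hU : CutConnected U S) (hZ : CutConnected Z S) (hkU : k ∈ U)
    (hkZ : k ∈ Z) : CutConnected (U ∪ Z) S := by
  rw [cutConnected_iff] at *
  intro X hX
  have hconst : ∀ a ∈ U ∪ Z, a ∈ X ↔ k ∈ X := by
    rintro a (ha | ha)
    exacts [hU X hX a ha k hkU, hZ X hX a ha k hkZ]
  exact fun a ha b hb => (hconst a ha).trans (hconst b hb).symm

lemma cutConnected_pair (h : s(a, b) ∈ S) : CutConnected {a, b} S := by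
  rw [cutConnected_iff]
  intro X hX
  have hab := not_crosses_mk.1 (hX _ h)
  rintro _ (rfl | rfl) _ (rfl | rfl) <;> tauto

variable [DecidableEq K]

lemma hasOddEnds_edges_of_isPath {Γ : SimpleGraph K} (p : Γ.Walk a b) (hp : p.IsPath) :
    HasOddEnds p.edges.toFinset a b := by
  induction p with
  | nil => exact .empty _
  | @cons a c b h p ih =>
    rw [SimpleGraph.Walk.cons_isPath_iff] at hp
    rw [SimpleGraph.Walk.edges_cons, List.toFinset_cons, insert_eq]
    refine (HasOddEnds.singleton h.ne).union (ih hp.1) (disjoint_singleton_left.2 fun hac => ?_)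
    exact hp.2 (p.fst_mem_support_of_mem_edges (List.mem_toFinset.1 hac))

lemma cutConnected_support {Γ : SimpleGraph K} (p : Γ.Walk a b) :
    CutConnected {k | k ∈ p.support} (p.edges.toFinset : Set (Sym2 K)) := by
  induction p with
  | nil => exact cutConnected_iff.2 fun X _ => by simp
  | @cons a c b h p ih =>
    have hsupport : {k | k ∈ (SimpleGraph.Walk.cons h p).support} =
        {a, c} ∪ {k | k ∈ p.support} := by
      ext k
      have hc : c ∈ p.support := p.start_mem_support
      simp only [SimpleGraph.Walk.support_cons, List.mem_cons, Set.mem_ofPred_eq, Set.mem_union,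
        Set.mem_insert_iff, Set.mem_singleton_iff]
      grind
    rw [hsupport]
    refine (cutConnected_pair ?_).union (ih.mono ?_) (Set.mem_insert_of_mem a rfl)
      p.start_mem_support
    · simp
    · intro e he
      simp only [SimpleGraph.Walk.edges_cons, List.coe_toFinset, List.mem_cons] at he ⊢
      exact .inr he

/-- `P` is the edge set of an ear attached to `U`: a path or cycle in `E` from `k₁` to `k₂` all of
whose inner vertices, the elements of `Z`, lie outside `U`. -/
structure IsEar (E : Finset (Sym2 K)) (U : Set K) (k₁ k₂ : K) (Z : Set K)
    (P : Finset (Sym2 K)) : Prop where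
  subset : P ⊆ E
  left_mem : k₁ ∈ U
  right_mem : k₂ ∈ U
  inner_notMem : ∀ k ∈ Z, k ∉ U
  ends_mem : ∀ e ∈ P, ∀ k ∈ e, k ∈ U ∪ Z
  exists_inner : ∀ e ∈ P, ∃ k ∈ e, k ∈ Z
  odd : HasOddEnds P k₁ k₂
  connected : CutConnected (insert k₁ Z) (P : Set (Sym2 K))

lemma IsEar.of_path {Γ : SimpleGraph K} {r₁ r₂ : K} (p : Γ.Walk r₁ r₂) (hp : p.IsPath)
    (hΓE : ∀ e ∈ Γ.edgeSet, e ∈ E) (hpU : ∀ k ∈ p.support, k ∉ U) (h₁ : s(k₁, r₁) ∈ E)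
    (h₂ : s(r₂, k₂) ∈ E) (h₁₂ : s(k₁, r₁) ≠ s(r₂, k₂)) (hk₁ : k₁ ∈ U) (hk₂ : k₂ ∈ U) :
    IsEar E U k₁ k₂ {k | k ∈ p.support} (({s(k₁, r₁)} ∪ p.edges.toFinset) ∪ {s(r₂, k₂)}) := by
  have hr₁ : r₁ ∈ p.support := p.start_mem_support
  have hr₂ : r₂ ∈ p.support := p.end_mem_support
  have inner {e : Sym2 K} (he : e ∈ p.edges) : ∀ k ∈ e, k ∈ p.support := by
    rintro k ⟨j, rfl⟩
    exact p.fst_mem_support_of_mem_edges he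
  have hk₁r₁ : k₁ ≠ r₁ := by rintro rfl; exact hpU _ hr₁ hk₁
  have hr₂k₂ : r₂ ≠ k₂ := by rintro rfl; exact hpU _ hr₂ hk₂
  have h₁p : s(k₁, r₁) ∉ p.edges := fun h => hpU _ (inner h k₁ (Sym2.mem_mk_left ..)) hk₁
  have h₂p : s(r₂, k₂) ∉ p.edges := fun h => hpU _ (inner h k₂ (Sym2.mem_mk_right ..)) hk₂
  refine ⟨fun e he => ?_, hk₁, hk₂, hpU, fun e he k hk => ?_, fun e he => ?_, ?_, ?_⟩
  · simp only [mem_union, mem_singleton, List.mem_toFinset] at he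
    obtain (rfl | he) | rfl := he
    exacts [h₁, hΓE e (p.edges_subset_edgeSet he), h₂]
  · simp only [mem_union, mem_singleton, List.mem_toFinset] at he
    obtain (rfl | he) | rfl := he
    · obtain rfl | rfl := Sym2.mem_iff.1 hk
      exacts [.inl hk₁, .inr hr₁]
    · exact .inr (inner he k hk)
    · obtain rfl | rfl := Sym2.mem_iff.1 hk
      exacts [.inr hr₂, .inl hk₂]
  · simp only [mem_union, mem_singleton, List.mem_toFinset] at he
    obtain (rfl | he) | rfl := he
    · exact ⟨r₁, Sym2.mem_mk_right .., hr₁⟩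
    · exact ⟨_, e.out_fst_mem, inner he _ e.out_fst_mem⟩
    · exact ⟨r₂, Sym2.mem_mk_left .., hr₂⟩
  · refine ((HasOddEnds.singleton hk₁r₁).union (hasOddEnds_edges_of_isPath p hp) ?_).union
      (HasOddEnds.singleton hr₂k₂) ?_
    · simpa using h₁p
    · simpa [h₂p] using h₁₂.symm
  · have hunion : insert k₁ {k | k ∈ p.support} = {k₁, r₁} ∪ {k | k ∈ p.support} := by
      rw [Set.insert_union, Set.singleton_union, Set.insert_eq_of_mem (a := r₁) hr₁]
    rw [hunion]
    exact (cutConnected_pair (by simp)).union ((cutConnected_support p).mono fun e he =>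
      mem_union_left _ (mem_union_right _ he)) (Set.mem_insert_of_mem k₁ rfl) hr₁

namespace IsEar

variable {S : Finset (Sym2 K)}

lemma union_odd (hP : IsEar E U k₁ k₂ Z P) (hS : IsClosedTrail U S) : HasOddEnds (S ∪ P) k₁ k₂ := by
  have heven : HasOddEnds S k₁ k₁ := fun k => by rw [hS.even, CharTwo.add_self_eq_zero]
  refine heven.union hP.odd (disjoint_left.2 fun e heS heP => ?_)
  obtain ⟨k, hk, hkZ⟩ := hP.exists_inner e heP
  exact hP.inner_notMem k hkZ (hS.ends_mem e heS k hk)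

lemma union_ends_mem (hP : IsEar E U k₁ k₂ Z P) (hS : IsClosedTrail U S) :
    ∀ e ∈ S ∪ P, ∀ k ∈ e, k ∈ U ∪ Z := fun e he k hk =>
  (mem_union.1 he).elim (fun he => .inl (hS.ends_mem e he k hk)) (hP.ends_mem e · k hk)

lemma union_connected (hP : IsEar E U k₁ k₂ Z P) (hS : IsClosedTrail U S) :
    CutConnected (U ∪ Z) ((S ∪ P : Finset _) : Set (Sym2 K)) := by
  have hunion : U ∪ Z = U ∪ insert k₁ Z := by
    rw [Set.union_insert, ← Set.insert_union, Set.insert_eq_of_mem hP.left_mem]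
  rw [hunion, coe_union]
  exact (hS.connected.mono Set.subset_union_left).union (hP.connected.mono Set.subset_union_right)
    hP.left_mem (Set.mem_insert k₁ Z)

lemma isClosedTrail (hP : IsEar E U k₁ k₂ Z P) (hS : IsClosedTrail U S) (hk : k₁ = k₂) :
    IsClosedTrail (U ∪ Z) (S ∪ P) where
  nonempty := ⟨k₁, .inl hP.left_mem⟩
  ends_mem := hP.union_ends_mem hS
  even := by
    subst hk
    exact (hP.union_odd hS).even
  connected := hP.union_connected hS

lemma union_twoEdgeConnected [Finite K] (hP : IsEar E U k₁ k₂ Z P) (hS : IsClosedTrail U S)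
    (hd : ∀ e ∈ E, ¬ e.IsDiag) (hSE : S ⊆ E) (g : Sym2 K) :
    CutConnected (U ∪ Z) (((S ∪ P : Finset _) : Set (Sym2 K)) \ {g}) := by
  classical
  intro X hX hXc
  by_contra! hno
  obtain ⟨g', hg', hg'X⟩ := hP.union_connected hS X hX hXc
  have only_g {e} (he : e ∈ S ∪ P) (heX : Crosses X e) : e = g := by
    by_contra hne
    exact hno e ⟨he, hne⟩ heX
  obtain rfl : g' = g := only_g hg' hg'X
  have card_eq_one {F : Finset (Sym2 K)} (hF : F ⊆ S ∪ P) (hg : g' ∈ F) :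
      (#{e ∈ F | Crosses X e} : ZMod 2) = 1 := by
    have : F.filter (Crosses X) = {g'} := by
      ext e
      rw [mem_filter, mem_singleton]
      refine ⟨fun h => only_g (hF h.1) h.2, ?_⟩
      rintro rfl
      exact ⟨hg, hg'X⟩
    rw [this, card_singleton, Nat.cast_one]
  have hodd := (hP.union_odd hS).card_crosses
    (fun e he => hd e (union_subset hSE hP.subset he)) X
  rw [card_eq_one subset_rfl hg'] at hodd
  obtain ⟨e, he, heX⟩ : ∃ e ∈ S, Crosses X e := by
    by_cases h₁ : k₁ ∈ X <;> by_cases h₂ : k₂ ∈ X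
    · simp [h₁, h₂, CharTwo.add_self_eq_zero] at hodd
    · exact hS.connected X ⟨k₁, hP.left_mem, h₁⟩ ⟨k₂, hP.right_mem, h₂⟩
    · exact hS.connected X ⟨k₂, hP.right_mem, h₂⟩ ⟨k₁, hP.left_mem, h₁⟩
    · simp [h₁, h₂] at hodd
  obtain rfl : e = g' := only_g (mem_union_left P he) heX
  have heven : HasOddEnds S k₁ k₁ := fun k => by rw [hS.even, CharTwo.add_self_eq_zero]
  have hcard := heven.card_crosses (fun e he => hd e (hSE he)) X
  rw [card_eq_one subset_union_left he, CharTwo.add_self_eq_zero] at hcard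
  exact one_ne_zero hcard

end IsEar

end Ears

/-! ### Existence of a minimal near trail -/

section TwoConnected

variable {V : Type*} [Fintype V] {G G' : SimpleGraph V} {X : Set V} {a b v : V}

lemma twoConnected_mono (hG : G ≤ G') (h : TwoConnected G) : TwoConnected G' :=
  ⟨h.1, fun v => (h.2 v).mono fun _ _ => @hG _ _⟩

lemma exists_boundary_adj_of_twoConnected (h : TwoConnected G) (hav : a ≠ v) (ha : a ∈ X)
    (hbv : b ≠ v) (hb : b ∉ X) : ∃ x ∈ X, ∃ y ∉ X, y ≠ v ∧ G.Adj x y := by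
  obtain ⟨p⟩ := (h.2 v).preconnected ⟨a, hav⟩ ⟨b, hbv⟩
  obtain ⟨d, -, hd, hd'⟩ := p.exists_boundary_dart (Subtype.val ⁻¹' X) ha hb
  exact ⟨d.fst, hd, d.snd, hd', d.snd.2, d.adj⟩

lemma exists_adj_of_twoConnected (h : TwoConnected G) (v : V) : ∃ w, G.Adj v w := by
  have hV : 3 ≤ ENat.card V := by simpa using h.1
  obtain ⟨x, hxv, -⟩ := ENat.exists_ne_ne_of_three_le hV v v
  obtain ⟨y, hyv, hyx⟩ := ENat.exists_ne_ne_of_three_le hV v x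
  obtain ⟨_, rfl, w, -, -, hvw⟩ :=
    exists_boundary_adj_of_twoConnected h hxv.symm (Set.mem_singleton v) hyx hyv
  exact ⟨w, hvw⟩

end TwoConnected

section DominatedEdges

variable {K : Type*} {E W W' H S : Finset (Sym2 K)} {U Z : Set K} {A B : K}

open scoped Classical in
/-- The edges of `E` dominated by the vertex set `U`, i.e. those with an end in `U`. -/
noncomputable def dominatedEdges (E : Finset (Sym2 K)) (U : Set K) : Finset (Sym2 K) :=
  {e ∈ E | ∃ k ∈ e, k ∈ U}

lemma mem_dominatedEdges {e : Sym2 K} : e ∈ dominatedEdges E U ↔ e ∈ E ∧ ∃ k ∈ e, k ∈ U := by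
  simp [dominatedEdges]

variable [DecidableEq K]

lemma NearTrail.anti (hN : NearTrail E W H U A B) (hW : W' ⊆ W) : NearTrail E W' H U A B where
  __ := hN
  dominated_subset := hW.trans hN.dominated_subset
  dominates e he := hN.dominates e (hW he)

lemma IsEar.nearTrail [Finite K] {k₁ k₂ : K} {P : Finset (Sym2 K)} (hP : IsEar E U k₁ k₂ Z P)
    (hS : IsClosedTrail U S) (hSE : S ⊆ E) (hE : ∀ e ∈ E, ¬ e.IsDiag) (hk : k₁ ≠ k₂) :
    NearTrail E (dominatedEdges E (U ∪ Z)) (S ∪ P) (U ∪ Z) k₁ k₂ where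
  dominated_subset _ he := (mem_dominatedEdges.1 he).1
  subset := union_subset hSE hP.subset
  loopless := hE
  ne := hk
  left_mem := .inl hP.left_mem
  right_mem := .inl hP.right_mem
  ends_mem := hP.union_ends_mem hS
  odd := hP.union_odd hS
  twoEdgeConnected := hP.union_twoEdgeConnected hS hE hSE
  dominates _ he := (mem_dominatedEdges.1 he).2

/-- A closed trail in `E` dominating as many edges of `E` as possible. -/
structure IsMaximalClosedTrail (E : Finset (Sym2 K)) (U : Set K) (S : Finset (Sym2 K)) : Prop
    extends IsClosedTrail U S where
  subset : S ⊆ E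
  card_le : ∀ U' S', IsClosedTrail U' S' → S' ⊆ E → #(dominatedEdges E U') ≤ #(dominatedEdges E U)

lemma isClosedTrail_singleton (k : K) : IsClosedTrail {k} ∅ where
  nonempty := Set.singleton_nonempty k
  ends_mem := by simp
  even := by simp [edgeDegree]
  connected := cutConnected_iff.2 (by simp)

lemma exists_isMaximalClosedTrail [Finite K] [Nonempty K] (E : Finset (Sym2 K)) :
    ∃ U S, IsMaximalClosedTrail E U S := by
  inhabit K
  obtain ⟨⟨U, S⟩, ⟨hUS, hS⟩, hmax⟩ := Set.exists_max_image
    {x : Set K × Finset (Sym2 K) | IsClosedTrail x.1 x.2 ∧ x.2 ⊆ E}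
    (fun x => #(dominatedEdges E x.1))
    (Set.toFinite _) ⟨({default}, ∅), isClosedTrail_singleton default, empty_subset E⟩
  exact ⟨U, S, hUS, hS, fun U' S' hUS' hS' => hmax (U', S') ⟨hUS', hS'⟩⟩

end DominatedEdges

section MinimalNearTrail

variable {V K : Type*} {G : SimpleGraph V} {φ : V → Sym2 K} {R U : Set K} {u v w : V}

lemma IsLineGraphRep.triangleFree (hR : IsLineGraphRep G φ) {a b c : K} (hu : φ u = s(a, b))
    (hv : φ v = s(b, c)) : φ w ≠ s(a, c) := by
  intro hw
  have hab : a ≠ b := by simpa [hu] using hR.loopless u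
  have hbc : b ≠ c := by simpa [hv] using hR.loopless v
  have hac : a ≠ c := by simpa [hw] using hR.loopless w
  have adj_of_mem {x y : V} {k : K} (hxy : φ x ≠ φ y) (hx : k ∈ φ x) (hy : k ∈ φ y) : G.Adj x y :=
    (hR.adj_iff x y).2 ⟨fun h => hxy (h ▸ rfl), k, hx, hy⟩
  have huv : φ u ≠ φ v := by grind [Sym2.eq_iff]
  have hmem : b ∈ φ w := by
    refine hR.mem_of_mem_commonNbhd u v w b (fun h => huv (h ▸ rfl)) (by simp [hu]) (by simp [hv])
      ⟨.inr (adj_of_mem (k := a) ?_ (by simp [hu]) (by simp [hw])),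
        .inr (adj_of_mem (k := c) ?_ (by simp [hv]) (by simp [hw]))⟩
    · grind [Sym2.eq_iff]
    · grind [Sym2.eq_iff]
  rw [hw, Sym2.mem_iff] at hmem
  exact hmem.elim hab.symm hbc

/-- The graph on `K` whose edges are the `φ x` with both ends outside `U`. -/
def edgesAvoiding (φ : V → Sym2 K) (U : Set K) : SimpleGraph K :=
  .fromEdgeSet {e | e ∈ Set.range φ ∧ ∀ k ∈ e, k ∉ U}

lemma mem_edgeSet_edgesAvoiding {e : Sym2 K} (he : e ∈ (edgesAvoiding φ U).edgeSet) :
    ∃ x, φ x = e ∧ ∀ k ∈ φ x, k ∉ U := by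
  obtain ⟨⟨⟨x, rfl⟩, hx⟩, -⟩ := (SimpleGraph.edgeSet_fromEdgeSet _).subset he
  exact ⟨x, rfl, hx⟩

lemma IsLineGraphRep.edgesAvoiding_adj (hR : IsLineGraphRep G φ) {a b : K} (hw : φ w = s(a, b))
    (ha : a ∉ U) (hb : b ∉ U) : (edgesAvoiding φ U).Adj a b :=
  (SimpleGraph.fromEdgeSet_adj _).2 ⟨⟨⟨w, hw⟩, by simp [ha, hb]⟩, by simpa [hw] using hR.loopless w⟩

lemma exists_mem_of_reachable {p r : K} (hp : p ∈ φ w) (hw : ∀ k ∈ φ w, k ∉ U)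
    (hr : (edgesAvoiding φ U).Reachable p r) : ∃ x, r ∈ φ x ∧ ∀ k ∈ φ x, k ∉ U := by
  obtain ⟨s⟩ := hr.symm
  cases s with
  | nil => exact ⟨w, hp, hw⟩
  | cons h _ =>
    obtain ⟨x, hx, hxU⟩ := mem_edgeSet_edgesAvoiding ((SimpleGraph.mem_edgeSet _).2 h)
    exact ⟨x, by simp [hx], hxU⟩

variable [Fintype V]

lemma IsLineGraphRep.exists_attachment (hR : IsLineGraphRep G φ) (hG : TwoConnected G)
    (hRU : ∀ k ∈ R, k ∉ U) (hclosed : ∀ x a b, φ x = s(a, b) → a ∈ R → b ∉ U → b ∈ R)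
    (hw : ∀ k ∈ φ w, k ∈ R) (huv : u ≠ v) (hu : ∃ k ∈ φ u, k ∈ U) (hv : ∃ k ∈ φ v, k ∈ U) :
    ∃ x ≠ v, ∃ r ∈ R, ∃ k ∈ U, φ x = s(r, k) := by
  have not_inside {x : V} (hx : ∃ k ∈ φ x, k ∈ U) : ¬ ∀ k ∈ φ x, k ∈ R := fun h =>
    let ⟨k, hk, hkU⟩ := hx
    hRU k (h k hk) hkU
  have hwv : w ≠ v := by rintro rfl; exact not_inside hv hw
  obtain ⟨y, hy, x, hx, hxv, hyx⟩ := exists_boundary_adj_of_twoConnected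
    (X := {x | ∀ k ∈ φ x, k ∈ R}) hG hwv hw huv (not_inside hu)
  obtain ⟨-, r, hry, k, hk⟩ := (hR.adj_iff y x).1 hyx
  refine ⟨x, hxv, r, hy r hry, k, by_contra fun hkU => hx fun j hj => ?_, hk⟩
  rw [hk, Sym2.mem_iff] at hj
  obtain rfl | rfl := hj
  exacts [hy j hry, hclosed x r j hk (hy r hry) hkU]

lemma IsLineGraphRep.exists_path_attachments (hR : IsLineGraphRep G φ) (hG : TwoConnected G)
    (huv : u ≠ v) (hu : ∃ k ∈ φ u, k ∈ U) (hv : ∃ k ∈ φ v, k ∈ U) (hw : ∀ k ∈ φ w, k ∉ U) :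
    ∃ x₁ x₂ r₁ r₂, ∃ k₁ ∈ U, ∃ k₂ ∈ U, x₁ ≠ x₂ ∧ φ x₁ = s(k₁, r₁) ∧ φ x₂ = s(r₂, k₂) ∧
      ∃ s : (edgesAvoiding φ U).Walk r₁ r₂, s.IsPath ∧
        ∀ r ∈ s.support, ∃ x, r ∈ φ x ∧ ∀ k ∈ φ x, k ∉ U := by
  obtain ⟨p, q, hpq⟩ : ∃ p q, φ w = s(p, q) := ⟨_, _, (Quot.out_eq (φ w)).symm⟩
  have exists_mem {r : K} (hr : (edgesAvoiding φ U).Reachable p r) :=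
    exists_mem_of_reachable (by simp [hpq]) hw hr
  have reach_notMem {r : K} (hr : (edgesAvoiding φ U).Reachable p r) : r ∉ U :=
    let ⟨_, hrx, hx⟩ := exists_mem hr
    hx r hrx
  have attach {u v : V} (huv : u ≠ v) (hu : ∃ k ∈ φ u, k ∈ U) (hv : ∃ k ∈ φ v, k ∈ U) :
      ∃ x ≠ v, ∃ r ∈ {r | (edgesAvoiding φ U).Reachable p r}, ∃ k ∈ U, φ x = s(r, k) := by
    refine hR.exists_attachment (w := w) hG (fun _ => reach_notMem) (fun x a b hx ha hb => ?_)
      (fun k hk => ?_) huv hu hv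
    · exact ha.trans (hR.edgesAvoiding_adj hx (reach_notMem ha) hb).reachable
    · have hq : (edgesAvoiding φ U).Reachable p q :=
        (hR.edgesAvoiding_adj hpq (hw p (by simp [hpq])) (hw q (by simp [hpq]))).reachable
      rw [hpq, Sym2.mem_iff] at hk
      obtain rfl | rfl := hk
      exacts [.rfl, hq]
  obtain ⟨x₁, hx₁v, r₁, hr₁, k₁, hk₁, hx₁⟩ := attach huv hu hv
  obtain ⟨x₂, hx₂x₁, r₂, hr₂, k₂, hk₂, hx₂⟩ := attach hx₁v.symm hv ⟨k₁, by simp [hx₁], hk₁⟩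
  classical
  obtain ⟨s, hs⟩ := (hr₁.symm.trans hr₂).exists_isPath
  exact ⟨x₁, x₂, r₁, r₂, k₁, hk₁, k₂, hk₂, hx₂x₁.symm, hx₁.trans Sym2.eq_swap, hx₂, s, hs,
    fun r hr => exists_mem (hr₁.trans ⟨s.takeUntil r hr⟩)⟩

variable [DecidableEq K] {S : Finset (Sym2 K)}

lemma IsLineGraphRep.exists_isEar (hR : IsLineGraphRep G φ) (hG : TwoConnected G) (huv : u ≠ v)
    (hu : ∃ k ∈ φ u, k ∈ U) (hv : ∃ k ∈ φ v, k ∈ U) (hw : ∀ k ∈ φ w, k ∉ U) :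
    ∃ k₁ k₂ Z P, IsEar (univ.image φ) U k₁ k₂ Z P ∧ ∃ x, (∀ k ∈ φ x, k ∉ U) ∧ ∃ k ∈ φ x, k ∈ Z := by
  obtain ⟨x₁, x₂, r₁, r₂, k₁, hk₁, k₂, hk₂, hx₁₂, hx₁, hx₂, s, hs, hsU⟩ :=
    hR.exists_path_attachments hG huv hu hv hw
  have hedge (x : V) : φ x ∈ univ.image φ := mem_image_of_mem φ (mem_univ x)
  refine ⟨k₁, k₂, _, _, IsEar.of_path s hs (fun e he => ?_) (fun k hk => ?_) (hx₁ ▸ hedge x₁)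
    (hx₂ ▸ hedge x₂) (hx₁ ▸ hx₂ ▸ hR.injective.ne hx₁₂) hk₁ hk₂, ?_⟩
  · obtain ⟨x, rfl, -⟩ := mem_edgeSet_edgesAvoiding he
    exact hedge x
  · obtain ⟨x, hkx, hx⟩ := hsU k hk
    exact hx k hkx
  · obtain ⟨x, hr₁x, hx⟩ := hsU r₁ s.start_mem_support
    exact ⟨x, hx, r₁, hr₁x, s.start_mem_support⟩

lemma IsMaximalClosedTrail.exists_dominated_pair (hmax : IsMaximalClosedTrail (univ.image φ) U S)
    (hR : IsLineGraphRep G φ) (huv : G.Adj u v) :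
    ∃ x y, x ≠ y ∧ (∃ k ∈ φ x, k ∈ U) ∧ ∃ k ∈ φ y, k ∈ U := by
  obtain ⟨hne, k, hku, hkv⟩ := (hR.adj_iff u v).1 huv
  have dominated {x : V} (hx : k ∈ φ x) : φ x ∈ dominatedEdges (univ.image φ) {k} :=
    mem_dominatedEdges.2 ⟨mem_image_of_mem φ (mem_univ x), k, hx, rfl⟩
  have hcard : 1 < #(dominatedEdges (univ.image φ) U) :=
    (one_lt_card.2 ⟨φ u, dominated hku, φ v, dominated hkv, hR.injective.ne hne⟩).trans_le
      (hmax.card_le _ _ (isClosedTrail_singleton k) (empty_subset _))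
  obtain ⟨e, he, f, hf, hef⟩ := one_lt_card.1 hcard
  simp only [mem_dominatedEdges, mem_image, mem_univ, true_and] at he hf
  obtain ⟨⟨x, rfl⟩, hx⟩ := he
  obtain ⟨⟨y, rfl⟩, hy⟩ := hf
  exact ⟨x, y, ne_of_apply_ne φ hef, hx, hy⟩

lemma IsLineGraphRep.exists_nearTrail [Finite K] (hR : IsLineGraphRep G φ) (hG : TwoConnected G)
    (huv : G.Adj u v) (hn : ¬ HasDominatingClosedTrail (univ.image φ) (univ.image φ)) :
    ∃ W H U A B, NearTrail (univ.image φ) W H U A B ∧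
      ¬ HasDominatingClosedTrail (univ.image φ) W := by
  set E := univ.image φ with hE
  have hEd : ∀ e ∈ E, ¬ e.IsDiag := by simpa [hE] using hR.loopless
  have : Nonempty K := ⟨(φ u).out.1⟩
  obtain ⟨U, S, hmax⟩ := exists_isMaximalClosedTrail E
  obtain ⟨x, y, hxy, hx, hy⟩ := hmax.exists_dominated_pair hR huv
  obtain ⟨w, hw⟩ : ∃ w, ∀ k ∈ φ w, k ∉ U := by
    by_contra! hdom
    exact hn ⟨U, S, hmax.toIsClosedTrail, hmax.subset, by simpa [hE] using hdom⟩
  obtain ⟨k₁, k₂, Z, P, hP, z, hzU, k, hkz, hkZ⟩ := hR.exists_isEar hG hxy hx hy hw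
  have hlt : #(dominatedEdges E U) < #(dominatedEdges E (U ∪ Z)) := by
    refine card_lt_card ((ssubset_iff_of_subset fun e he => ?_).2 ⟨φ z, ?_, ?_⟩)
    · obtain ⟨heE, k, hk, hkU⟩ := mem_dominatedEdges.1 he
      exact mem_dominatedEdges.2 ⟨heE, k, hk, .inl hkU⟩
    · exact mem_dominatedEdges.2 ⟨mem_image_of_mem φ (mem_univ z), k, hkz, .inr hkZ⟩
    · rintro hz
      obtain ⟨-, k, hk, hkU⟩ := mem_dominatedEdges.1 hz
      exact hzU k hk hkU
  have hk₁₂ : k₁ ≠ k₂ := fun h => hlt.not_ge <| hmax.card_le _ _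
    (hP.isClosedTrail hmax.toIsClosedTrail h) (union_subset hmax.subset hP.subset)
  refine ⟨_, _, _, _, _, hP.nearTrail hmax.toIsClosedTrail hmax.subset hEd hk₁₂, ?_⟩
  rintro ⟨U', S', hUS', hS', hdom⟩
  refine hlt.not_ge ((card_le_card fun e he => ?_).trans (hmax.card_le U' S' hUS' hS'))
  exact mem_dominatedEdges.2 ⟨(mem_dominatedEdges.1 he).1, hdom e he⟩

theorem IsLineGraphRep.exists_isMinimalNearTrail [Finite K] (hR : IsLineGraphRep G φ)
    (hG : TwoConnected G) (huv : G.Adj u v)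
    (hn : ¬ HasDominatingClosedTrail (univ.image φ) (univ.image φ)) :
    ∃ W H U A B, IsMinimalNearTrail (univ.image φ) W H U A B := by
  obtain ⟨W₀, hW₀⟩ := hR.exists_nearTrail hG huv hn
  obtain ⟨W, ⟨⟨H₀, hH₀⟩, hWmin⟩⟩ := exists_minimal_of_wellFoundedLT
    (fun W => ∃ H U A B, NearTrail (univ.image φ) W H U A B ∧
      ¬ HasDominatingClosedTrail (univ.image φ) W) ⟨W₀, hW₀⟩
  obtain ⟨H, ⟨U, A, B, hN, hW⟩, hHmin⟩ := exists_minimalFor_of_wellFoundedLT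
    (fun H => ∃ U A B, NearTrail (univ.image φ) W H U A B ∧
      ¬ HasDominatingClosedTrail (univ.image φ) W) card ⟨H₀, hH₀⟩
  refine ⟨W, H, U, A, B, hN, hW, fun a b c hab hbc hac => ?_, fun W' hW' => ?_,
    fun H' U' A' B' hN' => (le_total _ _).elim id (hHmin ⟨U', A', B', hN', hW⟩)⟩
  · simp only [mem_image, mem_univ, true_and] at hab hbc hac
    obtain ⟨⟨x, hx⟩, ⟨y, hy⟩, z, hz⟩ := hab, hbc, hac
    exact hR.triangleFree hx hy hz
  · by_contra hcl
    exact hW'.not_subset (hWmin ⟨H, U, A, B, hN.anti hW'.subset, hcl⟩ hW'.subset)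

end MinimalNearTrail

/-! ### Induced nets with prescribed endvertices -/

section InducedPath

variable {V W : Type*} {G : SimpleGraph V} {d : ℕ → V} {M k : ℕ} {x y p t : V}

/-- The vertices `d 0, …, d M` form an induced path of `G`. -/
structure IsInducedPath (G : SimpleGraph V) (d : ℕ → V) (M : ℕ) : Prop where
  ne : ∀ ⦃i j⦄, i < j → j ≤ M → d i ≠ d j
  adj_iff : ∀ ⦃i j⦄, i < j → j ≤ M → (G.Adj (d i) (d j) ↔ j = i + 1)

/-- The net with triangle `t` and pendant edges `t i`-`p i`, as an induced subgraph of `G`. -/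
structure IsNet (G : SimpleGraph V) (t p : Fin 3 → V) : Prop where
  triangle : ∀ ⦃i j⦄, i ≠ j → G.Adj (t i) (t j)
  pendant : ∀ i, G.Adj (t i) (p i)
  not_adj : ∀ ⦃i j⦄, i ≠ j → ¬ G.Adj (t i) (p j)
  independent : ∀ i j, ¬ G.Adj (p i) (p j)

lemma IsInducedPath.adj (h : IsInducedPath G d M) (hk : k + 1 ≤ M) : G.Adj (d k) (d (k + 1)) :=
  (h.adj_iff k.lt_succ_self hk).2 rfl

lemma IsInducedPath.reverse (h : IsInducedPath G d M) : IsInducedPath G (fun k => d (M - k)) M where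
  ne i j hij hj := (h.ne (by lia) (by lia)).symm
  adj_iff i j hij hj := by
    rw [SimpleGraph.adj_comm, h.adj_iff (by lia) (by lia)]
    lia

lemma IsInducedPath.map {H : SimpleGraph W} {d : ℕ → W} (h : IsInducedPath H d M) (f : H ↪g G) :
    IsInducedPath G (f ∘ d) M where
  ne _ _ hij hj := f.injective.ne (h.ne hij hj)
  adj_iff _ _ hij hj := f.map_adj_iff.trans (h.adj_iff hij hj)

lemma exists_isInducedPath (h : G.Reachable x y) :
    ∃ d M, IsInducedPath G d M ∧ d 0 = x ∧ d M = y := by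
  obtain ⟨p, hp⟩ := h.exists_walk_length_eq_dist
  have hdist (k : ℕ) (hk : k ≤ p.length) : G.dist x (p.getVert k) = k := by
    have htake := dist_le (p.take k)
    have hdrop := dist_le (p.drop k)
    have htri := (p.take k).reachable.dist_triangle_left y
    rw [Walk.take_length] at htake
    rw [Walk.drop_length] at hdrop
    lia
  refine ⟨p.getVert, p.length, ⟨fun i j hij hj he => ?_, fun i j hij hj => ⟨fun hadj => ?_, ?_⟩⟩,
    p.getVert_zero, p.getVert_length⟩
  · have := hdist i (by lia)
    rw [he, hdist j hj] at this
    lia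
  · have := hadj.diff_dist_adj (u := x)
    rw [hdist i (by lia), hdist j hj] at this
    lia
  · rintro rfl
    exact p.adj_getVert_succ hj

/-- A vertex `t` off an induced path which is adjacent to the path, but not to its ends, is
adjacent to exactly two consecutive path vertices as soon as it has a neighbour away from the path;
by claw-freeness these three vertices are the triangle of a net. -/
lemma IsInducedPath.exists_isNet (h : IsInducedPath G d M) (hc : ClawFree G)
    (ht : ∀ k ≤ M, d k ≠ t) (htd : ∃ k ≤ M, G.Adj t (d k)) (ht₀ : ¬ G.Adj t (d 0))
    (htM : ¬ G.Adj t (d M)) (htp : G.Adj t p) (hp : ∀ k ≤ M, d k ≠ p)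
    (hpd : ∀ k ≤ M, ¬ G.Adj p (d k)) :
    ∃ l, l + 3 ≤ M ∧ IsNet G ![d (l + 1), d (l + 2), t] ![d l, d (l + 3), p] := by
  classical
  rw [clawFree_iff] at hc
  obtain ⟨hkM, htk⟩ := Nat.find_spec htd
  have hmin := fun l => Nat.find_min (m := l) htd
  generalize Nat.find htd = k at hkM htk hmin
  have hk₀ : k ≠ 0 := fun e => ht₀ (e ▸ htk)
  have hkM' : k ≠ M := fun e => htM (e ▸ htk)
  obtain ⟨l, rfl⟩ := Nat.exists_eq_add_one_of_ne_zero hk₀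
  have hl : ¬ G.Adj t (d l) := fun h => hmin l l.lt_succ_self ⟨by lia, h⟩
  have hl₂ : G.Adj t (d (l + 2)) := by
    grind [h.adj_iff, hc (d (l + 1)) (d l) (d (l + 2)) t (h.adj hkM).symm (h.adj (by lia))
      htk.symm (h.ne (by lia) (by lia)) (ht _ (by lia)) (ht _ (by lia)), SimpleGraph.adj_comm]
  have hlM : l + 2 ≠ M := fun e => htM (e ▸ hl₂)
  have hl₃ : ¬ G.Adj t (d (l + 3)) := fun h₃ => by
    grind [h.adj_iff, hc t (d (l + 1)) (d (l + 3)) p htk h₃ htp (h.ne (by lia) (by lia))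
      (hp _ (by lia)) (hp _ (by lia)), SimpleGraph.adj_comm]
  have hdp {k : ℕ} (hk : k ≤ M) : ¬ G.Adj (d k) p := fun h => hpd k hk h.symm
  have hdt (k : ℕ) : G.Adj (d k) t ↔ G.Adj t (d k) := G.adj_comm _ _
  have hadj' {i j : ℕ} (hij : i < j) (hj : j ≤ M) : G.Adj (d j) (d i) ↔ j = i + 1 :=
    (G.adj_comm _ _).trans (h.adj_iff hij hj)
  have hlM₂ : l + 2 ≤ M := by lia
  have hlM₃ : l + 3 ≤ M := by lia
  refine ⟨l, hlM₃, ⟨?_, ?_, ?_, ?_⟩⟩ <;>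
    simp [Fin.forall_fin_succ, hdt, htp, hpd, hdp, h.adj_iff, hadj', hkM, hlM₂, hlM₃, hl, hl₂, hl₃,
      htk, Nat.le_of_lt hkM]

end InducedPath

section Region

variable {V : Type*} {G : SimpleGraph V} {S : Set V} {a b a' b' w x y z : V} {d : ℕ → V} {M k : ℕ}

/-- A connected set `S` of vertices such that no vertex outside `S` has two neighbours in `S`. -/
structure IsRegion (G : SimpleGraph V) (S : Set V) : Prop where
  preconnected : (G.induce S).Preconnected
  mem_of_adj_of_adj : ∀ ⦃x y w⦄, x ≠ y → x ∈ S → y ∈ S → G.Adj x w → G.Adj y w → w ∈ S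

/-- `p` is the outer end `b` of the edge `ab` leaving `S`, or its inner end `a`, or a vertex with
closed neighbourhood inside `S`. -/
def IsLegVertex (G : SimpleGraph V) (S : Set V) (a b p : V) : Prop :=
  p = b ∨ p = a ∨ p ∈ S ∧ G.neighborSet p ⊆ S

/-- An induced path `b, a, …, a', b'` whose inner vertices lie in `S`. -/
structure IsLink (G : SimpleGraph V) (S : Set V) (a b a' b' : V) (d : ℕ → V) (M : ℕ) : Prop
    extends IsInducedPath G d M where
  zero : d 0 = b
  one : d 1 = a
  pred : d (M - 1) = a'
  last : d M = b'
  two_le : 2 ≤ M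
  mem : ∀ ⦃k⦄, 0 < k → k < M → d k ∈ S

lemma IsRegion.neighborSet_subset (hS : IsRegion G S) (hc : ClawFree G) (hx : x ∈ S) (hy : y ∈ S)
    (hz : z ∈ S) (hxy : G.Adj x y) (hxz : G.Adj x z) (hyz : y ≠ z) (hnyz : ¬ G.Adj y z) :
    G.neighborSet x ⊆ S := by
  intro w hxw
  by_contra hw
  rcases clawFree_iff.1 hc x y z w hxy hxz hxw hyz (by grind) (by grind) with h | h | h
  · exact hnyz h
  · exact hw (hS.mem_of_adj_of_adj hxy.ne hx hy hxw h)
  · exact hw (hS.mem_of_adj_of_adj hxz.ne hx hz hxw h)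

lemma IsLink.symm (h : IsLink G S a b a' b' d M) :
    IsLink G S a' b' a b (fun k => d (M - k)) M where
  toIsInducedPath := h.reverse
  zero := h.last
  one := h.pred
  pred := by
    have := h.two_le
    rw [show M - (M - 1) = 1 by lia, h.one]
  last := by rw [Nat.sub_self, h.zero]
  two_le := h.two_le
  mem _ _ _ := h.mem (by lia) (by lia)

lemma IsLink.isLegVertex_of_two_le (h : IsLink G S a b a' b' d M) (hS : IsRegion G S)
    (hc : ClawFree G) (hk : 2 ≤ k) (hkM : k ≤ M) : IsLegVertex G S a' b' (d k) := by
  obtain rfl | hkM := hkM.eq_or_lt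
  · exact .inl h.last
  obtain rfl | hkM' := (Nat.le_sub_one_of_lt hkM).eq_or_lt
  · exact .inr (.inl h.pred)
  obtain ⟨l, rfl⟩ := Nat.exists_eq_add_of_le' (by lia : 1 ≤ k)
  refine .inr (.inr ⟨h.mem (by lia) hkM, hS.neighborSet_subset hc (h.mem (by lia) hkM)
    (h.mem (k := l) (by lia) (by lia)) (h.mem (k := l + 2) (by lia) (by lia)) (h.adj (by lia)).symm
    (h.adj (by lia)) (h.ne (by lia) (by lia)) fun hadj => ?_⟩)
  have := (h.adj_iff (by lia) (by lia)).1 hadj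
  lia

lemma IsLink.isLegVertex_of_add_two_le (h : IsLink G S a b a' b' d M) (hS : IsRegion G S)
    (hc : ClawFree G) (hk : k + 2 ≤ M) : IsLegVertex G S a b (d k) := by
  have := h.symm.isLegVertex_of_two_le hS hc (k := M - k) (by lia) (by lia)
  rwa [Nat.sub_sub_self (by lia)] at this

lemma exists_isLink_of_preconnected (hS : (G.induce S).Preconnected) (ha : a ∈ S) (hab : G.Adj a b)
    (hab₁ : ∀ x ∈ S, G.Adj x b → x = a) (ha' : a' ∈ S) (hab' : G.Adj a' b')
    (hab₁' : ∀ x ∈ S, G.Adj x b' → x = a') (hne : b ≠ b') (hnadj : ¬ G.Adj b b') :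
    ∃ d M, IsLink G S a b a' b' d M := by
  have hST : S ⊆ insert b (insert b' S) := fun x hx => .inr (.inr hx)
  have hreach : (G.induce (insert b (insert b' S))).Reachable ⟨b, .inl rfl⟩ ⟨b', .inr (.inl rfl)⟩ :=
    ((show (G.induce _).Adj ⟨b, .inl rfl⟩ ⟨a, hST ha⟩ from hab.symm).reachable.trans
      ((hS ⟨a, ha⟩ ⟨a', ha'⟩).map (SimpleGraph.induceHomOfLE G hST).toHom)).trans
      (show (G.induce _).Adj ⟨a', hST ha'⟩ ⟨b', .inr (.inl rfl)⟩ from hab').reachable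
  obtain ⟨d, M, hd, h₀, hM⟩ := exists_isInducedPath hreach
  have hpath := hd.map (SimpleGraph.Embedding.induce _)
  replace h₀ : (d 0 : V) = b := congrArg Subtype.val h₀
  replace hM : (d M : V) = b' := congrArg Subtype.val hM
  have hadj {k : ℕ} (hk : k + 1 ≤ M) : G.Adj (d k) (d (k + 1)) := hpath.adj hk
  have hM₀ : M ≠ 0 := by grind
  have hM₁ : M ≠ 1 := by
    rintro rfl
    exact hnadj (by simpa [h₀, hM] using hadj le_rfl)
  have hmem {k : ℕ} (hk : 0 < k) (hkM : k < M) : (d k : V) ∈ S :=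
    ((d k).2.resolve_left fun h => hpath.ne hk hkM.le (h₀.trans h.symm)).resolve_left
      fun h => hpath.ne hkM le_rfl (h.trans hM.symm)
  refine ⟨_, M, hpath, h₀, hab₁ _ (hmem one_pos (by lia)) ?_,
    hab₁' _ (hmem (by lia) (by lia)) ?_, hM, by lia, fun _ => hmem⟩
  · simpa [h₀] using (hadj (k := 0) (by lia)).symm
  · simpa [hM, Nat.sub_add_cancel (Nat.one_le_iff_ne_zero.2 hM₀)] using
      hadj (k := M - 1) (by lia)

end Region

section Tripod

variable {V : Type*} {G : SimpleGraph V} {S : Set V} {a b : Fin 3 → V} {d : ℕ → V} {i j : Fin 3}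
  {M k : ℕ}

/-- Three edges `a i`-`b i` leaving `S` at distinct vertices, each `b i` having `a i` as its only
neighbour in `S`, with pairwise nonadjacent outer ends. -/
structure IsTripod (G : SimpleGraph V) (S : Set V) (a b : Fin 3 → V) : Prop where
  injective : a.Injective
  mem : ∀ i, a i ∈ S
  notMem : ∀ i, b i ∉ S
  adj : ∀ i, G.Adj (a i) (b i)
  eq_of_adj : ∀ i, ∀ x ∈ S, G.Adj x (b i) → x = a i
  not_adj : ∀ i j, ¬ G.Adj (b i) (b j)

lemma IsTripod.injective_outer (h : IsTripod G S a b) : b.Injective := fun i j hij =>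
  h.injective (h.eq_of_adj j _ (h.mem i) (hij ▸ h.adj i))

lemma IsTripod.exists_isLink (h : IsTripod G S a b) (hS : (G.induce S).Preconnected) (hij : i ≠ j) :
    ∃ d M, IsLink G S (a i) (b i) (a j) (b j) d M :=
  exists_isLink_of_preconnected hS (h.mem i) (h.adj i) (h.eq_of_adj i) (h.mem j)
    (h.adj j) (h.eq_of_adj j) (h.injective_outer.ne hij) (h.not_adj i j)

lemma IsTripod.outer_notMem_link (h : IsTripod G S a b)
    (hd : IsLink G S (a 0) (b 0) (a 1) (b 1) d M) (hk : k ≤ M) : d k ≠ b 2 := by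
  intro he
  obtain rfl | hk₀ := k.eq_zero_or_pos
  · exact h.injective_outer.ne (by decide) (hd.zero.symm.trans he)
  obtain rfl | hkM := hk.eq_or_lt
  · exact h.injective_outer.ne (by decide) (hd.last.symm.trans he)
  · exact h.notMem 2 (he ▸ hd.mem hk₀ hkM)

lemma IsTripod.outer_not_adj_link (h : IsTripod G S a b) (hc : ClawFree G)
    (hd : IsLink G S (a 0) (b 0) (a 1) (b 1) d M) (hk : k ≤ M) : ¬ G.Adj (b 2) (d k) := by
  have eq_of_adj {k : ℕ} (hk : k ≤ M) (hadj : G.Adj (b 2) (d k)) : 0 < k ∧ k < M ∧ d k = a 2 := by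
    have hk₀ : k ≠ 0 := by
      rintro rfl
      exact h.not_adj 2 0 (hd.zero ▸ hadj)
    have hkM : k ≠ M := by
      rintro rfl
      exact h.not_adj 2 1 (hd.last ▸ hadj)
    exact ⟨by lia, by lia, h.eq_of_adj 2 _ (hd.mem (by lia) (by lia)) hadj.symm⟩
  intro hadj
  obtain ⟨hk₀, hkM, hka⟩ := eq_of_adj hk hadj
  obtain ⟨l, rfl⟩ := Nat.exists_eq_add_of_le' hk₀
  rcases clawFree_iff.1 hc (d (l + 1)) (d l) (d (l + 2)) (b 2) (hd.adj hk).symm (hd.adj hkM)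
    hadj.symm (hd.ne (by lia) hkM) (h.outer_notMem_link hd (by lia)) (h.outer_notMem_link hd hkM)
    with h' | h' | h'
  · have := (hd.adj_iff (by lia) hkM).1 h'
    lia
  · exact hd.ne l.lt_succ_self hk ((eq_of_adj (by lia) h'.symm).2.2.trans hka.symm)
  · exact hd.ne (by lia) hkM (hka.trans (eq_of_adj hkM h'.symm).2.2.symm)

/-- The third leg: follow a link from `b 0` to `b 2` until it leaves the closed neighbourhood of the
link `d` from `b 0` to `b 1`. -/
lemma IsTripod.exists_branch (h : IsTripod G S a b) (hS : IsRegion G S) (hc : ClawFree G)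
    (hd : IsLink G S (a 0) (b 0) (a 1) (b 1) d M) :
    ∃ t ∈ S, ∃ p, IsLegVertex G S (a 2) (b 2) p ∧ G.Adj t p ∧ (∃ k ≤ M, G.Adj t (d k)) ∧
      (∀ k ≤ M, d k ≠ t) ∧ (∀ k ≤ M, d k ≠ p) ∧ ∀ k ≤ M, ¬ G.Adj p (d k) := by
  classical
  obtain ⟨e, N, he⟩ := h.exists_isLink hS.preconnected (show (0 : Fin 3) ≠ 2 by decide)
  have hfar : ∃ j ≤ N, ∀ k ≤ M, d k ≠ e j ∧ ¬ G.Adj (e j) (d k) := ⟨N, le_rfl, fun k hk =>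
    he.last ▸ ⟨h.outer_notMem_link hd hk, h.outer_not_adj_link hc hd hk⟩⟩
  obtain ⟨hjN, hj⟩ := Nat.find_spec hfar
  have hmin := fun i => Nat.find_min (m := i) hfar
  generalize Nat.find hfar = j at hjN hj hmin
  have hM := hd.two_le
  have hj₀ : j ≠ 0 := by
    rintro rfl
    exact (hj 0 (by lia)).1 (hd.zero.trans he.zero.symm)
  have hj₁ : j ≠ 1 := by
    rintro rfl
    exact (hj 1 (by lia)).1 (hd.one.trans he.one.symm)
  obtain ⟨i, rfl⟩ := Nat.exists_eq_add_one_of_ne_zero hj₀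
  have hnear := hmin i i.lt_succ_self
  push Not at hnear
  have hadj := he.adj hjN
  have hoff : ∀ k ≤ M, d k ≠ e i := fun k hk hki => (hj k hk).2 (hki ▸ hadj.symm)
  obtain ⟨k, hk, hik⟩ := hnear (by lia)
  exact ⟨e i, he.mem (by lia) (by lia), e (i + 1), he.isLegVertex_of_two_le hS hc (by lia) hjN,
    hadj, ⟨k, hk, hik (hoff k hk)⟩, hoff, fun k hk => (hj k hk).1, fun k hk => (hj k hk).2⟩

lemma IsTripod.exists_isNet (h : IsTripod G S a b) (hS : IsRegion G S) (hc : ClawFree G) :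
    ∃ t p, IsNet G t p ∧ (∀ i, t i ∈ S) ∧ ∀ i, IsLegVertex G S (a i) (b i) (p i) := by
  obtain ⟨d, M, hd⟩ := h.exists_isLink hS.preconnected (show (0 : Fin 3) ≠ 1 by decide)
  obtain ⟨t, htS, p, hpleg, htp, htd, ht, hp, hpd⟩ := h.exists_branch hS hc hd
  have ht₀ : ¬ G.Adj t (d 0) := fun hadj =>
    ht 1 (by grind [hd.two_le]) (hd.one.trans (h.eq_of_adj 0 t htS (hd.zero ▸ hadj)).symm)
  have htM : ¬ G.Adj t (d M) := fun hadj =>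
    ht (M - 1) (by lia) (hd.pred.trans (h.eq_of_adj 1 t htS (hd.last ▸ hadj)).symm)
  obtain ⟨l, hl, hnet⟩ := hd.exists_isNet hc ht htd ht₀ htM htp hp hpd
  refine ⟨_, _, hnet, ?_, ?_⟩ <;> simp only [Fin.forall_fin_succ, IsEmpty.forall_iff, and_true]
  · exact ⟨hd.mem (by lia) (by lia), hd.mem (by lia) (by lia), htS⟩
  · exact ⟨hd.isLegVertex_of_add_two_le hS hc (by lia), hd.isLegVertex_of_two_le hS hc (by lia) hl,
      hpleg⟩

end Tripod

/-! ### The degree sum of a spider -/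

section Counting

variable {V : Type*} {G : SimpleGraph V} {S : Set V} {t p : Fin 3 → V} {i j : Fin 3} {x : V}

/-- The closed neighbourhood of `x`. -/
def closedNbhd (G : SimpleGraph V) (x : V) : Set V := insert x (G.neighborSet x)

lemma ncard_closedNbhd [Finite V] (G : SimpleGraph V) (x : V) :
    (closedNbhd G x).ncard = (G.neighborSet x).ncard + 1 :=
  Set.ncard_insert_of_notMem (by simp)

lemma sum_ncard_inter [Fintype V] {ι : Type*} [Fintype ι] (f : ι → Set V) (S : Set V)
    [DecidablePred (· ∈ S)] [∀ x, DecidablePred (x ∈ f ·)] :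
    ∑ i, (f i ∩ S).ncard = ∑ x with x ∈ S, #{i | x ∈ f i} := by
  simp only [card_filter]
  rw [sum_comm]
  refine sum_congr rfl fun i _ => ?_
  rw [← card_filter, filter_filter, ← Set.ncard_coe_finset]
  congr 1
  ext x
  simp [and_comm]

lemma IsNet.injective_triangle (h : IsNet G t p) : t.Injective := fun i j hij => by
  by_contra hne
  exact (h.triangle hne).ne hij

lemma IsNet.injective_pendant (h : IsNet G t p) : p.Injective := fun i j hij => by
  by_contra hne
  exact h.not_adj hne (hij ▸ h.pendant i)

lemma IsNet.triangle_ne_pendant (h : IsNet G t p) (i j : Fin 3) : t i ≠ p j := fun hij =>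
  h.independent j i (hij ▸ h.pendant i)

lemma IsNet.eq_of_triangle_mem (h : IsNet G t p) (hi : t i ∈ closedNbhd G (p j)) : j = i := by
  by_contra hne
  rcases hi with hi | hi
  · exact h.triangle_ne_pendant i j hi
  · exact h.not_adj (Ne.symm hne) hi.symm

lemma IsNet.exists_notMem_closedNbhd (h : IsNet G t p) (hc : ClawFree G) (x : V) :
    ∃ i, x ∉ closedNbhd G (p i) := by
  by_contra! hx
  have hadj (i : Fin 3) : G.Adj x (p i) := by
    refine ((hx i).resolve_left ?_).symm
    rintro rfl
    obtain ⟨j, hj⟩ := exists_ne i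
    exact (hx j).elim (fun e => hj (h.injective_pendant e).symm) (h.independent _ _)
  have hne {i j : Fin 3} (hij : i ≠ j) := h.injective_pendant.ne hij
  rcases clawFree_iff.1 hc x _ _ _ (hadj 0) (hadj 1) (hadj 2) (hne (by decide)) (hne (by decide))
    (hne (by decide)) with h' | h' | h'
  all_goals exact h.independent _ _ h'

/-- Each vertex is in at most two of the closed neighbourhoods, a triangle vertex only in one. -/
lemma IsNet.sum_ncard_closedNbhd_inter [Finite V] (h : IsNet G t p) (hc : ClawFree G)
    (ht : ∀ i, t i ∈ S) : ∑ i, (closedNbhd G (p i) ∩ S).ncard + 3 ≤ 2 * S.ncard := by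
  classical
  have := Fintype.ofFinite V
  have hpoint (x : V) : #{i | x ∈ closedNbhd G (p i)} + #{i | x ∈ ({t i} : Set V)} ≤ 2 := by
    by_cases hx : ∃ i, t i = x
    · obtain ⟨i, rfl⟩ := hx
      refine add_le_add (b := 1) (d := 1) (card_le_one.2 ?_) (card_le_one.2 ?_)
      · simp only [mem_filter_univ]
        exact fun j hj k hk => (h.eq_of_triangle_mem hj).trans (h.eq_of_triangle_mem hk).symm
      · simp only [mem_filter_univ, Set.mem_singleton_iff]
        exact fun j hj k hk => h.injective_triangle (hj.symm.trans hk)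
    · obtain ⟨i, hi⟩ := h.exists_notMem_closedNbhd hc x
      have hempty : #{i | x ∈ ({t i} : Set V)} = 0 := by
        rw [card_eq_zero, filter_eq_empty_iff]
        exact fun j _ hj => hx ⟨j, hj.symm⟩
      have hlt : #{i | x ∈ closedNbhd G (p i)} < 3 :=
        card_lt_univ_of_notMem (x := i) (by simpa using hi)
      lia
  calc ∑ i, (closedNbhd G (p i) ∩ S).ncard + 3
      = ∑ i, (closedNbhd G (p i) ∩ S).ncard + ∑ i, ({t i} ∩ S).ncard := by
        simp [Set.inter_eq_left.2 (Set.singleton_subset_iff.2 (ht _))]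
    _ = ∑ x with x ∈ S, (#{i | x ∈ closedNbhd G (p i)} + #{i | x ∈ ({t i} : Set V)}) := by
        rw [sum_ncard_inter, sum_ncard_inter, sum_add_distrib]
    _ ≤ ∑ x with x ∈ S, 2 := sum_le_sum fun x _ => hpoint x
    _ = 2 * S.ncard := by
        rw [sum_const, smul_eq_mul, mul_comm, ← Set.ncard_coe_finset]
        congr 2
        ext
        simp

end Counting

section RegionRep

variable {V K : Type*} {G G' : SimpleGraph V} {φ : V → Sym2 K} {A k l m : K} {x y : V}

/-- The vertices represented by the edges at `k`. -/
def star (φ : V → Sym2 K) (k : K) : Set V := {x | k ∈ φ x}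

/-- A representation of `G` inside the line graph of a triangle-free graph, such that the edges at
each vertex form a region of `G`. -/
structure IsRegionRep (G : SimpleGraph V) (φ : V → Sym2 K) : Prop where
  injective : φ.Injective
  exists_mem : ∀ ⦃x y⦄, G.Adj x y → ∃ k ∈ φ x, k ∈ φ y
  isRegion : ∀ k, IsRegion G (star φ k)
  triangleFree : ∀ ⦃x y z k l m⦄, φ x = s(k, l) → φ y = s(l, m) → φ z ≠ s(k, m)

lemma IsLineGraphRep.isRegionRep (hR : IsLineGraphRep G' φ) (hG : G ≤ G')
    (hcut : CutByCommonEdge G G') : IsRegionRep G φ where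
  injective := hR.injective
  exists_mem x y hxy := ((hR.adj_iff x y).1 (hG hxy)).2
  isRegion k :=
    { preconnected := fun ⟨x, hx⟩ ⟨y, hy⟩ => by
        by_contra hxy
        have hne : x ≠ y := by
          rintro rfl
          exact hxy .rfl
        obtain ⟨c, ⟨hck, hc⟩, d, hd, hcd, -, hd'⟩ := hcut x y ((hR.adj_iff x y).2 ⟨hne, k, hx, hy⟩)
          {z | ∃ hz : z ∈ star φ k, (G.induce (star φ k)).Reachable ⟨x, hx⟩ ⟨z, hz⟩}
          ⟨hx, .rfl⟩ fun ⟨_, h⟩ => hxy h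
        have hdk : d ∈ star φ k := hR.mem_of_mem_commonNbhd x y d k hne hx hy hd'
        have hadj : (G.induce (star φ k)).Adj ⟨c, hck⟩ ⟨d, hdk⟩ := hcd
        exact hd ⟨hdk, hc.trans hadj.reachable⟩
      mem_of_adj_of_adj := fun x y w hne hx hy hxw hyw =>
        hR.mem_of_mem_commonNbhd x y w k hne hx hy ⟨.inr (hG hxw), .inr (hG hyw)⟩ }
  triangleFree _ _ _ _ _ _ := hR.triangleFree

lemma eq_mk_of_mem (hkl : k ≠ l) (hk : x ∈ star φ k) (hl : x ∈ star φ l) : φ x = s(k, l) :=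
  (Sym2.mem_and_mem_iff hkl).1 ⟨hk, hl⟩

lemma IsRegionRep.eq_of_mem_star (hR : IsRegionRep G φ) (hx : φ x = s(k, l)) (hkl : k ≠ l)
    (hk : y ∈ star φ k) (hl : y ∈ star φ l) : y = x :=
  hR.injective ((eq_mk_of_mem hkl hk hl).trans hx.symm)

lemma IsRegionRep.neighborSet_subset (hR : IsRegionRep G φ) (hx : φ x = s(k, l)) :
    G.neighborSet x ⊆ star φ k ∪ star φ l := by
  intro y hy
  obtain ⟨m, hm, hm'⟩ := hR.exists_mem hy
  rw [hx, Sym2.mem_iff] at hm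
  rcases hm with rfl | rfl
  exacts [.inl hm', .inr hm']

lemma edgeDegree_image [Fintype V] [DecidableEq K] (hφ : φ.Injective) (k : K) :
    edgeDegree (univ.image φ) k = (star φ k).ncard := by
  rw [edgeDegree, filter_image, card_image_of_injective _ hφ, ← Set.ncard_coe_finset]
  congr 1
  ext
  simp [star]

lemma IsRegion.exists_adj {S X : Set V} (hS : IsRegion G S) (hx : x ∈ S) (hxX : x ∈ X)
    (hy : y ∈ S) (hyX : y ∉ X) : ∃ c ∈ S, c ∈ X ∧ ∃ d ∈ S, d ∉ X ∧ G.Adj c d := by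
  obtain ⟨p⟩ := hS.preconnected ⟨x, hx⟩ ⟨y, hy⟩
  obtain ⟨d, -, hd, hd'⟩ := p.exists_boundary_dart (Subtype.val ⁻¹' X) hxX hyX
  exact ⟨d.fst, d.fst.2, hd, d.snd, d.snd.2, hd', d.adj⟩

end RegionRep

section Spider

variable {V K : Type*} {G : SimpleGraph V} {φ : V → Sym2 K} {A k l : K} {x y z : V}
  {u v : Fin 3 → K} {a b c : Fin 3 → V} {i j : Fin 3}

/-- A neighbour `z` of `x = Ak` in the star of `k`, other than through `A`, which is the edge
`y = kl` itself or has no neighbour outside the star. -/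
structure IsFoot (G : SimpleGraph V) (φ : V → Sym2 K) (A k : K) (x y z : V) : Prop where
  adj : G.Adj x z
  mem : z ∈ star φ k
  notMem : z ∉ star φ A
  eq_or_subset : z = y ∨ G.neighborSet z ⊆ star φ k

lemma IsRegionRep.exists_isFoot (hR : IsRegionRep G φ) (hc : ClawFree G) (hx : φ x = s(A, k))
    (hy : φ y = s(k, l)) (hk : k ≠ A) (hl : l ≠ A) : ∃ z, IsFoot G φ A k x y z := by
  have hyA : y ∉ star φ A := by simp [star, hy, hk.symm, hl.symm]
  have hxA : x ∈ star φ A := by simp [star, hx]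
  have hxk : x ∈ star φ k := by simp [star, hx]
  have hyk : y ∈ star φ k := by simp [star, hy]
  by_cases hxy : G.Adj x y
  · exact ⟨y, hxy, hyk, hyA, .inl rfl⟩
  obtain ⟨z, hzk, hzx, w, hwk, hwx, hzw⟩ := (hR.isRegion k).exists_adj (X := closedNbhd G x) hxk
    (.inl rfl) hyk (by rintro (rfl | h); exacts [hyA hxA, hxy h])
  obtain rfl | hzx := hzx
  · exact absurd (.inr hzw) hwx
  · exact ⟨z, hzx, hzk, fun hzA => hzx.ne' (hR.eq_of_mem_star hx hk.symm hzA hzk),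
      .inr ((hR.isRegion k).neighborSet_subset hc hzk hxk hwk hzx.symm hzw
        (fun h => hwx (.inl h.symm)) fun h => hwx (.inr h))⟩

/-- Three disjoint legs `A`, `u i`, `v i` at `A`; the two edges of a leg are represented by `a i`
and `b i`. -/
structure IsSpider (φ : V → Sym2 K) (A : K) (u v : Fin 3 → K) (a b : Fin 3 → V) : Prop where
  inner_injective : u.Injective
  outer_injective : v.Injective
  inner_ne : ∀ i, u i ≠ A
  outer_ne : ∀ i, v i ≠ A
  inner_ne_outer : ∀ i j, u i ≠ v j
  inner_eq : ∀ i, φ (a i) = s(A, u i)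
  outer_eq : ∀ i, φ (b i) = s(u i, v i)

lemma IsSpider.disjoint_inner (h : IsSpider φ A u v a b) (hR : IsRegionRep G φ) (hij : i ≠ j)
    (hi : x ∈ star φ (u i)) (hj : x ∈ star φ (u j)) : False :=
  hR.triangleFree (h.inner_eq i) (eq_mk_of_mem (h.inner_injective.ne hij) hi hj) (h.inner_eq j)

lemma IsSpider.outer_not_adj (h : IsSpider φ A u v a b) (hR : IsRegionRep G φ) (hij : i ≠ j) :
    ¬ G.Adj (b i) (b j) := by
  intro hadj
  obtain ⟨k, hi, hj⟩ := hR.exists_mem hadj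
  rw [h.outer_eq, Sym2.mem_iff] at hi hj
  rcases hi with rfl | rfl <;> rcases hj with hj | hj
  · exact hij (h.inner_injective hj)
  · exact h.inner_ne_outer _ _ hj
  · exact h.inner_ne_outer _ _ hj.symm
  · exact hij (h.outer_injective hj)

lemma IsSpider.foot_not_adj (h : IsSpider φ A u v a b) (hR : IsRegionRep G φ)
    (hf : ∀ i, IsFoot G φ A (u i) (a i) (b i) (c i)) (i j : Fin 3) : ¬ G.Adj (c i) (c j) := by
  intro hadj
  have hij : i ≠ j := by
    rintro rfl
    exact hadj.ne rfl
  rcases (hf i).eq_or_subset with hi | hi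
  · rcases (hf j).eq_or_subset with hj | hj
    · exact h.outer_not_adj hR hij (hi ▸ hj ▸ hadj)
    · exact h.disjoint_inner hR hij (hf i).mem (hj hadj.symm)
  · exact h.disjoint_inner hR hij (hi hadj) (hf j).mem

lemma IsSpider.isTripod (h : IsSpider φ A u v a b) (hR : IsRegionRep G φ)
    (hf : ∀ i, IsFoot G φ A (u i) (a i) (b i) (c i)) : IsTripod G (star φ A) a c where
  injective i j hij := h.inner_injective <| by
    simpa [h.inner_eq, h.inner_ne] using congrArg φ hij
  mem i := by simp [star, h.inner_eq]
  notMem i := (hf i).notMem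
  adj i := (hf i).adj
  eq_of_adj i x hx hadj := by
    obtain ⟨k, hk, hk'⟩ := hR.exists_mem hadj
    have hkA : A ≠ k := by
      rintro rfl
      exact (hf i).notMem hk'
    have hku : u i = k := by
      by_contra hne
      exact hR.triangleFree (h.inner_eq i) (eq_mk_of_mem hne (hf i).mem hk')
        (eq_mk_of_mem hkA hx hk)
    exact hR.eq_of_mem_star (h.inner_eq i) (h.inner_ne i).symm hx (hku ▸ hk)
  not_adj := h.foot_not_adj hR hf

variable [Finite V]

lemma IsFoot.ncard_closedNbhd_add_two_le (hf : IsFoot G φ A k x y z) (hR : IsRegionRep G φ)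
    (hx : φ x = s(A, k)) (hy : φ y = s(k, l)) :
    (closedNbhd G z).ncard + 2 ≤
      (closedNbhd G z ∩ star φ A).ncard + ((star φ k).ncard + (star φ l).ncard) := by
  have hsub : closedNbhd G z ⊆ star φ k ∪ star φ l := by
    refine Set.insert_subset (.inl hf.mem) ?_
    rcases hf.eq_or_subset with rfl | h
    · exact hR.neighborSet_subset hy
    · exact h.trans Set.subset_union_left
  have hx_mem : 0 < (closedNbhd G z ∩ star φ A).ncard :=
    (Set.ncard_pos (Set.toFinite _)).2 ⟨x, .inr hf.adj.symm, by simp [star, hx]⟩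
  have hy_mem : 0 < (star φ k ∩ star φ l).ncard :=
    (Set.ncard_pos (Set.toFinite _)).2 ⟨y, by simp [star, hy]⟩
  have hunion := Set.ncard_union_add_ncard_inter (star φ k) (star φ l)
  have hle := Set.ncard_le_ncard hsub
  lia

lemma IsRegionRep.ncard_closedNbhd_add_two_le (hR : IsRegionRep G φ) (hx : φ x = s(A, k))
    (hl : (star φ l).Nonempty) :
    (closedNbhd G x).ncard + 2 ≤
      (closedNbhd G x ∩ star φ A).ncard + ((star φ k).ncard + (star φ l).ncard) := by
  have hxk : x ∈ star φ k := by simp [star, hx]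
  have hsub : closedNbhd G x \ star φ A ⊆ star φ k \ {x} := by
    rintro y ⟨rfl | hy, hyA⟩
    · exact absurd (by simp [star, hx]) hyA
    · exact ⟨(hR.neighborSet_subset hx hy).resolve_left hyA, hy.ne'⟩
  have hle := Set.ncard_le_ncard hsub
  have hsplit := Set.ncard_inter_add_ncard_sdiff_eq_ncard (closedNbhd G x) (star φ A)
  have hk := Set.ncard_sdiff_singleton_add_one hxk
  have hl_pos := (Set.ncard_pos (Set.toFinite _)).2 hl
  lia

lemma IsSpider.ncard_closedNbhd_add_two_le (h : IsSpider φ A u v a b) (hR : IsRegionRep G φ)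
    (hf : IsFoot G φ A (u i) (a i) (b i) (c i)) (hx : IsLegVertex G (star φ A) (a i) (c i) x) :
    (closedNbhd G x).ncard + 2 ≤
      (closedNbhd G x ∩ star φ A).ncard + ((star φ (u i)).ncard + (star φ (v i)).ncard) := by
  have hu : (star φ (u i)).Nonempty := ⟨b i, by simp [star, h.outer_eq]⟩
  have hv : (star φ (v i)).Nonempty := ⟨b i, by simp [star, h.outer_eq]⟩
  rcases hx with rfl | rfl | ⟨hxA, hxS⟩
  · exact hf.ncard_closedNbhd_add_two_le hR (h.inner_eq i) (h.outer_eq i)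
  · exact hR.ncard_closedNbhd_add_two_le (h.inner_eq i) hv
  · have hinter : closedNbhd G x ∩ star φ A = closedNbhd G x :=
      Set.inter_eq_left.2 (Set.insert_subset hxA hxS)
    rw [hinter]
    have hu_pos := (Set.ncard_pos (Set.toFinite _)).2 hu
    have hv_pos := (Set.ncard_pos (Set.toFinite _)).2 hv
    lia

end Spider

section SpiderInequality

variable {V K : Type*} [Fintype V] [DecidableEq K] {G : SimpleGraph V} {φ : V → Sym2 K}

lemma IsRegionRep.spiderInequality (hR : IsRegionRep G φ) (hc : ClawFree G)
    (hdeg : ∀ t p, IsNet G t p → ∀ i, Fintype.card V ≤ 3 * (G.neighborSet (p i)).ncard + 2) :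
    SpiderInequality (univ.image φ) := by
  intro A u v hu hv huA hvA huv hAu huv'
  simp only [mem_image, mem_univ, true_and] at hAu huv'
  choose a ha using hAu
  choose b hb using huv'
  have hspider : IsSpider φ A u v a b := ⟨hu, hv, huA, hvA, huv, ha, hb⟩
  choose c hf using fun i => hR.exists_isFoot hc (ha i) (hb i) (huA i) (hvA i)
  obtain ⟨t, p, hnet, ht, hp⟩ := (hspider.isTripod hR hf).exists_isNet (hR.isRegion A) hc
  have hsum := hnet.sum_ncard_closedNbhd_inter hc ht
  have hleg := fun i => hspider.ncard_closedNbhd_add_two_le hR (hf i) (hp i)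
  simp only [ncard_closedNbhd] at hleg
  have hdeg := hdeg t p hnet
  simp only [edgeDegree_image hR.injective, card_image_of_injective _ hR.injective, card_univ,
    Fin.sum_univ_three] at hsum ⊢
  grind

end SpiderInequality

section Main

variable {V : Type*} {G : SimpleGraph V}

lemma IsListWalk.exists_walk {l : List V} {a b : V} (h : IsListWalk G l a b) :
    ∃ p : G.Walk a b, p.support = l := by
  have ha : l.head h.ne_nil = a := List.head_of_head?_eq_some h.head
  have hb : l.getLast h.ne_nil = b := List.getLast_of_getLast?_eq_some h.last
  exact ⟨(Walk.ofSupport l h.ne_nil h.chain).copy ha hb, by simp⟩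

lemma HasHamiltonianList.isHamiltonian [Fintype V] [DecidableEq V] (hV : 3 ≤ Fintype.card V)
    (h : HasHamiltonianList G) : G.IsHamiltonian := by
  intro _
  obtain ⟨l, a, b, hl, hba⟩ := h
  obtain ⟨p, rfl⟩ := hl.exists_walk
  have hp : p.IsPath := .mk' hl.nodup
  have hham : p.IsHamiltonian := hp.isHamiltonian_of_mem hl.mem
  have hlength := hham.length_eq
  refine ⟨b, .cons hba p, ?_, fun v => by simpa using hham v⟩
  exact Walk.isCycle_iff_isPath_tail_and_le_length.2 ⟨by simpa using hp, by simp; omega⟩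

lemma IsNet.isInducedCopy {t p : Fin 3 → V} (h : IsNet G t p) :
    IsInducedCopy netGraph G (Fin.append t p) := by
  refine ⟨Fin.append_injective_iff.2
    ⟨h.injective_triangle, h.injective_pendant, h.triangle_ne_pendant⟩, fun x y => ?_⟩
  have htt (i j) : G.Adj (t i) (t j) ↔ i ≠ j := ⟨fun e hij => e.ne (congrArg t hij), (h.triangle ·)⟩
  have htp (i j) : G.Adj (t i) (p j) ↔ i = j :=
    ⟨fun e => by_contra fun hij => h.not_adj hij e, fun hij => hij ▸ h.pendant i⟩
  have hpt (i j) : G.Adj (p i) (t j) ↔ j = i := by rw [G.adj_comm, htp]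
  refine Fin.addCases (m := 3) (n := 3) (fun i => ?_) (fun i => ?_) x <;>
    refine Fin.addCases (m := 3) (n := 3) (fun j => ?_) (fun j => ?_) y <;>
    simp only [Fin.append_left, Fin.append_right, htt, htp, hpt, h.independent] <;>
    clear * - <;> revert i j <;> simp only [netGraph, fromEdgeSet_adj] <;> decide

theorem hasHamiltonianList_of_degree_le [Fintype V] (hG : TwoConnected G) (hc : ClawFree G)
    (hdeg : ∀ t p, IsNet G t p → ∀ i, Fintype.card V ≤ 3 * (G.neighborSet (p i)).ncard + 2) :
    HasHamiltonianList G := by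
  classical
  by_contra hn
  obtain ⟨G', hle, hc', hn', hcut, hclosed⟩ := exists_locallyClosed hG.1 hc hn
  have hG' : TwoConnected G' := twoConnected_mono hle hG
  have hadj := exists_adj_of_twoConnected hG'
  obtain ⟨φ, hφ⟩ := hclosed.exists_isLineGraphRep hc' hadj
  have htrail : ¬ HasDominatingClosedTrail (univ.image φ) (univ.image φ) :=
    fun h => hn' (h.hasHamiltonianList hφ hG.1)
  obtain ⟨v⟩ : Nonempty V := Fintype.card_pos_iff.1 (by grind [hG.1])
  obtain ⟨w, hvw⟩ := hadj v
  obtain ⟨W, H, U, A, B, hM⟩ := hφ.exists_isMinimalNearTrail hG' hvw htrail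
  exact hM.not_spiderInequality ((hφ.isRegionRep hle hcut).spiderInequality hc hdeg)

end Main

end Broersma

open Broersma in
theorem broersma_conjecture_large_general {V : Type*} [Fintype V] [DecidableEq V]
    (G : SimpleGraph V) (h2conn : TwoConnected G) (hclaw : ClawFree G)
    (hnet : ∀ f : Fin 6 → V, IsInducedCopy netGraph G f →
      ∀ i : Fin 6, 3 ≤ (i : ℕ) →
        ((Fintype.card V : ℝ) - 2) / 3 ≤ (G.neighborSet (f i)).ncard) :
    G.IsHamiltonian := by
  refine (hasHamiltonianList_of_degree_le h2conn hclaw fun t p h i => ?_).isHamiltonian h2conn.1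
  have hdeg := hnet _ h.isInducedCopy (Fin.natAdd 3 i) (by simp)
  rw [Fin.append_right] at hdeg
  rify
  linarith

/-- Broersma's conjecture: a 2-connected claw-free graph in which every endvertex of
each induced net has degree at least `(n-2)/3` is hamiltonian. -/
theorem broersma_conjecture_large {V : Type*} [Fintype V] [DecidableEq V] (G : SimpleGraph V)
    (hn : 33 ≤ Fintype.card V)
    (h2conn : TwoConnected G) (hclaw : ClawFree G)
    (hnet : ∀ f : Fin 6 → V, IsInducedCopy netGraph G f →
      ∀ i : Fin 6, 3 ≤ (i : ℕ) →
        ((Fintype.card V : ℝ) - 2) / 3 ≤ (G.neighborSet (f i)).ncard) :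
    G.IsHamiltonian :=
  broersma_conjecture_large_general G h2conn hclaw hnet
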